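/- Assume hypothesis (H) and that min_{x ∈ ∂𝔻} h(x) > max_{x ∈ ∂𝔻} √(−K(x)). Let X denote the set C¹(closed 𝔻) endowed with the H¹(𝔻) norm, and let M = { u ∈ X : ∫_{∂𝔻} e^{u/2} = 1 and ∫_{∂𝔻} x₁ e^{u/2} = ∫_{∂𝔻} x₂ e^{u/2} = 0 }. Then there exists δ₀ > 0 such that for every δ ∈ (0,δ₀) there exist a constant C̄ ∈ ℝ and a continuous map Λ : 𝕊² → X (𝕊² the unit sphere of ℝ³) such that, for every ε ∈ (−δ, −δ/2): (i) I_ε(u) ≥ C̄ for all u ∈ M; (ii) sup_{y ∈ 𝕊²} I_ε(Λ(y)) < inf_{u ∈ M} I_ε(u); (iii) every continuous map η from the closed unit ball B of ℝ³ into X with η restricted to 𝕊² equal to Λ satisfies η(B) ∩ M ≠ ∅ (three-dimensional linking geometry). -/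

import Mathlib

open MeasureTheory Real Filter

noncomputable section

/-- The open unit disk in ℝ² ≅ ℂ. -/
def unitDisk : Set ℂ := Metric.ball 0 1

/-- The unit circle ∂𝔻. -/
def unitCircle : Set ℂ := Metric.sphere 0 1

/-- The closed unit disk. -/
def closedUnitDisk : Set ℂ := Metric.closedBall 0 1

/-- Directional derivative of `u` at `x` in direction `v`. -/
def pd (u : ℂ → ℝ) (v x : ℂ) : ℝ := fderiv ℝ u x v

/-- Laplacian of `u` at `x`. -/
def lap (u : ℂ → ℝ) (x : ℂ) : ℝ :=
  fderiv ℝ (fun y => pd u 1 y) x 1 + fderiv ℝ (fun y => pd u Complex.I y) x Complex.I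

/-- Squared norm of the gradient, |∇u|². -/
def gradSq (u : ℂ → ℝ) (x : ℂ) : ℝ := pd u 1 x ^ 2 + pd u Complex.I x ^ 2

/-- Outward normal derivative ∂_ν u(x) = ∇u(x)·x at a boundary point. -/
def nderiv (u : ℂ → ℝ) (x : ℂ) : ℝ := x.re * pd u 1 x + x.im * pd u Complex.I x

/-- Tangential derivative ∂_τ u(x) = ∇u(x)·(−x₂,x₁) at a boundary point. -/
def tderiv (u : ℂ → ℝ) (x : ℂ) : ℝ := -x.im * pd u 1 x + x.re * pd u Complex.I x

/-- Unit-speed parametrization of the unit circle. -/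
def bpt (θ : ℝ) : ℂ := Complex.exp ((θ : ℂ) * Complex.I)

/-- Integral over ∂𝔻 with respect to arclength. -/
def bint (f : ℂ → ℝ) : ℝ := ∫ θ in (0:ℝ)..(2 * π), f (bpt θ)

/-- A solution of the prescribed curvature problem for `(K, h)`. -/
def IsSolution (K h u : ℂ → ℝ) : Prop :=
  ContDiff ℝ 2 u ∧
  (∀ x ∈ unitDisk, -lap u x = 2 * K x * Real.exp (u x)) ∧
  (∀ x ∈ unitCircle, nderiv u x + 2 = 2 * h x * Real.exp (u x / 2))

/-- The auxiliary function Φ = H + √(H² + K). -/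
def Phi (K H : ℂ → ℝ) (x : ℂ) : ℝ := H x + Real.sqrt (H x ^ 2 + K x)

/-- `H` is the harmonic extension of `h`, C¹ up to the boundary. -/
def IsHarmExt (h H : ℂ → ℝ) : Prop :=
  ContDiff ℝ 1 H ∧ ContDiffOn ℝ 2 H unitDisk ∧
  (∀ x ∈ unitDisk, lap H x = 0) ∧ ∀ x ∈ unitCircle, H x = h x

/-- K_ε. -/
def Keps (K : ℂ → ℝ) (ε : ℝ) (x : ℂ) : ℝ := (K x - ε / 2) / (1 + ε)

/-- h_ε. -/
def heps (h : ℂ → ℝ) (ε : ℝ) (x : ℂ) : ℝ := h x / (1 + ε)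

/-- K̃_ε. -/
def Ktil (ε : ℝ) : ℝ := -ε / (2 * (1 + ε))

/-- h̃_ε. -/
def htil (ε : ℝ) : ℝ := 1 / (1 + ε)

/-- A solution of the perturbed problem (P_ε). -/
def IsPerturbedSolution (K h : ℂ → ℝ) (ε : ℝ) (u : ℂ → ℝ) : Prop :=
  ContDiff ℝ 2 u ∧
  (∀ x ∈ unitDisk, -lap u x + 2 * Ktil ε = 2 * Keps K ε x * Real.exp (u x)) ∧
  (∀ x ∈ unitCircle, nderiv u x + 2 * htil ε = 2 * heps h ε x * Real.exp (u x / 2))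

/-- The energy functional I. -/
def Ifun (K h u : ℂ → ℝ) : ℝ :=
  (∫ x in unitDisk, ((1/2) * gradSq u x - 2 * K x * Real.exp (u x))) +
  bint (fun x => 2 * u x - 4 * h x * Real.exp (u x / 2))

/-- The perturbation term T. -/
def Tfun (u : ℂ → ℝ) : ℝ :=
  ∫ x in unitDisk, ((1/2) * gradSq u x + Real.exp (u x) - u x)

/-- The perturbed functional I_ε. -/
def Ieps (K h : ℂ → ℝ) (ε : ℝ) (u : ℂ → ℝ) : ℝ := (Ifun K h u + ε * Tfun u) / (1 + ε)

/-- The squared H¹(𝔻) norm of `u`. -/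
def H1normSq (u : ℂ → ℝ) : ℝ :=
  (∫ x in unitDisk, gradSq u x) + ∫ x in unitDisk, (u x) ^ 2

/-- Continuity of a family of functions on a set, with respect to the H¹(𝔻) norm
on the target. -/
def H1ContinuousOn {E : Type*} [PseudoMetricSpace E] (G : E → ℂ → ℝ) (S : Set E) : Prop :=
  ∀ y ∈ S, ∀ r : ℝ, 0 < r → ∃ d > (0:ℝ), ∀ y' ∈ S, dist y' y < d →
    Real.sqrt (H1normSq (fun x => G y' x - G y x)) < r

/-- Membership in the constrained set M: u ∈ C¹(closed 𝔻), unit boundary mass and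
zero boundary barycenter. -/
def MemM (u : ℂ → ℝ) : Prop :=
  ContDiff ℝ 1 u ∧
  bint (fun x => Real.exp (u x / 2)) = 1 ∧
  bint (fun x => x.re * Real.exp (u x / 2)) = 0 ∧
  bint (fun x => x.im * Real.exp (u x / 2)) = 0

/-!
On `M` the boundary measure `e^{u/2}` has barycenter zero, so Szegő's strengthening of the
Lebedev–Milin inequality bounds `∫_{∂𝔻} u` below by `-(1/8) ∫_𝔻 |∇u|²` up to a constant. This leaves
enough of the Dirichlet energy to bound `I_ε` below on `M` for all small `ε < 0`.

The map `Λ` consists of bubbles: conformal factors of disks, pulled back by Möbius transformations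
with center `a`. Their boundary mass and barycenter are explicit. Because `min h > max √(-K)` on the
circle, a suitable scale and height make `I` as negative as desired, uniformly in `a`. For `ε < 0`
the term `ε T` tends to `-∞` as `|a| → 1`, whatever the height, and low heights make `I` negative as
well. So one can go from the large bubbles (north pole) to the small ones (south pole) along a
sphere with centers near `∂𝔻` at the equator, while staying at low energy.

The barycenter and the excess mass define an `H¹`-continuous map to `ℝ³` with zero set `M`. On the
sphere of bubbles it is joined to the identity by segments that avoid `0`, so a no-retraction
argument shows that it vanishes somewhere on every extension to the ball.
-/

/-! ### A no-retraction theorem -/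

section Volume

variable {E : Type*} [NormedAddCommGroup E] [NormedSpace ℝ E] [FiniteDimensional ℝ E]

lemma det_one_add_pos_of_norm_lt_one {A : E →L[ℝ] E} (hA : ‖A‖ < 1) : 0 < (1 + A).det := by
  have : CompleteSpace E := FiniteDimensional.complete ℝ E
  have hcont : ContinuousOn (fun s : ℝ => (1 + s • A).det) (Set.Icc 0 1) :=
    (ContinuousLinearMap.continuous_det.comp (by fun_prop)).continuousOn
  by_contra! hneg
  obtain ⟨s, hs, hdet⟩ : (0 : ℝ) ∈ (fun s : ℝ => (1 + s • A).det) '' Set.Icc 0 1 :=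
    intermediate_value_Icc' zero_le_one hcont
      ⟨by simpa using hneg, by simp [ContinuousLinearMap.det]⟩
  have hnorm : ‖-(s • A)‖ < 1 := by
    rw [norm_neg, norm_smul, Real.norm_of_nonneg hs.1]
    exact (mul_le_of_le_one_left (norm_nonneg A) hs.2).trans_lt hA
  have hunit : IsUnit (1 + s • A) := by simpa using isUnit_one_sub_of_norm_lt_one hnorm
  exact ((hunit.map ContinuousLinearMap.toLinearMapRingHom).map LinearMap.det).ne_zero hdet

lemma det_one_add_eq_sum_lagrange {ι : Type*} [DecidableEq ι] {s : Finset ι} {τ : ι → ℝ}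
    (hτ : Set.InjOn τ s) (hcard : Module.finrank ℝ E < s.card) (A : E →L[ℝ] E) :
    (1 + A).det = ∑ i ∈ s, (1 + τ i • A).det * (Lagrange.basis s τ i).eval 1 := by
  let b := Module.finBasis ℝ E
  let M := LinearMap.toMatrix b b (A : E →ₗ[ℝ] E)
  let p : Polynomial ℝ :=
    ((Polynomial.X : Polynomial ℝ) • M.map Polynomial.C + (1 : Matrix _ _ ℝ).map Polynomial.C).det
  have heval (t : ℝ) : p.eval t = (1 + t • A).det := by
    rw [ContinuousLinearMap.det, ← LinearMap.det_toMatrix b, ← Polynomial.coe_evalRingHom,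
      RingHom.map_det]
    congr 1
    ext i j
    by_cases hij : i = j <;> simp [M, LinearMap.toMatrix_apply, hij] <;> ring
  have hdeg : p.degree < s.card :=
    (Polynomial.degree_le_of_natDegree_le
      (Polynomial.natDegree_det_X_add_C_le M 1)).trans_lt (by simpa using hcard)
  calc (1 + A).det = p.eval 1 := by rw [heval, one_smul]
    _ = _ := by
      rw [Lagrange.eq_interpolate hτ hdeg, Lagrange.interpolate_apply, Polynomial.eval_finsetSum]
      simp [heval]

lemma bijective_id_add_of_lipschitzWith {g : E → E} {c : NNReal} (hg : LipschitzWith c g)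
    (hc : c < 1) : Function.Bijective fun x => x + g x := by
  have : CompleteSpace E := FiniteDimensional.complete ℝ E
  have happrox : ApproximatesLinearOn (fun x => x + g x)
      (ContinuousLinearEquiv.refl ℝ E : E →L[ℝ] E) Set.univ c := by
    intro x _ y _
    have hsub : x + g x - (y + g y) - (x - y) = g x - g y := by abel
    simpa [hsub] using hg.norm_sub_le x y
  have hcinv : Subsingleton E ∨
      c < ‖((ContinuousLinearEquiv.refl ℝ E).symm : E →L[ℝ] E)‖₊⁻¹ := by
    rcases subsingleton_or_nontrivial E with hE | hE
    · exact Or.inl hE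
    · have hnorm : ‖((ContinuousLinearEquiv.refl ℝ E).symm : E →L[ℝ] E)‖₊ = 1 :=
        NNReal.eq ContinuousLinearMap.norm_id
      exact Or.inr (by rwa [hnorm, inv_one])
  exact ⟨Set.injOn_univ.1 (happrox.injOn hcinv), happrox.surjective hcinv⟩

variable [MeasurableSpace E] [BorelSpace E] {μ : Measure E}

lemma setIntegral_det_one_add_fderiv_of_lt_one [μ.IsAddHaarMeasure] {U : Set E}
    (hU : MeasurableSet U) {g : E → E} {c : NNReal} (hg : LipschitzWith c g) (hc : c < 1)
    (hgU : ∀ x ∉ U, g x = 0) (hdiff : ∀ x ∈ U, DifferentiableAt ℝ g x) :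
    ∫ x in U, (1 + fderiv ℝ g x).det ∂μ = μ.real U := by
  have hbij := bijective_id_add_of_lipschitzWith hg hc
  have hfix : (fun x => x + g x) '' Uᶜ = Uᶜ :=
    (Set.image_congr fun x hx => by rw [hgU x hx, add_zero]).trans (Set.image_id' _)
  have himage : (fun x => x + g x) '' U = U := by
    rw [← compl_inj_iff, ← Set.image_compl_eq hbij, hfix]
  have hderiv : ∀ x ∈ U, HasFDerivWithinAt (fun x => x + g x) (1 + fderiv ℝ g x) U x :=
    fun x hx => ((hasFDerivAt_id x).add (hdiff x hx).hasFDerivAt).hasFDerivWithinAt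
  have hchange := integral_image_eq_integral_abs_det_fderiv_smul μ hU hderiv hbij.1.injOn
    fun _ => (1 : ℝ)
  rw [himage] at hchange
  simp only [smul_eq_mul, mul_one, integral_const, measureReal_restrict_apply_univ] at hchange
  rw [hchange]
  refine setIntegral_congr_fun hU fun x _ => (abs_of_pos ?_).symm
  exact det_one_add_pos_of_norm_lt_one ((norm_fderiv_le_of_lipschitz ℝ hg).trans_lt hc)

lemma integrableOn_comp_fderiv_of_lipschitzWith {U : Set E} (hUfin : μ U ≠ ⊤) {g : E → E}
    {C : NNReal} (hg : LipschitzWith C g) {φ : (E →L[ℝ] E) → ℝ} (hφ : Continuous φ) :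
    IntegrableOn (fun x => φ (fderiv ℝ g x)) U μ := by
  have : CompleteSpace E := FiniteDimensional.complete ℝ E
  obtain ⟨M, hM⟩ := ((isCompact_closedBall (0 : E →L[ℝ] E) C).image hφ).isBounded.exists_norm_le
  refine Measure.integrableOn_of_bounded hUfin
    (hφ.measurable.comp (measurable_fderiv ℝ g)).aestronglyMeasurable
    (Eventually.of_forall fun x => hM _ ⟨_, ?_, rfl⟩)
  simpa using norm_fderiv_le_of_lipschitz ℝ hg

/- Milnor–Rogers: the left-hand side for `t • g` is a polynomial in `t`, which is constant for small
`t` because `id + t • g` is then a bijection of `U`. -/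
lemma setIntegral_det_one_add_fderiv [μ.IsAddHaarMeasure] {U : Set E} (hU : MeasurableSet U)
    (hUfin : μ U ≠ ⊤) {g : E → E} {C : NNReal} (hg : LipschitzWith C g)
    (hgU : ∀ x ∉ U, g x = 0) (hdiff : ∀ x ∈ U, DifferentiableAt ℝ g x) :
    ∫ x in U, (1 + fderiv ℝ g x).det ∂μ = μ.real U := by
  let s := Finset.range (Module.finrank ℝ E + 1)
  let τ (i : ℕ) : NNReal := ((C + 1) * (i + 1))⁻¹
  have hτ : Set.InjOn (fun i => (τ i : ℝ)) s := fun i _ j _ hij => by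
    have hC : (C : ℝ) + 1 ≠ 0 := by positivity
    simpa [τ, hC] using hij
  have hvol (i : ℕ) : ∫ x in U, (1 + (τ i : ℝ) • fderiv ℝ g x).det ∂μ = μ.real U := by
    have hlip : LipschitzWith (τ i * C) (fun x => (τ i : ℝ) • g x) := by
      refine LipschitzWith.of_dist_le_mul fun x y => ?_
      rw [dist_smul₀, NNReal.norm_eq, NNReal.coe_mul, mul_assoc]
      exact mul_le_mul_of_nonneg_left (hg.dist_le_mul x y) (τ i).2
    have hlt : τ i * C < 1 := by
      rw [inv_mul_lt_iff₀ (by positivity), mul_one]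
      calc C < C + 1 := lt_add_one C
        _ ≤ (C + 1) * (i + 1) := le_mul_of_one_le_right' (by simp)
    rw [← setIntegral_det_one_add_fderiv_of_lt_one hU hlip hlt
      (fun x hx => by rw [hgU x hx, smul_zero]) fun x hx => (hdiff x hx).const_smul _]
    exact setIntegral_congr_fun hU fun x hx => by rw [fderiv_fun_const_smul (hdiff x hx)]
  have hint (i : ℕ) (_ : i ∈ s) : Integrable (fun x =>
      (1 + (τ i : ℝ) • fderiv ℝ g x).det * (Lagrange.basis s (fun i => (τ i : ℝ)) i).eval 1)
      (μ.restrict U) :=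
    (integrableOn_comp_fderiv_of_lipschitzWith (φ := fun A => (1 + (τ i : ℝ) • A).det) hUfin hg
      (ContinuousLinearMap.continuous_det.comp (by fun_prop))).mul_const _
  have hweights : ∑ i ∈ s, (Lagrange.basis s (fun i => (τ i : ℝ)) i).eval 1 = 1 := by
    rw [← Polynomial.eval_finsetSum, Lagrange.sum_basis hτ ⟨0, by simp [s]⟩, Polynomial.eval_one]
  calc ∫ x in U, (1 + fderiv ℝ g x).det ∂μ
      = ∫ x in U, ∑ i ∈ s, (1 + (τ i : ℝ) • fderiv ℝ g x).det *
          (Lagrange.basis s (fun i => (τ i : ℝ)) i).eval 1 ∂μ :=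
        integral_congr_ae (Eventually.of_forall fun x =>
          det_one_add_eq_sum_lagrange hτ (by simp [s]) (fderiv ℝ g x))
    _ = μ.real U := by
        simp only [integral_finsetSum s hint, integral_mul_const, hvol, ← Finset.mul_sum, hweights,
          mul_one]

end Volume

section UnitBallProj

variable {E : Type*} [NormedAddCommGroup E] [NormedSpace ℝ E]

/-- The radial retraction of a normed space onto its closed unit ball. -/
def unitBallProj (x : E) : E := (max 1 ‖x‖)⁻¹ • x

lemma unitBallProj_of_norm_le {x : E} (hx : ‖x‖ ≤ 1) : unitBallProj x = x := by
  simp [unitBallProj, hx]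

lemma unitBallProj_of_le_norm {x : E} (hx : 1 ≤ ‖x‖) : unitBallProj x = ‖x‖⁻¹ • x := by
  simp [unitBallProj, hx]

lemma norm_unitBallProj_of_le_norm {x : E} (hx : 1 ≤ ‖x‖) : ‖unitBallProj x‖ = 1 := by
  have : ‖x‖ ≠ 0 := by positivity
  simp [unitBallProj_of_le_norm hx, norm_smul, this]

lemma norm_unitBallProj_le (x : E) : ‖unitBallProj x‖ ≤ 1 := by
  rcases le_total ‖x‖ 1 with hx | hx
  · rwa [unitBallProj_of_norm_le hx]
  · exact (norm_unitBallProj_of_le_norm hx).le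

lemma lipschitzWith_unitBallProj : LipschitzWith 2 (unitBallProj : E → E) := by
  refine LipschitzWith.of_dist_le_mul fun x y => ?_
  set p := max 1 ‖x‖
  set q := max 1 ‖y‖
  have hp : 1 ≤ p := le_max_left _ _
  have hq : 1 ≤ q := le_max_left _ _
  have hpq : |q - p| ≤ ‖x - y‖ := by
    rw [abs_sub_comm]
    refine (abs_max_sub_max_le_max 1 ‖x‖ 1 ‖y‖).trans ?_
    simpa using abs_norm_sub_norm_le x y
  have hsplit : unitBallProj x - unitBallProj y = p⁻¹ • (x - y) + (p⁻¹ * (q - p) * q⁻¹) • y := by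
    have : p⁻¹ * (q - p) * q⁻¹ = p⁻¹ - q⁻¹ := by field_simp
    rw [this, sub_smul, smul_sub]
    simp only [unitBallProj]
    abel
  have hyq : q⁻¹ * ‖y‖ ≤ 1 := (inv_mul_le_one₀ (by positivity)).2 (le_max_right _ _)
  have hp' : p⁻¹ ≤ 1 := inv_le_one_of_one_le₀ hp
  rw [dist_eq_norm, dist_eq_norm, hsplit]
  calc ‖p⁻¹ • (x - y) + (p⁻¹ * (q - p) * q⁻¹) • y‖
      ≤ p⁻¹ * ‖x - y‖ + p⁻¹ * |q - p| * (q⁻¹ * ‖y‖) := by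
        refine (norm_add_le _ _).trans_eq ?_
        simp only [norm_smul, norm_mul, norm_inv, Real.norm_eq_abs, mul_assoc,
          abs_of_pos (one_pos.trans_le hp), abs_of_pos (one_pos.trans_le hq)]
    _ ≤ 1 * ‖x - y‖ + 1 * ‖x - y‖ * 1 := by gcongr
    _ = ((2 : NNReal) : ℝ) * ‖x - y‖ := by push_cast; ring

lemma continuous_unitBallProj : Continuous (unitBallProj : E → E) :=
  lipschitzWith_unitBallProj.continuous

end UnitBallProj

section Retraction

variable {E : Type*} [NormedAddCommGroup E] [InnerProductSpace ℝ E] [FiniteDimensional ℝ E]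

lemma det_fderiv_eq_zero_of_norm_eq_one {H : E → E} (hnorm : ∀ x, ‖H x‖ = 1) {x : E}
    (hH : DifferentiableAt ℝ H x) : (fderiv ℝ H x).det = 0 := by
  have horth (v : E) : inner ℝ (H x) (fderiv ℝ H x v) = 0 := by
    have hconst : (fun y => inner ℝ (H y) (H y)) = fun _ => (1 : ℝ) :=
      funext fun y => by rw [real_inner_self_eq_norm_sq, hnorm, one_pow]
    have hderiv := fderiv_inner_apply ℝ hH hH v
    rw [hconst, real_inner_comm (H x)] at hderiv
    simp only [fderiv_fun_const, Pi.zero_apply, zero_apply] at hderiv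
    linarith
  by_contra hdet
  obtain ⟨v, hv⟩ := ((fderiv ℝ H x).toContinuousLinearEquivOfDetNeZero hdet).surjective (H x)
  have := horth v
  rw [show fderiv ℝ H x v = H x from hv, real_inner_self_eq_norm_sq, hnorm] at this
  norm_num at this

theorem not_contDiff_retraction_sphere {H : E → E} (hH : ContDiff ℝ 1 H) (hnorm : ∀ x, ‖H x‖ = 1)
    (hid : ∀ x ∈ Metric.sphere (0 : E) 1, H x = x) : False := by
  borelize E
  let g (x : E) : E := H (unitBallProj x) - unitBallProj x
  have hg_in {x : E} (hx : x ∈ Metric.ball (0 : E) 1) : g =ᶠ[nhds x] fun y => H y - y := by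
    filter_upwards [Metric.isOpen_ball.mem_nhds hx] with y hy
    simp only [g, unitBallProj_of_norm_le (mem_ball_zero_iff.1 hy).le]
  have hg_out (x : E) (hx : x ∉ Metric.ball (0 : E) 1) : g x = 0 :=
    sub_eq_zero.2 <| hid _ <| mem_sphere_zero_iff_norm.2 <|
      norm_unitBallProj_of_le_norm <| by simpa using hx
  obtain ⟨C, hC⟩ := ((hH.sub contDiff_id).locallyLipschitz.locallyLipschitzOn
    (s := Metric.closedBall 0 1)).exists_lipschitzOnWith_of_compact (isCompact_closedBall _ _)
  have hg : LipschitzWith (C * 2) g := by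
    rw [← lipschitzOnWith_univ]
    exact hC.comp (lipschitzOnWith_univ.2 lipschitzWith_unitBallProj)
      fun x _ => mem_closedBall_zero_iff.2 (norm_unitBallProj_le x)
  have hdiff (x : E) : DifferentiableAt ℝ H x := hH.differentiable one_ne_zero x
  have hvol := setIntegral_det_one_add_fderiv (μ := volume) measurableSet_ball
    measure_ball_lt_top.ne hg hg_out
    fun x hx => ((hdiff x).sub differentiableAt_id).congr_of_eventuallyEq (hg_in hx)
  have hdet : ∀ x ∈ Metric.ball (0 : E) 1, (1 + fderiv ℝ g x).det = 0 := fun x hx => by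
    have hfderiv : fderiv ℝ g x = fderiv ℝ H x - 1 := by
      rw [(hg_in hx).fderiv_eq, fderiv_fun_sub (hdiff x) differentiableAt_fun_id]
      exact congrArg _ fderiv_id
    rw [hfderiv, add_sub_cancel, det_fderiv_eq_zero_of_norm_eq_one hnorm (hdiff x)]
  rw [setIntegral_congr_fun (g := fun _ => 0) measurableSet_ball hdet, integral_zero] at hvol
  exact (ENNReal.toReal_pos (Metric.measure_ball_pos volume (0 : E) one_pos).ne'
    measure_ball_lt_top.ne).ne hvol

theorem exists_eq_zero_of_eq_id_off_ball {F : E → E} (hF : Continuous F)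
    (hid : ∀ x, 1 ≤ ‖x‖ → F x = x) : ∃ x, F x = 0 := by
  by_contra! hne
  obtain ⟨φ, hφ, hclose, hsupp⟩ := (hF.sub continuous_id).exists_contDiff_approx 1
    hF.norm fun x => norm_pos_iff.2 (hne x)
  let G (x : E) : E := x + φ x
  have hGne (x : E) : G x ≠ 0 := by
    intro hG
    have hlt := hclose x
    rw [dist_eq_norm, show φ x = -x from (neg_eq_of_add_eq_zero_right hG).symm] at hlt
    simp [norm_sub_rev] at hlt
  have hGid : ∀ x ∈ Metric.sphere (0 : E) 1, G x = x := fun x hx => by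
    have hφx : x ∉ Function.support φ := fun h => hsupp h <| sub_eq_zero.2 <| hid x
      (mem_sphere_zero_iff_norm.1 hx).ge
    simpa [G] using hφx
  have hG : ContDiff ℝ 1 G := contDiff_id.add hφ
  refine not_contDiff_retraction_sphere (H := fun x => ‖G x‖⁻¹ • G x)
    (((hG.norm ℝ hGne).inv fun x => norm_ne_zero_iff.2 (hGne x)).smul hG)
    (fun x => by simp [norm_smul, hGne x]) fun x hx => ?_
  rw [hGid x hx, mem_sphere_zero_iff_norm.1 hx, inv_one, one_smul]

theorem exists_eq_zero_of_segment_ne_zero {F : E → E}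
    (hF : ContinuousOn F (Metric.closedBall 0 1))
    (hsegment : ∀ y ∈ Metric.sphere (0 : E) 1, ∀ s ∈ Set.Icc (0 : ℝ) 1,
      (1 - s) • F y + s • y ≠ 0) :
    ∃ x ∈ Metric.closedBall (0 : E) 1, F x = 0 := by
  by_contra! hne
  let s (x : E) : ℝ := max 0 (min 1 (2 * ‖x‖ - 1))
  let p (x : E) : E := unitBallProj ((2 : ℝ) • x)
  have hp (x : E) : p x ∈ Metric.closedBall (0 : E) 1 :=
    mem_closedBall_zero_iff.2 (norm_unitBallProj_le _)
  have hp_sphere {x : E} (hx : 1 / 2 ≤ ‖x‖) : p x ∈ Metric.sphere (0 : E) 1 :=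
    mem_sphere_zero_iff_norm.2 <| norm_unitBallProj_of_le_norm <| by
      rw [norm_smul, Real.norm_two]; linarith
  have hpc : Continuous p := continuous_unitBallProj.comp (continuous_const_smul 2)
  have hsc : Continuous s := by fun_prop
  let Φ (x : E) : E := (1 - s x) • F (p x) + s x • p x + (x - unitBallProj x)
  have hΦ : Continuous Φ :=
    (((continuous_const.sub hsc).smul (hF.comp_continuous hpc hp)).add (hsc.smul hpc)).add
      (continuous_id.sub continuous_unitBallProj)
  have hΦ_out (x : E) (hx : 1 ≤ ‖x‖) : Φ x = x := by
    have hs : s x = 1 := by simp [s, show 1 ≤ 2 * ‖x‖ - 1 by linarith]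
    have hpx : p x = unitBallProj x := by
      have h2x : 1 ≤ ‖(2 : ℝ) • x‖ := by rw [norm_smul, Real.norm_two]; linarith
      rw [unitBallProj_of_le_norm hx, show p x = _ from unitBallProj_of_le_norm h2x, norm_smul,
        Real.norm_two, smul_smul]
      congr 1
      field_simp
    simp [Φ, hs, hpx]
  obtain ⟨x, hx⟩ := exists_eq_zero_of_eq_id_off_ball hΦ hΦ_out
  rcases le_total 1 ‖x‖ with hx1 | hx1
  · rw [hΦ_out x hx1] at hx
    norm_num [hx] at hx1
  simp only [Φ, unitBallProj_of_norm_le hx1, sub_self, add_zero] at hx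
  rcases le_total (1 / 2) ‖x‖ with hx2 | hx2
  · have hs : s x ∈ Set.Icc (0 : ℝ) 1 := ⟨le_max_left _ _, max_le zero_le_one (min_le_left _ _)⟩
    exact hsegment _ (hp_sphere hx2) (s x) hs hx
  · have hs : s x = 0 := max_eq_left ((min_le_right _ _).trans (by linarith))
    exact hne (p x) (hp x) (by simpa [hs] using hx)

end Retraction

/-! ### Calculus on the disk in polar coordinates -/

lemma bpt_eq (θ : ℝ) : bpt θ = (Real.cos θ : ℂ) + (Real.sin θ : ℂ) * Complex.I := by
  simp [bpt, Complex.exp_mul_I]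

@[simp]
lemma re_bpt (θ : ℝ) : (bpt θ).re = Real.cos θ := by
  simp [bpt_eq, -Complex.ofReal_cos, -Complex.ofReal_sin]

@[simp]
lemma im_bpt (θ : ℝ) : (bpt θ).im = Real.sin θ := by
  simp [bpt_eq, -Complex.ofReal_cos, -Complex.ofReal_sin]

@[simp]
lemma norm_bpt (θ : ℝ) : ‖bpt θ‖ = 1 := by
  simp [bpt, Complex.norm_exp_ofReal_mul_I]

@[fun_prop]
lemma continuous_bpt : Continuous bpt := by
  unfold bpt; fun_prop

lemma periodic_bpt : Function.Periodic bpt (2 * π) := by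
  intro θ
  simp [bpt_eq, -Complex.ofReal_cos, -Complex.ofReal_sin]

lemma bpt_mem_unitCircle (θ : ℝ) : bpt θ ∈ unitCircle := by
  simp [unitCircle]

lemma hasDerivAt_bpt (θ : ℝ) : HasDerivAt bpt (bpt θ * Complex.I) θ := by
  have h : HasDerivAt (fun θ : ℝ => (θ : ℂ) * Complex.I) Complex.I θ := by
    simpa using (Complex.ofRealCLM.hasDerivAt (x := θ)).mul_const Complex.I
  exact h.cexp

/-- The point of the plane with polar coordinates `p = (r, θ)`. -/
def polarPoint (p : ℝ × ℝ) : ℂ := p.1 * bpt p.2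

@[fun_prop]
lemma continuous_polarPoint : Continuous polarPoint := by
  unfold polarPoint; fun_prop

lemma norm_polarPoint {p : ℝ × ℝ} (hp : 0 ≤ p.1) : ‖polarPoint p‖ = p.1 := by
  simp [polarPoint, abs_of_nonneg hp]

lemma polarPoint_mem_closedBall {p : ℝ × ℝ} (hp : p.1 ∈ Set.uIcc (0 : ℝ) 1) :
    polarPoint p ∈ Metric.closedBall (0 : ℂ) 1 := by
  rw [Set.uIcc_of_le zero_le_one] at hp
  simpa [norm_polarPoint hp.1] using hp.2

lemma setIntegral_unitDisk_eq_polar_Ioo (f : ℂ → ℝ) :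
    ∫ x in unitDisk, f x =
      ∫ p in Set.Ioo (0 : ℝ) 1 ×ˢ Set.Ioo (-π) π, p.1 * f (polarPoint p) := by
  have hsymm (p : ℝ × ℝ) : Complex.polarCoord.symm p = polarPoint p := by
    rw [Complex.polarCoord_symm_apply, polarPoint, bpt_eq]
  have hmeas : MeasurableSet (Set.Ioo (0 : ℝ) 1 ×ˢ Set.Ioo (-π) π) :=
    measurableSet_Ioo.prod measurableSet_Ioo
  have hsub : Set.Ioo (0 : ℝ) 1 ×ˢ Set.Ioo (-π) π ⊆ Set.Ioi (0 : ℝ) ×ˢ Set.Ioo (-π) π :=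
    Set.prod_mono Set.Ioo_subset_Ioi_self subset_rfl
  have hdisk : MeasurableSet unitDisk := measurableSet_ball
  rw [← integral_indicator hdisk, ← Complex.integral_comp_polarCoord_symm,
    polarCoord_target, ← Set.inter_eq_right.2 hsub, ← setIntegral_indicator hmeas]
  refine setIntegral_congr_fun (measurableSet_Ioi.prod measurableSet_Ioo) ?_
  rintro p ⟨hr, hθ⟩
  have hball : polarPoint p ∈ unitDisk ↔ p ∈ Set.Ioo (0 : ℝ) 1 ×ˢ Set.Ioo (-π) π := by
    simp only [unitDisk, mem_ball_zero_iff, norm_polarPoint (le_of_lt hr), Set.mem_prod]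
    exact ⟨fun h => ⟨⟨hr, h⟩, hθ⟩, fun h => h.1.2⟩
  by_cases hp : polarPoint p ∈ unitDisk
  · simp [hsymm, hp, hball.1 hp]
  · simp [hsymm, hp, mt hball.2 hp]

lemma continuousOn_comp_polarPoint {f : ℂ → ℝ} (hf : ContinuousOn f (Metric.closedBall 0 1))
    (s : Set ℝ) : ContinuousOn (fun p => f (polarPoint p)) (Set.uIcc (0 : ℝ) 1 ×ˢ s) :=
  hf.comp continuous_polarPoint.continuousOn fun _ hp => polarPoint_mem_closedBall hp.1

lemma setIntegral_unitDisk_eq_polar {f : ℂ → ℝ} (hf : ContinuousOn f (Metric.closedBall 0 1)) :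
    ∫ x in unitDisk, f x =
      ∫ r in (0 : ℝ)..1, ∫ θ in (0 : ℝ)..2 * π, r * f (polarPoint (r, θ)) := by
  have hint : IntegrableOn (fun p : ℝ × ℝ => p.1 * f (polarPoint p))
      (Set.Ioo (0 : ℝ) 1 ×ˢ Set.Ioo (-π) π) (volume.prod volume) :=
    ((continuous_fst.continuousOn.mul (continuousOn_comp_polarPoint hf _)).integrableOn_compact
      (isCompact_uIcc.prod isCompact_Icc)).mono_set
      (Set.prod_mono (by simp [Set.Ioo_subset_Icc_self]) Set.Ioo_subset_Icc_self)
  rw [setIntegral_unitDisk_eq_polar_Ioo, Measure.volume_eq_prod, setIntegral_prod _ hint,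
    intervalIntegral.integral_of_le zero_le_one, integral_Ioc_eq_integral_Ioo]
  congr 1
  ext r
  have hperiodic : Function.Periodic (fun θ => r * f (polarPoint (r, θ))) (2 * π) := by
    intro θ
    simp only [polarPoint, periodic_bpt θ]
  rw [← integral_Ioc_eq_integral_Ioo, ← intervalIntegral.integral_of_le (by linarith [pi_pos])]
  convert hperiodic.intervalIntegral_add_eq (-π) 0 using 2 <;> ring

lemma fderiv_apply_eq_pd (u : ℂ → ℝ) (x v : ℂ) :
    fderiv ℝ u x v = v.re * pd u 1 x + v.im * pd u Complex.I x := by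
  have hv : v = v.re • (1 : ℂ) + v.im • Complex.I := by apply Complex.ext <;> simp
  conv_lhs => rw [hv]
  rw [map_add, map_smul, map_smul]
  rfl

lemma continuousOn_pd {u : ℂ → ℝ} {s : Set ℂ} (hu : ∀ x ∈ s, ContDiffAt ℝ 1 u x) (v : ℂ) :
    ContinuousOn (pd u v) s := fun x hx =>
  ((((hu x hx).fderiv_right (m := 0) (by norm_num)).continuousAt).clm_apply
    continuousAt_const).continuousWithinAt

lemma hasFDerivAt_polarPoint (p : ℝ × ℝ) :
    HasFDerivAt polarPoint ((ContinuousLinearMap.fst ℝ ℝ ℝ).smulRight (bpt p.2) +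
      (ContinuousLinearMap.snd ℝ ℝ ℝ).smulRight (p.1 * (bpt p.2 * Complex.I))) p := by
  have hradius : HasFDerivAt (fun p : ℝ × ℝ => (p.1 : ℂ))
      (Complex.ofRealCLM.comp (ContinuousLinearMap.fst ℝ ℝ ℝ)) p :=
    (Complex.ofRealCLM.comp (ContinuousLinearMap.fst ℝ ℝ ℝ)).hasFDerivAt
  have hangle : HasFDerivAt (fun p : ℝ × ℝ => bpt p.2) _ p :=
    (hasDerivAt_bpt p.2).hasFDerivAt.comp p hasFDerivAt_snd
  refine (hradius.fun_mul hangle).congr_fderiv ?_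
  ext <;> simp

/-- The flux of the field `(X, Y)` across circles, in polar coordinates and with the Jacobian
factor `r` included. -/
def radialFlux (X Y : ℂ → ℝ) (p : ℝ × ℝ) : ℝ :=
  p.1 * (Real.cos p.2 * X (polarPoint p) + Real.sin p.2 * Y (polarPoint p))

/-- The flux of the field `(X, Y)` across rays, in polar coordinates. -/
def angularFlux (X Y : ℂ → ℝ) (p : ℝ × ℝ) : ℝ :=
  -Real.sin p.2 * X (polarPoint p) + Real.cos p.2 * Y (polarPoint p)

section Divergence

variable {X Y : ℂ → ℝ}

lemma exists_hasFDerivAt_flux {p : ℝ × ℝ} (hX : DifferentiableAt ℝ X (polarPoint p))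
    (hY : DifferentiableAt ℝ Y (polarPoint p)) :
    ∃ f' g' : ℝ × ℝ →L[ℝ] ℝ, HasFDerivAt (radialFlux X Y) f' p ∧
      HasFDerivAt (angularFlux X Y) g' p ∧
      f' (1, 0) + g' (0, 1) = p.1 * (pd X 1 (polarPoint p) + pd Y Complex.I (polarPoint p)) := by
  have hXp : HasFDerivAt (fun p => X (polarPoint p)) _ p :=
    hX.hasFDerivAt.comp p (hasFDerivAt_polarPoint p)
  have hYp : HasFDerivAt (fun p => Y (polarPoint p)) _ p :=
    hY.hasFDerivAt.comp p (hasFDerivAt_polarPoint p)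
  have hcos : HasFDerivAt (fun p : ℝ × ℝ => Real.cos p.2)
      (-Real.sin p.2 • ContinuousLinearMap.snd ℝ ℝ ℝ) p :=
    (Real.hasDerivAt_cos p.2).comp_hasFDerivAt p hasFDerivAt_snd
  have hsin : HasFDerivAt (fun p : ℝ × ℝ => Real.sin p.2)
      (Real.cos p.2 • ContinuousLinearMap.snd ℝ ℝ ℝ) p :=
    (Real.hasDerivAt_sin p.2).comp_hasFDerivAt p hasFDerivAt_snd
  refine ⟨_, _, hasFDerivAt_fst.fun_mul ((hcos.fun_mul hXp).fun_add (hsin.fun_mul hYp)),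
    (hsin.fun_neg.fun_mul hXp).fun_add (hcos.fun_mul hYp), ?_⟩
  simp only [_root_.add_apply, _root_.smul_apply, ContinuousLinearMap.comp_apply,
    ContinuousLinearMap.smulRight_apply, ContinuousLinearMap.coe_fst',
    ContinuousLinearMap.coe_snd', _root_.neg_apply, one_smul, zero_smul, add_zero, zero_add,
    smul_eq_mul, mul_zero, mul_one, fderiv_apply_eq_pd, Complex.mul_re, Complex.mul_im,
    Complex.ofReal_re, Complex.ofReal_im, Complex.I_re, Complex.I_im, re_bpt, im_bpt]
  linear_combination (p.1 * pd X 1 (polarPoint p) + p.1 * pd Y Complex.I (polarPoint p)) *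
    Real.sin_sq_add_cos_sq p.2

lemma continuousOn_radialFlux (hX : ContinuousOn X (Metric.closedBall 0 1))
    (hY : ContinuousOn Y (Metric.closedBall 0 1)) (s : Set ℝ) :
    ContinuousOn (radialFlux X Y) (Set.uIcc (0 : ℝ) 1 ×ˢ s) :=
  continuous_fst.continuousOn.mul
    (((by fun_prop : Continuous fun p : ℝ × ℝ => Real.cos p.2).continuousOn.mul
      (continuousOn_comp_polarPoint hX s)).add
    ((by fun_prop : Continuous fun p : ℝ × ℝ => Real.sin p.2).continuousOn.mul
      (continuousOn_comp_polarPoint hY s)))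

lemma continuousOn_angularFlux (hX : ContinuousOn X (Metric.closedBall 0 1))
    (hY : ContinuousOn Y (Metric.closedBall 0 1)) (s : Set ℝ) :
    ContinuousOn (angularFlux X Y) (Set.uIcc (0 : ℝ) 1 ×ˢ s) :=
  ((by fun_prop : Continuous fun p : ℝ × ℝ => -Real.sin p.2).continuousOn.mul
    (continuousOn_comp_polarPoint hX s)).add
  ((by fun_prop : Continuous fun p : ℝ × ℝ => Real.cos p.2).continuousOn.mul
    (continuousOn_comp_polarPoint hY s))

theorem setIntegral_unitDisk_divergence
    (hX : ∀ x ∈ Metric.closedBall (0 : ℂ) 1, ContDiffAt ℝ 1 X x)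
    (hY : ∀ x ∈ Metric.closedBall (0 : ℂ) 1, ContDiffAt ℝ 1 Y x) :
    ∫ x in unitDisk, (pd X 1 x + pd Y Complex.I x) = bint fun x => x.re * X x + x.im * Y x := by
  have hXc : ContinuousOn X (Metric.closedBall 0 1) :=
    fun x hx => (hX x hx).continuousAt.continuousWithinAt
  have hYc : ContinuousOn Y (Metric.closedBall 0 1) :=
    fun x hx => (hY x hx).continuousAt.continuousWithinAt
  have hdiv : ContinuousOn (fun x => pd X 1 x + pd Y Complex.I x) (Metric.closedBall (0 : ℂ) 1) :=
    (continuousOn_pd hX 1).add (continuousOn_pd hY Complex.I)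
  have hflux : ∀ p ∈ Set.uIcc (0 : ℝ) 1 ×ˢ Set.uIcc 0 (2 * π),
      HasFDerivAt (radialFlux X Y) (fderiv ℝ (radialFlux X Y) p) p ∧
      HasFDerivAt (angularFlux X Y) (fderiv ℝ (angularFlux X Y) p) p ∧
      fderiv ℝ (radialFlux X Y) p (1, 0) + fderiv ℝ (angularFlux X Y) p (0, 1) =
        p.1 * (pd X 1 (polarPoint p) + pd Y Complex.I (polarPoint p)) := by
    intro p hp
    have hmem := polarPoint_mem_closedBall hp.1
    obtain ⟨f', g', hf, hg, hsum⟩ := exists_hasFDerivAt_flux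
      ((hX _ hmem).differentiableAt one_ne_zero) ((hY _ hmem).differentiableAt one_ne_zero)
    rw [hf.fderiv, hg.fderiv]
    exact ⟨hf, hg, hsum⟩
  have hperiodic (r : ℝ) : angularFlux X Y (r, 2 * π) = angularFlux X Y (r, 0) := by
    simp [angularFlux, polarPoint, bpt_eq, -Complex.ofReal_cos, -Complex.ofReal_sin]
  rw [setIntegral_unitDisk_eq_polar hdiv, ← intervalIntegral.integral_congr fun r hr =>
    intervalIntegral.integral_congr fun θ hθ => (hflux (r, θ) ⟨hr, hθ⟩).2.2,
    integral2_divergence_prod_of_hasFDerivAt (radialFlux X Y) (angularFlux X Y)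
      (fderiv ℝ (radialFlux X Y)) (fderiv ℝ (angularFlux X Y)) 0 0 1 (2 * π)
      (continuousOn_radialFlux hXc hYc _) (continuousOn_angularFlux hXc hYc _)
      (fun p hp => (hflux p (Set.prod_mono Set.Ioo_subset_Icc_self Set.Ioo_subset_Icc_self hp)).1)
      (fun p hp => (hflux p (Set.prod_mono Set.Ioo_subset_Icc_self Set.Ioo_subset_Icc_self hp)).2.1)
      (((continuous_fst.continuousOn.mul (continuousOn_comp_polarPoint hdiv _)).integrableOn_compact
        (isCompact_uIcc.prod isCompact_uIcc)).congr_fun (fun p hp => (hflux p hp).2.2.symm)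
        (measurableSet_uIcc.prod measurableSet_uIcc))]
  simp [hperiodic, bint, radialFlux, polarPoint]

end Divergence

/-! ### Coefficients of exponentials -/

section ExpCoeff

open Finset.HasAntidiagonal (antidiagonal)

lemma sum_range_sum_antidiagonal {M : Type*} [AddCommMonoid M] (f : ℕ × ℕ → M) (n : ℕ) :
    ∑ k ∈ Finset.range n, ∑ p ∈ antidiagonal k, f p =
      ∑ p ∈ (Finset.range n ×ˢ Finset.range n).filter
        (fun p : ℕ × ℕ => p.1 + p.2 < n), f p := by
  rw [← Finset.sum_fiberwise_of_maps_to (t := Finset.range n) (g := fun p : ℕ × ℕ => p.1 + p.2)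
    (by simp)]
  refine Finset.sum_congr rfl fun k hk => Finset.sum_congr ?_ fun _ _ => rfl
  ext p
  simp only [Finset.HasAntidiagonal.mem_antidiagonal, Finset.mem_filter, Finset.mem_product,
    Finset.mem_range] at hk ⊢
  omega

section Comparison

variable {C q : ℕ → ℝ}

lemma sum_mul_pow_le_of_convolution_le (hC : ∀ n, 0 ≤ C n) (hq : ∀ n, 0 ≤ q n)
    (hrec : ∀ n : ℕ, n * C n ≤ ∑ i ∈ Finset.range n, q (n - 1 - i) * C i)
    {x : ℝ} (hx : 0 ≤ x) (M : ℕ) :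
    ∑ n ∈ Finset.range M, C (n + 1) * ((n + 1) * x ^ n) ≤
      (∑ k ∈ Finset.range M, q k * x ^ k) * ∑ n ∈ Finset.range (M + 1), C n * x ^ n := by
  calc ∑ n ∈ Finset.range M, C (n + 1) * ((n + 1) * x ^ n)
      ≤ ∑ n ∈ Finset.range M, ∑ p ∈ antidiagonal n, q p.1 * x ^ p.1 * (C p.2 * x ^ p.2) := by
        refine Finset.sum_le_sum fun n _ => ?_
        have hterm : ∑ p ∈ antidiagonal n, q p.1 * x ^ p.1 * (C p.2 * x ^ p.2) =
            (∑ i ∈ Finset.range (n + 1), q (n - i) * C i) * x ^ n := by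
          rw [← Finset.Nat.sum_antidiagonal_swap, Finset.sum_mul,
            ← Finset.Nat.sum_antidiagonal_eq_sum_range_succ fun i k => q k * C i * x ^ n]
          refine Finset.sum_congr rfl fun p hp => ?_
          rw [← Finset.HasAntidiagonal.mem_antidiagonal.1 hp, Prod.fst_swap, Prod.snd_swap]
          ring
        rw [hterm, ← mul_assoc, mul_comm (C _)]
        exact mul_le_mul_of_nonneg_right (by simpa using hrec (n + 1)) (pow_nonneg hx n)
    _ ≤ ∑ p ∈ Finset.range M ×ˢ Finset.range (M + 1), q p.1 * x ^ p.1 * (C p.2 * x ^ p.2) := by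
        rw [sum_range_sum_antidiagonal]
        refine Finset.sum_le_sum_of_subset_of_nonneg ?_ fun p _ _ =>
          mul_nonneg (mul_nonneg (hq _) (pow_nonneg hx _)) (mul_nonneg (hC _) (pow_nonneg hx _))
        exact (Finset.filter_subset _ _).trans
          (Finset.product_subset_product_right (by simp))
    _ = _ := by rw [Finset.sum_product, Finset.sum_mul_sum]

lemma sum_le_mul_exp_of_convolution_le (hC : ∀ n, 0 ≤ C n) (hq : ∀ n, 0 ≤ q n)
    (hrec : ∀ n : ℕ, n * C n ≤ ∑ i ∈ Finset.range n, q (n - 1 - i) * C i) (M : ℕ) :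
    ∑ n ∈ Finset.range (M + 1), C n ≤ C 0 * Real.exp (∑ k ∈ Finset.range M, q k / (k + 1)) := by
  let F : ℝ → ℝ := fun x => ∑ n ∈ Finset.range (M + 1), C n * x ^ n
  let Q : ℝ → ℝ := fun x => ∑ k ∈ Finset.range M, q k / (k + 1) * x ^ (k + 1)
  have hF (x : ℝ) : HasDerivAt F (∑ n ∈ Finset.range M, C (n + 1) * ((n + 1) * x ^ n)) x := by
    refine (HasDerivAt.fun_sum fun n (_ : n ∈ Finset.range (M + 1)) =>
      (hasDerivAt_pow n x).const_mul (C n)).congr_deriv ?_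
    simp [Finset.sum_range_succ' _ M]
  have hQ (x : ℝ) : HasDerivAt Q (∑ k ∈ Finset.range M, q k * x ^ k) x := by
    refine (HasDerivAt.fun_sum fun k (_ : k ∈ Finset.range M) =>
      (hasDerivAt_pow (k + 1) x).const_mul (q k / (k + 1))).congr_deriv ?_
    refine Finset.sum_congr rfl fun k _ => ?_
    have : (k : ℝ) + 1 ≠ 0 := by positivity
    push_cast
    field_simp
  -- The recursion says `F' ≤ Q' F` on `[0, ∞)`, so `F e^{-Q}` decreases from `C 0`.
  have hanti : AntitoneOn (fun x => F x * Real.exp (-Q x)) (Set.Icc 0 1) := by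
    have hderiv (x : ℝ) := (hF x).fun_mul (hQ x).fun_neg.exp
    refine antitoneOn_of_deriv_nonpos (convex_Icc 0 1)
      (fun x _ => (hderiv x).continuousAt.continuousWithinAt)
      (fun x _ => (hderiv x).differentiableAt.differentiableWithinAt) fun x hx => ?_
    rw [interior_Icc] at hx
    rw [(hderiv x).deriv]
    nlinarith [sum_mul_pow_le_of_convolution_le hC hq hrec hx.1.le M, Real.exp_pos (-Q x)]
  have hle := hanti (Set.left_mem_Icc.2 zero_le_one) (Set.right_mem_Icc.2 zero_le_one) zero_le_one
  have hF0 : F 0 = C 0 := by simp [F, Finset.sum_range_succ']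
  simp only [hF0, F, Q, one_pow, mul_one, zero_pow (Nat.succ_ne_zero _), mul_zero,
    Finset.sum_const_zero, neg_zero, Real.exp_zero, Real.exp_neg] at hle
  rwa [← div_eq_mul_inv, div_le_iff₀ (Real.exp_pos _)] at hle

end Comparison

/-- `b` is the Taylor coefficient sequence of a function `g` with `g' = p g`, where
`p = ∑ P k z ^ k`; for instance `g = exp f` and `p = f'`. -/
def IsExpCoeff (P b : ℕ → ℂ) : Prop :=
  ∀ n : ℕ, (n : ℂ) * b n = ∑ i ∈ Finset.range n, P (n - 1 - i) * b i

variable {P b : ℕ → ℂ}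

theorem IsExpCoeff.sum_norm_sq_le (hb : IsExpCoeff P b) (M : ℕ) :
    ∑ n ∈ Finset.range (M + 1), ‖b n‖ ^ 2 ≤
      ‖b 0‖ ^ 2 * Real.exp (∑ k ∈ Finset.range M, ‖P k‖ ^ 2 / (k + 1)) := by
  refine sum_le_mul_exp_of_convolution_le (C := fun n => ‖b n‖ ^ 2) (q := fun k => ‖P k‖ ^ 2)
    (fun _ => by positivity) (fun _ => by positivity) (fun n => ?_) M
  rcases n.eq_zero_or_pos with rfl | hn
  · simp
  have hnorm : n * ‖b n‖ ≤ ∑ i ∈ Finset.range n, ‖P (n - 1 - i)‖ * ‖b i‖ := by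
    rw [← Complex.norm_natCast, ← norm_mul, hb n]
    exact (norm_sum_le _ _).trans (Finset.sum_le_sum fun i _ => (norm_mul _ _).le)
  have hn' : (0 : ℝ) < n := by exact_mod_cast hn
  refine le_of_mul_le_mul_left ?_ hn'
  calc (n : ℝ) * (n * ‖b n‖ ^ 2) = (n * ‖b n‖) ^ 2 := by ring
    _ ≤ (∑ i ∈ Finset.range n, ‖P (n - 1 - i)‖ * ‖b i‖) ^ 2 := by gcongr
    _ ≤ n * ∑ i ∈ Finset.range n, ‖P (n - 1 - i)‖ ^ 2 * ‖b i‖ ^ 2 := by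
        simpa only [Finset.card_range, mul_pow] using
          sq_sum_le_card_mul_sum_sq (s := Finset.range n) (f := fun i => ‖P (n - 1 - i)‖ * ‖b i‖)

/-- The coefficient sequence of `z g(z)`, where `b` is that of `g`. -/
def shiftCoeff (b : ℕ → ℂ) : ℕ → ℂ
  | 0 => 0
  | n + 1 => b n

@[simp]
lemma shiftCoeff_zero (b : ℕ → ℂ) : shiftCoeff b 0 = 0 := rfl

@[simp]
lemma shiftCoeff_succ (b : ℕ → ℂ) (n : ℕ) : shiftCoeff b (n + 1) = b n := rfl

/-- The coefficient of `z ^ m w ^ n` in `(z - w) g(z) g(w)`, where `b` is the coefficient sequence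
of `g`. -/
def antisymmCoeff (b : ℕ → ℂ) (m n : ℕ) : ℂ := shiftCoeff b m * b n - b m * shiftCoeff b n

/-- The squared `ℓ²` norm of the degree `j` homogeneous part of `(z - w) g(z) g(w)`. -/
def homogeneousNormSq (b : ℕ → ℂ) (j : ℕ) : ℝ :=
  ∑ p ∈ antidiagonal j, ‖antisymmCoeff b p.1 p.2‖ ^ 2

lemma homogeneousNormSq_zero (b : ℕ → ℂ) : homogeneousNormSq b 0 = 0 := by
  simp [homogeneousNormSq, antisymmCoeff]

lemma homogeneousNormSq_nonneg (b : ℕ → ℂ) (j : ℕ) : 0 ≤ homogeneousNormSq b j :=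
  Finset.sum_nonneg fun _ _ => by positivity

lemma homogeneousNormSq_eq_sum_range (b : ℕ → ℂ) (j : ℕ) :
    homogeneousNormSq b j = ∑ m ∈ Finset.range (j + 1), ‖antisymmCoeff b m (j - m)‖ ^ 2 :=
  Finset.Nat.sum_antidiagonal_eq_sum_range_succ (fun m n => ‖antisymmCoeff b m n‖ ^ 2) j

lemma sum_range_antisymmCoeff (b : ℕ → ℂ) (L : ℕ) :
    ∑ m ∈ Finset.range (L + 1), antisymmCoeff b m (L - m) = 0 := by
  rw [← Finset.Nat.sum_antidiagonal_eq_sum_range_succ (antisymmCoeff b)]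
  have hswap := Finset.Nat.sum_antidiagonal_swap (n := L)
    (f := fun p : ℕ × ℕ => antisymmCoeff b p.1 p.2)
  have hneg (p : ℕ × ℕ) : antisymmCoeff b p.swap.1 p.swap.2 = -antisymmCoeff b p.1 p.2 := by
    simp only [antisymmCoeff, Prod.fst_swap, Prod.snd_swap]
    ring
  simp only [hneg, Finset.sum_neg_distrib] at hswap
  exact self_eq_neg.1 hswap.symm

lemma IsExpCoeff.shiftCoeff_eq (hb : IsExpCoeff P b) (n : ℕ) :
    ((n : ℂ) - 1) * shiftCoeff b n = ∑ i ∈ Finset.range n, P (n - 1 - i) * shiftCoeff b i := by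
  cases n with
  | zero => simp
  | succ n =>
    rw [Finset.sum_range_succ', Finset.sum_congr rfl fun i _ => by
      rw [shiftCoeff_succ, Nat.add_sub_cancel, add_comm i, ← Nat.sub_sub]]
    simp [← hb n]

lemma IsExpCoeff.antisymmCoeff_eq (hb : IsExpCoeff P b) (m n : ℕ) :
    ((m : ℂ) + n - 1) * antisymmCoeff b m n =
      ∑ i ∈ Finset.range m, P (m - 1 - i) * antisymmCoeff b i n +
        ∑ i ∈ Finset.range n, P (n - 1 - i) * antisymmCoeff b m i := by
  have hfst : ∑ i ∈ Finset.range m, P (m - 1 - i) * antisymmCoeff b i n =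
      ((m - 1) * shiftCoeff b m) * b n - (m * b m) * shiftCoeff b n := by
    rw [hb.shiftCoeff_eq, hb m, Finset.sum_mul, Finset.sum_mul, ← Finset.sum_sub_distrib]
    exact Finset.sum_congr rfl fun i _ => by rw [antisymmCoeff]; ring
  have hsnd : ∑ i ∈ Finset.range n, P (n - 1 - i) * antisymmCoeff b m i =
      shiftCoeff b m * (n * b n) - b m * ((n - 1) * shiftCoeff b n) := by
    rw [hb.shiftCoeff_eq, hb n, Finset.mul_sum, Finset.mul_sum, ← Finset.sum_sub_distrib]
    exact Finset.sum_congr rfl fun i _ => by rw [antisymmCoeff]; ring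
  rw [hfst, hsnd, antisymmCoeff]
  ring

lemma IsExpCoeff.mul_antisymmCoeff_eq_sum_pairs (hb : IsExpCoeff P b) {N m : ℕ}
    (hm : m ∈ Finset.range (N + 2)) :
    (N : ℂ) * antisymmCoeff b m (N + 1 - m) =
      (∑ m' ∈ Finset.range (N + 2),
        if m' < m then P (m - 1 - m') * antisymmCoeff b m' (N + 1 - m) else 0) +
      ∑ m' ∈ Finset.range (N + 2),
        if m < m' then P (m' - 1 - m) * antisymmCoeff b m (N + 1 - m') else 0 := by
  rw [Finset.mem_range] at hm
  have hrec := hb.antisymmCoeff_eq m (N + 1 - m)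
  rw [Nat.cast_sub (by lia)] at hrec
  rw [← Finset.sum_filter, ← Finset.sum_filter, ← sub_eq_zero]
  rw [← sub_eq_zero] at hrec
  convert hrec using 3
  · push_cast
    ring
  · refine Finset.sum_congr (Finset.ext fun i => ?_) fun _ _ => rfl
    simp only [Finset.mem_filter, Finset.mem_range]
    lia
  · refine Finset.sum_nbij' (fun i => N + 1 - i) (fun i => N + 1 - i) ?_ ?_ ?_ ?_ ?_ <;>
      intro i hi <;> simp only [Finset.mem_filter, Finset.mem_range] at hi ⊢
    all_goals first | lia | rw [show N + 1 - m - 1 - (N + 1 - i) = i - 1 - m by lia]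

lemma sum_sum_lt_norm_add_sq (L : ℕ) {Y : ℕ → ℂ} (hY : ∑ m ∈ Finset.range (L + 1), Y m = 0) :
    ∑ m ∈ Finset.range (L + 1), ∑ m' ∈ Finset.range (L + 1),
        (if m < m' then ‖Y m + Y m'‖ ^ 2 else 0) =
      ((L : ℝ) - 1) * ∑ m ∈ Finset.range (L + 1), ‖Y m‖ ^ 2 := by
  set R := Finset.range (L + 1) with hR
  have hswap : ∑ m ∈ R, ∑ m' ∈ R, (if m < m' then ‖Y m + Y m'‖ ^ 2 else 0) =
      ∑ m ∈ R, ∑ m' ∈ R, (if m' < m then ‖Y m + Y m'‖ ^ 2 else 0) := by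
    rw [Finset.sum_comm]
    simp only [add_comm]
  have hdiag : ∑ m ∈ R, ∑ m' ∈ R, (if m = m' then ‖Y m + Y m'‖ ^ 2 else 0) =
      4 * ∑ m ∈ R, ‖Y m‖ ^ 2 := by
    rw [Finset.mul_sum]
    refine Finset.sum_congr rfl fun m hm => ?_
    rw [Finset.sum_ite_eq, if_pos hm, ← two_mul, norm_mul, mul_pow, Complex.norm_two]
    norm_num
  have htotal : ∑ m ∈ R, ∑ m' ∈ R, ‖Y m + Y m'‖ ^ 2 = 2 * ((L : ℝ) + 1) * ∑ m ∈ R, ‖Y m‖ ^ 2 := by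
    simp only [@norm_add_sq_real, Finset.sum_add_distrib, ← Finset.mul_sum, ← inner_sum, hY,
      inner_zero_right, Finset.sum_const, nsmul_eq_mul]
    rw [hR, Finset.card_range]
    push_cast
    ring
  have hsplit : ∑ m ∈ R, ∑ m' ∈ R, ‖Y m + Y m'‖ ^ 2 =
      ∑ m ∈ R, ∑ m' ∈ R, (if m < m' then ‖Y m + Y m'‖ ^ 2 else 0) +
      ∑ m ∈ R, ∑ m' ∈ R, (if m' < m then ‖Y m + Y m'‖ ^ 2 else 0) +
      ∑ m ∈ R, ∑ m' ∈ R, (if m = m' then ‖Y m + Y m'‖ ^ 2 else 0) := by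
    simp only [← Finset.sum_add_distrib]
    refine Finset.sum_congr rfl fun m _ => Finset.sum_congr rfl fun m' _ => ?_
    rcases lt_trichotomy m m' with h | h | h
    · simp [h, h.ne, h.not_gt]
    · simp [h]
    · simp [h, h.ne', h.not_gt]
  linarith

lemma sum_sum_lt_eq_sum_antidiagonal (p : ℕ → ℝ) (f : ℕ → ℕ → ℝ) (N : ℕ) :
    ∑ m ∈ Finset.range (N + 2), ∑ m' ∈ Finset.range (N + 2),
        (if m < m' then p (m' - 1 - m) * f m (N + 1 - m') else 0) =
      ∑ j ∈ Finset.range (N + 1), p (N - j) * ∑ i ∈ antidiagonal j, f i.1 i.2 := by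
  simp only [Finset.mul_sum, Finset.Nat.sum_antidiagonal_eq_sum_range_succ_mk]
  rw [← Finset.sum_product', ← Finset.sum_filter, Finset.sum_sigma']
  refine Finset.sum_bij' (i := fun i _ => (⟨N - (i.2 - 1 - i.1), i.1⟩ : (_ : ℕ) × ℕ))
    (j := fun i _ => (i.2, N + 1 - i.1 + i.2)) ?_ ?_ ?_ ?_ ?_ <;> rintro ⟨i, j⟩ hij <;>
    simp only [Finset.mem_filter, Finset.mem_range, Finset.mem_product, Finset.mem_sigma] at hij ⊢
  · lia
  · lia
  · rw [Prod.mk.injEq]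
    exact ⟨rfl, by lia⟩
  · congr 1
    lia
  · rw [show N - (N - (j - 1 - i)) = j - 1 - i by lia, show N - (j - 1 - i) - i = N + 1 - j by lia]

lemma IsExpCoeff.mul_homogeneousNormSq_eq (hb : IsExpCoeff P b) (N : ℕ) :
    N * homogeneousNormSq b (N + 1) =
      ∑ m ∈ Finset.range (N + 2), ∑ m' ∈ Finset.range (N + 2), if m < m' then
        (starRingEnd ℂ (antisymmCoeff b m (N + 1 - m) + antisymmCoeff b m' (N + 1 - m')) *
          (P (m' - 1 - m) * antisymmCoeff b m (N + 1 - m'))).re else 0 := by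
  let Y : ℕ → ℂ := fun m => antisymmCoeff b m (N + 1 - m)
  calc (N : ℝ) * homogeneousNormSq b (N + 1)
      = (∑ m ∈ Finset.range (N + 2), starRingEnd ℂ (Y m) * ((N : ℂ) * Y m)).re := by
        rw [homogeneousNormSq_eq_sum_range, Finset.mul_sum, Complex.re_sum]
        refine Finset.sum_congr rfl fun m _ => ?_
        rw [mul_left_comm, Complex.conj_mul']
        norm_cast
    _ = _ := by
        rw [Finset.sum_congr rfl fun m hm => by rw [hb.mul_antisymmCoeff_eq_sum_pairs hm]]
        simp only [mul_add, Finset.sum_add_distrib, Finset.mul_sum]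
        rw [Finset.sum_comm]
        simp only [← Finset.sum_add_distrib, Complex.re_sum]
        refine Finset.sum_congr rfl fun m _ => Finset.sum_congr rfl fun m' _ => ?_
        split_ifs
        · rw [map_add, add_mul, add_comm]
        · simp

lemma IsExpCoeff.mul_homogeneousNormSq_le (hb : IsExpCoeff P b) (N : ℕ) :
    N * homogeneousNormSq b (N + 1) ≤
      ∑ j ∈ Finset.range (N + 1), ‖P (N - j)‖ ^ 2 * homogeneousNormSq b j := by
  let Y : ℕ → ℂ := fun m => antisymmCoeff b m (N + 1 - m)
  have hpairs := sum_sum_lt_norm_add_sq (N + 1) (Y := Y) (sum_range_antisymmCoeff b (N + 1))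
  rw [← homogeneousNormSq_eq_sum_range, Nat.cast_add_one, add_sub_cancel_right] at hpairs
  have hyoung (m m' : ℕ) :
      (starRingEnd ℂ (Y m + Y m') * (P (m' - 1 - m) * antisymmCoeff b m (N + 1 - m'))).re ≤
        (1 / 2) * ‖Y m + Y m'‖ ^ 2 +
          (1 / 2) * (‖P (m' - 1 - m)‖ ^ 2 * ‖antisymmCoeff b m (N + 1 - m')‖ ^ 2) := by
    refine (Complex.re_le_norm _).trans ?_
    rw [norm_mul, norm_mul, RCLike.norm_conj]
    nlinarith [sq_nonneg (‖Y m + Y m'‖ - ‖P (m' - 1 - m)‖ * ‖antisymmCoeff b m (N + 1 - m')‖)]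
  have hle : N * homogeneousNormSq b (N + 1) ≤
      (1 / 2) * (N * homogeneousNormSq b (N + 1)) +
        (1 / 2) * ∑ j ∈ Finset.range (N + 1), ‖P (N - j)‖ ^ 2 * homogeneousNormSq b j := by
    conv_lhs => rw [hb.mul_homogeneousNormSq_eq]
    simp only [homogeneousNormSq] at hpairs ⊢
    rw [← sum_sum_lt_eq_sum_antidiagonal (fun k => ‖P k‖ ^ 2)
      (fun m n => ‖antisymmCoeff b m n‖ ^ 2), ← hpairs]
    simp only [Finset.mul_sum, ← Finset.sum_add_distrib]
    refine Finset.sum_le_sum fun m _ => Finset.sum_le_sum fun m' _ => ?_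
    split_ifs
    · exact hyoung m m'
    · simp
  linarith

lemma sum_sum_norm_mul_sub_mul_sq {ι : Type*} (s : Finset ι) (a b : ι → ℂ) :
    ∑ m ∈ s, ∑ n ∈ s, ‖a m * b n - b m * a n‖ ^ 2 =
      2 * ((∑ m ∈ s, ‖a m‖ ^ 2) * ∑ m ∈ s, ‖b m‖ ^ 2) -
        2 * ‖∑ m ∈ s, b m * starRingEnd ℂ (a m)‖ ^ 2 := by
  have hexpand (m n : ι) : ‖a m * b n - b m * a n‖ ^ 2 =
      ‖a m‖ ^ 2 * ‖b n‖ ^ 2 + ‖b m‖ ^ 2 * ‖a n‖ ^ 2 -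
        2 * ((b n * starRingEnd ℂ (a n)) * starRingEnd ℂ (b m * starRingEnd ℂ (a m))).re := by
    simp only [← Complex.normSq_eq_norm_sq, Complex.normSq_sub, map_mul, Complex.conj_conj]
    congr 3
    ring
  have hcross : ∑ m ∈ s, ∑ n ∈ s,
      ((b n * starRingEnd ℂ (a n)) * starRingEnd ℂ (b m * starRingEnd ℂ (a m))).re =
        ‖∑ m ∈ s, b m * starRingEnd ℂ (a m)‖ ^ 2 := by
    simp only [← Complex.re_sum, ← Finset.sum_mul, ← Finset.mul_sum, ← map_sum]
    rw [Complex.mul_conj']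
    norm_cast
  simp only [hexpand, Finset.sum_sub_distrib, Finset.sum_add_distrib, ← Finset.mul_sum,
    ← Finset.sum_mul, hcross]
  ring

theorem IsExpCoeff.sum_mul_sum_sub_norm_sum_sq_le (hb : IsExpCoeff P b) (hb0 : b 0 = 1) (M : ℕ) :
    (∑ m ∈ Finset.range M, ‖b m‖ ^ 2) * (∑ m ∈ Finset.range (M + 1), ‖b m‖ ^ 2) -
        ‖∑ m ∈ Finset.range M, b (m + 1) * starRingEnd ℂ (b m)‖ ^ 2 ≤
      Real.exp (∑ k ∈ Finset.range (2 * M), ‖P k‖ ^ 2 / (k + 1)) := by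
  have htriangle : ∑ n ∈ Finset.range (2 * M + 1), homogeneousNormSq b (n + 1) ≤
      2 * Real.exp (∑ k ∈ Finset.range (2 * M), ‖P k‖ ^ 2 / (k + 1)) := by
    have hfirst : homogeneousNormSq b 1 = 2 := by
      simp [homogeneousNormSq, Finset.Nat.antidiagonal_succ, antisymmCoeff, hb0,
        one_add_one_eq_two]
    rw [← hfirst]
    refine sum_le_mul_exp_of_convolution_le (C := fun n => homogeneousNormSq b (n + 1))
      (q := fun k => ‖P k‖ ^ 2) (fun _ => homogeneousNormSq_nonneg b _) (fun _ => by positivity)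
      (fun n => (hb.mul_homogeneousNormSq_le n).trans_eq ?_) (2 * M)
    rw [Finset.sum_range_succ', homogeneousNormSq_zero, mul_zero, add_zero]
    simp only [add_comm _ 1, Nat.sub_sub]
  have hsquare :
      ∑ m ∈ Finset.range (M + 1), ∑ n ∈ Finset.range (M + 1), ‖antisymmCoeff b m n‖ ^ 2 ≤
      ∑ n ∈ Finset.range (2 * M + 1), homogeneousNormSq b (n + 1) := by
    have hshift := Finset.sum_range_succ' (homogeneousNormSq b) (2 * M + 1)
    rw [homogeneousNormSq_zero, add_zero] at hshift
    rw [← hshift]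
    simp only [homogeneousNormSq]
    rw [← Finset.sum_product', sum_range_sum_antidiagonal]
    refine Finset.sum_le_sum_of_subset_of_nonneg (fun p hp => ?_) fun p _ _ => by positivity
    simp only [Finset.mem_product, Finset.mem_range, Finset.mem_filter] at hp ⊢
    lia
  have hlagrange := sum_sum_norm_mul_sub_mul_sq (Finset.range (M + 1)) (shiftCoeff b) b
  rw [Finset.sum_range_succ' (fun m => ‖shiftCoeff b m‖ ^ 2),
    Finset.sum_range_succ' (fun m => b m * starRingEnd ℂ (shiftCoeff b m))] at hlagrange
  simp only [shiftCoeff_zero, shiftCoeff_succ, norm_zero, map_zero, mul_zero, add_zero, ne_eq,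
    OfNat.ofNat_ne_zero, not_false_eq_true, zero_pow] at hlagrange
  simp only [antisymmCoeff] at hsquare
  linarith

end ExpCoeff

/-! ### Averages over the unit circle and Parseval's identity -/

section CircleAverage

lemma circleAverage_zero_one_eq {E : Type*} [NormedAddCommGroup E] [NormedSpace ℝ E] (f : ℂ → E) :
    circleAverage f 0 1 = (2 * π)⁻¹ • ∫ θ in (0 : ℝ)..(2 * π), f (bpt θ) := by
  simp only [circleAverage_def, circleMap, bpt, Complex.ofReal_one, one_mul, zero_add]

lemma bint_eq_two_pi_mul_circleAverage (f : ℂ → ℝ) : bint f = 2 * π * circleAverage f 0 1 := by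
  rw [circleAverage_zero_one_eq, smul_eq_mul, mul_inv_cancel_left₀ two_pi_pos.ne', bint]

lemma re_circleAverage {f : ℂ → ℂ} (hf : Continuous f) :
    (circleAverage f 0 1).re = circleAverage (fun z => (f z).re) 0 1 :=
  (Complex.reCLM.circleAverage_comp_comm hf.continuousOn.circleIntegrable').symm

lemma im_circleAverage {f : ℂ → ℂ} (hf : Continuous f) :
    (circleAverage f 0 1).im = circleAverage (fun z => (f z).im) 0 1 :=
  (Complex.imCLM.circleAverage_comp_comm hf.continuousOn.circleIntegrable').symm

lemma conj_circleAverage (f : ℂ → ℂ) :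
    starRingEnd ℂ (circleAverage f 0 1) = circleAverage (fun z => starRingEnd ℂ (f z)) 0 1 := by
  rw [circleAverage_zero_one_eq, circleAverage_zero_one_eq, Complex.real_smul, Complex.real_smul,
    map_mul, Complex.conj_ofReal, intervalIntegral.intervalIntegral_conj]

lemma circleAverage_const_mul (c : ℂ) (f : ℂ → ℂ) :
    circleAverage (fun z => c * f z) 0 1 = c * circleAverage f 0 1 :=
  circleAverage_fun_smul (a := c) (f := f)

lemma circleAverage_pow_mul_conj_pow (m n : ℕ) :
    circleAverage (fun z => z ^ m * starRingEnd ℂ z ^ n) 0 1 = if m = n then 1 else 0 := by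
  have hexp (θ : ℝ) : bpt θ ^ m * starRingEnd ℂ (bpt θ) ^ n =
      Complex.exp (((m : ℂ) - n) * Complex.I * θ) := by
    rw [bpt, ← Complex.exp_conj, ← Complex.exp_nat_mul, ← Complex.exp_nat_mul, ← Complex.exp_add]
    simp only [map_mul, Complex.conj_ofReal, Complex.conj_I]
    congr 1
    ring
  rw [circleAverage_zero_one_eq]
  simp only [hexp]
  split_ifs with hmn
  · subst hmn
    rw [sub_self, zero_mul]
    simp [-mul_inv_rev, pi_ne_zero]
  · have hne : ((m : ℂ) - n) * Complex.I ≠ 0 :=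
      mul_ne_zero (sub_ne_zero.2 (by exact_mod_cast hmn)) Complex.I_ne_zero
    have hperiod : Complex.exp (((m : ℂ) - n) * Complex.I * ((2 * π : ℝ) : ℂ)) = 1 :=
      Complex.exp_eq_one_iff.2 ⟨(m : ℤ) - n, by push_cast; ring⟩
    rw [integral_exp_mul_complex hne, hperiod]
    simp

lemma circleAverage_sum_pow_mul_conj_sum_pow (b c : ℕ → ℂ) (M : ℕ) :
    circleAverage (fun z => (∑ m ∈ Finset.range M, b m * z ^ m) *
        starRingEnd ℂ (∑ n ∈ Finset.range M, c n * z ^ n)) 0 1 =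
      ∑ m ∈ Finset.range M, b m * starRingEnd ℂ (c m) := by
  have hexpand (z : ℂ) : (∑ m ∈ Finset.range M, b m * z ^ m) *
      starRingEnd ℂ (∑ n ∈ Finset.range M, c n * z ^ n) =
        ∑ m ∈ Finset.range M, ∑ n ∈ Finset.range M,
          (b m * starRingEnd ℂ (c n)) * (z ^ m * starRingEnd ℂ z ^ n) := by
    rw [map_sum, Finset.sum_mul_sum]
    refine Finset.sum_congr rfl fun m _ => Finset.sum_congr rfl fun n _ => ?_
    rw [map_mul, map_pow]
    ring
  have := Complex.continuous_conj
  simp only [hexpand]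
  rw [circleAverage_fun_sum fun m _ => Continuous.continuousOn (by fun_prop) |>.circleIntegrable']
  refine Finset.sum_congr rfl fun m hm => ?_
  rw [circleAverage_fun_sum fun n _ => Continuous.continuousOn (by fun_prop) |>.circleIntegrable']
  simp only [circleAverage_const_mul, circleAverage_pow_mul_conj_pow, mul_ite, mul_one, mul_zero,
    Finset.sum_ite_eq, hm, if_true]

lemma tendsto_circleAverage_of_bounded {F : ℕ → ℂ → ℂ} {G : ℂ → ℂ} {B : ℝ}
    (hF : ∀ n, Continuous (F n)) (hB : ∀ n z, ‖z‖ = 1 → ‖F n z‖ ≤ B)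
    (hlim : ∀ z, ‖z‖ = 1 → Tendsto (fun n => F n z) atTop (nhds (G z))) :
    Tendsto (fun n => circleAverage (F n) 0 1) atTop (nhds (circleAverage G 0 1)) := by
  simp only [circleAverage_zero_one_eq]
  refine Tendsto.const_smul ?_ _
  refine intervalIntegral.tendsto_integral_filter_of_dominated_convergence (fun _ => B) ?_ ?_ ?_ ?_
  · exact Eventually.of_forall fun n => ((hF n).comp continuous_bpt).aestronglyMeasurable
  · exact Eventually.of_forall fun n => Eventually.of_forall fun θ _ => hB n _ (norm_bpt θ)
  · exact intervalIntegrable_const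
  · exact Eventually.of_forall fun θ _ => hlim _ (norm_bpt θ)

lemma norm_sum_mul_pow_le_tsum {b : ℕ → ℂ} (hb : Summable fun n => ‖b n‖) {z : ℂ} (hz : ‖z‖ = 1)
    (M : ℕ) : ‖∑ m ∈ Finset.range M, b m * z ^ m‖ ≤ ∑' n, ‖b n‖ := by
  refine (norm_sum_le _ _).trans ?_
  simp only [norm_mul, norm_pow, hz, one_pow, mul_one]
  exact hb.sum_le_tsum _ fun _ _ => norm_nonneg _

theorem tendsto_sum_mul_conj_circleAverage {b c : ℕ → ℂ} {f g : ℂ → ℂ}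
    (hb : ∀ z, ‖z‖ = 1 → HasSum (fun n => b n * z ^ n) (f z))
    (hc : ∀ z, ‖z‖ = 1 → HasSum (fun n => c n * z ^ n) (g z)) :
    Tendsto (fun M => ∑ m ∈ Finset.range M, b m * starRingEnd ℂ (c m)) atTop
      (nhds (circleAverage (fun z => f z * starRingEnd ℂ (g z)) 0 1)) := by
  have hbs : Summable fun n => ‖b n‖ :=
    summable_norm_iff.2 (by simpa using (hb 1 norm_one).summable)
  have hcs : Summable fun n => ‖c n‖ :=
    summable_norm_iff.2 (by simpa using (hc 1 norm_one).summable)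
  have hconj : Continuous (starRingEnd ℂ) := Complex.continuous_conj
  simp only [← circleAverage_sum_pow_mul_conj_sum_pow]
  refine tendsto_circleAverage_of_bounded (B := (∑' n, ‖b n‖) * ∑' n, ‖c n‖)
    (fun M => by fun_prop) (fun M z hz => ?_) fun z hz => ?_
  · rw [norm_mul, RCLike.norm_conj]
    exact mul_le_mul (norm_sum_mul_pow_le_tsum hbs hz M) (norm_sum_mul_pow_le_tsum hcs hz M)
      (norm_nonneg _) (tsum_nonneg fun _ => norm_nonneg _)
  · exact (hb z hz).tendsto_sum_nat.mul ((hconj.tendsto _).comp (hc z hz).tendsto_sum_nat)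

end CircleAverage

section TaylorCoeff

/-- The `n`-th Taylor coefficient of `f` at the origin. -/
def taylorCoeff (f : ℂ → ℂ) (n : ℕ) : ℂ := iteratedDeriv n f 0 / (n.factorial : ℂ)

variable {f : ℂ → ℂ}

lemma hasSum_taylorCoeff (hf : Differentiable ℂ f) (z : ℂ) :
    HasSum (fun n => taylorCoeff f n * z ^ n) (f z) := by
  refine (Complex.hasSum_taylorSeries_of_entire hf 0 z).congr_fun fun n => ?_
  simp only [taylorCoeff, sub_zero, smul_eq_mul]
  ring

lemma taylorCoeff_deriv (f : ℂ → ℂ) (n : ℕ) :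
    taylorCoeff (deriv f) n = (n + 1) * taylorCoeff f (n + 1) := by
  have hne : (n : ℂ) + 1 ≠ 0 := by exact_mod_cast n.succ_ne_zero
  rw [taylorCoeff, taylorCoeff, iteratedDeriv_succ', Nat.factorial_succ]
  push_cast
  field_simp

lemma taylorCoeff_mul {g : ℂ → ℂ} {n : ℕ} (hf : ContDiffAt ℂ n f 0) (hg : ContDiffAt ℂ n g 0) :
    taylorCoeff (fun z => f z * g z) n =
      ∑ i ∈ Finset.range (n + 1), taylorCoeff f i * taylorCoeff g (n - i) := by
  rw [taylorCoeff, iteratedDeriv_fun_mul hf hg, Finset.sum_div]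
  refine Finset.sum_congr rfl fun i hi => ?_
  have hin : i ≤ n := Nat.lt_succ_iff.1 (Finset.mem_range.1 hi)
  rw [taylorCoeff, taylorCoeff, Nat.cast_choose ℂ hin]
  have hn : (n.factorial : ℂ) ≠ 0 := by exact_mod_cast n.factorial_ne_zero
  field_simp

lemma isExpCoeff_taylorCoeff (hf : Differentiable ℂ f) :
    IsExpCoeff (taylorCoeff (deriv f)) (taylorCoeff fun z => Complex.exp (f z)) := by
  rintro (_ | n)
  · simp
  have hderiv : deriv (fun z => Complex.exp (f z)) = fun z => Complex.exp (f z) * deriv f z :=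
    funext fun z => (hf z).hasDerivAt.cexp.deriv
  push_cast
  rw [← taylorCoeff_deriv, hderiv, taylorCoeff_mul hf.cexp.contDiff.contDiffAt
    hf.contDiff.deriv'.contDiffAt]
  exact Finset.sum_congr rfl fun i _ => mul_comm _ _

lemma taylorCoeff_sum_pow (a : ℕ → ℂ) (s : Finset ℕ) (n : ℕ) :
    taylorCoeff (fun z => ∑ k ∈ s, a k * z ^ k) n = if n ∈ s then a n else 0 := by
  rw [taylorCoeff, iteratedDeriv_fun_sum fun k _ => by fun_prop]
  simp only [iteratedDeriv_const_mul_field, iteratedDeriv_fun_pow_zero, Nat.cast_ite, mul_ite,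
    Nat.cast_zero, mul_zero, Finset.sum_ite_eq]
  split_ifs
  · exact mul_div_cancel_right₀ _ (by exact_mod_cast n.factorial_ne_zero)
  · exact zero_div _

lemma cexp_mul_conj_cexp (w : ℂ) :
    Complex.exp w * starRingEnd ℂ (Complex.exp w) = (Real.exp (2 * w.re) : ℝ) := by
  rw [Complex.mul_conj', Complex.norm_exp, ← Complex.ofReal_pow, ← Real.exp_nat_mul, Nat.cast_ofNat]

lemma tendsto_sum_norm_taylorCoeff_cexp_sq (hf : Differentiable ℂ f) :
    Tendsto (fun M => ∑ m ∈ Finset.range M, ‖taylorCoeff (fun z => Complex.exp (f z)) m‖ ^ 2) atTop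
      (nhds (circleAverage (fun z => Real.exp (2 * (f z).re)) 0 1)) := by
  have hsum (z : ℂ) (_ : ‖z‖ = 1) := hasSum_taylorCoeff hf.cexp z
  have hlim := (Complex.continuous_re.tendsto _).comp (tendsto_sum_mul_conj_circleAverage hsum hsum)
  simp only [cexp_mul_conj_cexp] at hlim
  have hcont := hf.continuous
  rw [re_circleAverage (by fun_prop)] at hlim
  refine hlim.congr fun M => ?_
  simp only [Function.comp_apply, Complex.mul_conj', ← Complex.ofReal_pow, ← Complex.ofReal_sum,
    Complex.ofReal_re]

lemma tendsto_sum_taylorCoeff_cexp_mul_conj (hf : Differentiable ℂ f) :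
    Tendsto (fun M => ∑ m ∈ Finset.range M, taylorCoeff (fun z => Complex.exp (f z)) (m + 1) *
        starRingEnd ℂ (taylorCoeff (fun z => Complex.exp (f z)) m)) atTop
      (nhds (circleAverage (fun z => starRingEnd ℂ z * (Real.exp (2 * (f z).re) : ℝ)) 0 1)) := by
  set b := taylorCoeff fun z => Complex.exp (f z)
  have hsum (z : ℂ) (_ : ‖z‖ = 1) : HasSum (fun n => b n * z ^ n) (Complex.exp (f z)) :=
    hasSum_taylorCoeff hf.cexp z
  have hshift (z : ℂ) (hz : ‖z‖ = 1) :
      HasSum (fun n => shiftCoeff b n * z ^ n) (z * Complex.exp (f z)) := by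
    rw [← hasSum_nat_add_iff' 1]
    simpa [pow_succ', mul_left_comm] using (hsum z hz).mul_left z
  have hlim := (tendsto_sum_mul_conj_circleAverage hsum hshift).comp (tendsto_add_atTop_nat 1)
  have hlimit (z : ℂ) : Complex.exp (f z) * starRingEnd ℂ (z * Complex.exp (f z)) =
      starRingEnd ℂ z * (Real.exp (2 * (f z).re) : ℝ) := by
    rw [← cexp_mul_conj_cexp, map_mul]
    ring
  simp only [hlimit] at hlim
  refine hlim.congr fun M => ?_
  simp [Finset.sum_range_succ']

variable {S : ℝ}

theorem circleAverage_exp_two_mul_re_le (hf : Differentiable ℂ f) (hf0 : f 0 = 0)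
    (hS : ∀ M, ∑ k ∈ Finset.range M, ‖taylorCoeff (deriv f) k‖ ^ 2 / (k + 1) ≤ S) :
    circleAverage (fun z => Real.exp (2 * (f z).re)) 0 1 ≤ Real.exp S := by
  refine le_of_tendsto'
    ((tendsto_sum_norm_taylorCoeff_cexp_sq hf).comp (tendsto_add_atTop_nat 1)) fun M => ?_
  have hbound := (isExpCoeff_taylorCoeff hf).sum_norm_sq_le M
  have hzero : taylorCoeff (fun z => Complex.exp (f z)) 0 = 1 := by simp [taylorCoeff, hf0]
  rw [hzero, norm_one, one_pow, one_mul] at hbound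
  exact hbound.trans (Real.exp_le_exp.2 (hS M))

theorem circleAverage_exp_two_mul_re_sq_sub_le (hf : Differentiable ℂ f) (hf0 : f 0 = 0)
    (hS : ∀ M, ∑ k ∈ Finset.range M, ‖taylorCoeff (deriv f) k‖ ^ 2 / (k + 1) ≤ S) :
    circleAverage (fun z => Real.exp (2 * (f z).re)) 0 1 ^ 2 -
      ‖circleAverage (fun z => starRingEnd ℂ z * (Real.exp (2 * (f z).re) : ℝ)) 0 1‖ ^ 2 ≤
        Real.exp S := by
  have hmass := tendsto_sum_norm_taylorCoeff_cexp_sq hf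
  have hmass' := hmass.comp (tendsto_add_atTop_nat 1)
  have hcenter := (tendsto_sum_taylorCoeff_cexp_mul_conj hf).norm.pow 2
  rw [sq]
  refine le_of_tendsto' ((hmass.mul hmass').sub hcenter) fun M => ?_
  exact ((isExpCoeff_taylorCoeff hf).sum_mul_sum_sub_norm_sum_sq_le
    (by simp [taylorCoeff, hf0]) M).trans (Real.exp_le_exp.2 (hS _))

end TaylorCoeff

/-! ### Fourier coefficients of boundary values and the Dirichlet energy -/

section BoundaryCoeff

lemma continuous_pd {v : ℂ → ℝ} (hv : ContDiff ℝ 1 v) (w : ℂ) : Continuous (pd v w) :=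
  continuousOn_univ.1 (continuousOn_pd (fun _ _ => hv.contDiffAt) w)

lemma continuous_gradSq {v : ℂ → ℝ} (hv : ContDiff ℝ 1 v) : Continuous (gradSq v) :=
  ((continuous_pd hv 1).pow 2).add ((continuous_pd hv Complex.I).pow 2)

lemma integrableOn_unitDisk_of_continuousOn {f : ℂ → ℝ}
    (hf : ContinuousOn f (Metric.closedBall 0 1)) : IntegrableOn f unitDisk :=
  (hf.integrableOn_compact (isCompact_closedBall 0 1)).mono_set Metric.ball_subset_closedBall

lemma integrableOn_unitDisk_of_continuous {f : ℂ → ℝ} (hf : Continuous f) :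
    IntegrableOn f unitDisk :=
  integrableOn_unitDisk_of_continuousOn hf.continuousOn

lemma pd_re {f : ℂ → ℂ} {x : ℂ} (hf : DifferentiableAt ℂ f x) (w : ℂ) :
    pd (fun z => (f z).re) w x = (w * deriv f x).re := by
  have hre : HasFDerivAt (fun z => (f z).re) _ x :=
    Complex.reCLM.hasFDerivAt.comp x (hf.hasDerivAt.hasFDerivAt.restrictScalars ℝ)
  simp [pd, hre.fderiv]

lemma pd_im {f : ℂ → ℂ} {x : ℂ} (hf : DifferentiableAt ℂ f x) (w : ℂ) :
    pd (fun z => (f z).im) w x = (w * deriv f x).im := by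
  have him : HasFDerivAt (fun z => (f z).im) _ x :=
    Complex.imCLM.hasFDerivAt.comp x (hf.hasDerivAt.hasFDerivAt.restrictScalars ℝ)
  simp [pd, him.fderiv]

lemma pd_mul {u v : ℂ → ℝ} {x : ℂ} (hu : DifferentiableAt ℝ u x) (hv : DifferentiableAt ℝ v x)
    (w : ℂ) : pd (fun z => u z * v z) w x = u x * pd v w x + v x * pd u w x := by
  simp [pd, fderiv_fun_mul hu hv]

-- By the Cauchy–Riemann equations `(Re g, -Im g)` is divergence free, so only `∇v` survives.
lemma setIntegral_pd_mul_re_sub_pd_mul_im {v : ℂ → ℝ} (hv : ContDiff ℝ 1 v) {g : ℂ → ℂ}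
    (hg : Differentiable ℂ g) :
    ∫ x in unitDisk, (pd v 1 x * (g x).re - pd v Complex.I x * (g x).im) =
      bint fun x => v x * (x * g x).re := by
  have hgc : ContDiff ℝ 1 g := hg.contDiff.restrict_scalars ℝ
  have hre : ContDiff ℝ 1 fun x => (g x).re := Complex.reCLM.contDiff.comp hgc
  have him : ContDiff ℝ 1 fun x => (g x).im := Complex.imCLM.contDiff.comp hgc
  have hneg : ContDiff ℝ 1 fun x => -(g x).im := him.neg
  have hdiv := setIntegral_unitDisk_divergence (X := fun x => v x * (g x).re)
    (Y := fun x => v x * -(g x).im) (fun x _ => (hv.mul hre).contDiffAt)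
    fun x _ => (hv.mul hneg).contDiffAt
  have hboundary : (fun x => v x * (x * g x).re) =
      fun x : ℂ => x.re * (v x * (g x).re) + x.im * (v x * -(g x).im) := by
    funext x
    rw [Complex.mul_re]
    ring
  rw [hboundary, ← hdiv]
  congr 1
  funext x
  have hvx := hv.differentiable one_ne_zero x
  have hpdneg : pd (fun z => -(g z).im) Complex.I x = -(deriv g x).re := by
    have := pd_im (hg x) Complex.I
    simp only [pd, fderiv_fun_neg] at this ⊢
    simp [this]
  rw [pd_mul hvx (hre.differentiable one_ne_zero x), pd_mul hvx (hneg.differentiable one_ne_zero x),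
    pd_re (hg x), hpdneg, one_mul]
  ring

lemma bint_two_mul_sub_re_mul_le {v : ℂ → ℝ} (hv : ContDiff ℝ 1 v) {f : ℂ → ℂ}
    (hf : Differentiable ℂ f) :
    bint (fun x => (2 * v x - (f x).re) * (x * deriv f x).re) ≤ ∫ x in unitDisk, gradSq v x := by
  have hre : ContDiff ℝ 1 fun x => (f x).re :=
    Complex.reCLM.contDiff.comp (hf.contDiff.restrict_scalars ℝ)
  have hdf : Differentiable ℂ (deriv f) :=
    (ContDiff.deriv' (n := 1) hf.contDiff).differentiable one_ne_zero
  have hw : ContDiff ℝ 1 fun x => 2 * v x - (f x).re := (contDiff_const.mul hv).sub hre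
  rw [← setIntegral_pd_mul_re_sub_pd_mul_im hw hdf]
  have hpd (w x : ℂ) :
      pd (fun x => 2 * v x - (f x).re) w x = 2 * pd v w x - (w * deriv f x).re := by
    rw [← pd_re (hf x), pd, fderiv_fun_sub ((hv.differentiable one_ne_zero x).const_mul 2)
      (hre.differentiable one_ne_zero x), fderiv_const_mul (hv.differentiable one_ne_zero x)]
    rfl
  have hcont := hdf.continuous
  have hcont₁ := continuous_pd hw 1
  have hcontI := continuous_pd hw Complex.I
  refine integral_mono (integrableOn_unitDisk_of_continuous (by fun_prop))
    (integrableOn_unitDisk_of_continuous (continuous_gradSq hv)) fun x => ?_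
  simp only [hpd, gradSq, one_mul, Complex.I_mul_re]
  nlinarith [sq_nonneg (pd v 1 x - (deriv f x).re), sq_nonneg (pd v Complex.I x + (deriv f x).im)]

/-- The `k`-th Fourier coefficient of the boundary values of `v`. Since `v` is real, the
coefficient of index `-k` is the conjugate of this one. -/
def boundaryCoeff (v : ℂ → ℝ) (k : ℕ) : ℂ :=
  circleAverage (fun z => (v z : ℂ) * starRingEnd ℂ z ^ k) 0 1

lemma re_boundaryCoeff_zero {v : ℂ → ℝ} (hv : Continuous v) :
    (boundaryCoeff v 0).re = bint v / (2 * π) := by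
  rw [bint_eq_two_pi_mul_circleAverage, mul_div_cancel_left₀ _ two_pi_pos.ne', boundaryCoeff,
    re_circleAverage (by fun_prop)]
  simp

lemma circleAverage_mul_pow (v : ℂ → ℝ) (k : ℕ) :
    circleAverage (fun z => (v z : ℂ) * z ^ k) 0 1 = starRingEnd ℂ (boundaryCoeff v k) := by
  simp [boundaryCoeff, conj_circleAverage]

lemma boundaryCoeff_two_mul_sub {v w : ℂ → ℝ} (hv : Continuous v) (hw : Continuous w) (k : ℕ) :
    boundaryCoeff (fun z => 2 * v z - w z) k = 2 * boundaryCoeff v k - boundaryCoeff w k := by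
  have := Complex.continuous_conj
  rw [boundaryCoeff, boundaryCoeff, boundaryCoeff, ← circleAverage_const_mul,
    ← circleAverage_fun_sub (Continuous.continuousOn (by fun_prop)).circleIntegrable'
      (Continuous.continuousOn (by fun_prop)).circleIntegrable']
  congr 1
  funext z
  push_cast
  ring

lemma boundaryCoeff_re_sum_pow {s : Finset ℕ} (hs : 0 ∉ s) (c : ℕ → ℂ) {k : ℕ} (hk : k ∈ s) :
    boundaryCoeff (fun z => (∑ j ∈ s, c j * z ^ j).re) k = c k / 2 := by
  have hexpand (z : ℂ) : (((∑ j ∈ s, c j * z ^ j).re : ℝ) : ℂ) * starRingEnd ℂ z ^ k =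
      ∑ j ∈ s, (c j / 2 * (z ^ j * starRingEnd ℂ z ^ k) +
        starRingEnd ℂ (c j) / 2 * (z ^ 0 * starRingEnd ℂ z ^ (j + k))) := by
    rw [Complex.re_eq_add_conj, map_sum, ← Finset.sum_add_distrib, Finset.sum_div, Finset.sum_mul]
    refine Finset.sum_congr rfl fun j _ => ?_
    rw [map_mul, map_pow]
    ring
  have hconj := Complex.continuous_conj
  have hterm (j : ℕ) : circleAverage (fun z => c j / 2 * (z ^ j * starRingEnd ℂ z ^ k) +
      starRingEnd ℂ (c j) / 2 * (z ^ 0 * starRingEnd ℂ z ^ (j + k))) 0 1 =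
        if j = k then c j / 2 else 0 := by
    have hjk : 0 ≠ j + k := fun h => hs (by rwa [show k = 0 by lia] at hk)
    rw [circleAverage_fun_add (Continuous.continuousOn (by fun_prop)).circleIntegrable'
        (Continuous.continuousOn (by fun_prop)).circleIntegrable', circleAverage_const_mul,
      circleAverage_const_mul, circleAverage_pow_mul_conj_pow, circleAverage_pow_mul_conj_pow,
      if_neg hjk]
    simp
  simp only [boundaryCoeff, hexpand]
  rw [circleAverage_fun_sum fun j _ => Continuous.continuousOn (by fun_prop) |>.circleIntegrable']
  simp only [hterm, Finset.sum_ite_eq', hk, if_true]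

lemma circleAverage_mul_re_sum_pow {v : ℂ → ℝ} (hv : Continuous v) (s : Finset ℕ) (c : ℕ → ℂ) :
    circleAverage (fun z => v z * (∑ k ∈ s, c k * z ^ k).re) 0 1 =
      ∑ k ∈ s, (c k * starRingEnd ℂ (boundaryCoeff v k)).re := by
  have hexpand (z : ℂ) :
      v z * (∑ k ∈ s, c k * z ^ k).re = (∑ k ∈ s, c k * ((v z : ℂ) * z ^ k)).re := by
    rw [← Complex.re_ofReal_mul, Finset.mul_sum]
    simp only [mul_left_comm]
  simp only [hexpand]
  rw [← re_circleAverage (by fun_prop), circleAverage_fun_sum fun k _ =>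
    Continuous.continuousOn (by fun_prop) |>.circleIntegrable', Complex.re_sum]
  simp only [circleAverage_const_mul, circleAverage_mul_pow]

lemma mul_deriv_sum_pow (s : Finset ℕ) (c : ℕ → ℂ) (z : ℂ) :
    z * deriv (fun z => ∑ k ∈ s, c k * z ^ k) z = ∑ k ∈ s, k * c k * z ^ k := by
  have hderiv : HasDerivAt (fun z => ∑ k ∈ s, c k * z ^ k)
      (∑ k ∈ s, c k * (k * z ^ (k - 1))) z :=
    HasDerivAt.fun_sum fun k _ => (hasDerivAt_pow k z).const_mul _
  rw [hderiv.deriv, Finset.mul_sum]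
  refine Finset.sum_congr rfl fun k _ => ?_
  rcases k with _ | k
  · simp
  · rw [Nat.add_sub_cancel, pow_succ]
    ring

-- Bessel's inequality in the Dirichlet space: compare `v` with the harmonic polynomial
-- whose boundary coefficients of index in `s` are those of `v`.
theorem sum_mul_norm_boundaryCoeff_sq_le {v : ℂ → ℝ} (hv : ContDiff ℝ 1 v) {s : Finset ℕ}
    (hs : 0 ∉ s) :
    ∑ k ∈ s, k * ‖boundaryCoeff v k‖ ^ 2 ≤ (∫ x in unitDisk, gradSq v x) / (4 * π) := by
  set c : ℕ → ℂ := fun k => 2 * boundaryCoeff v k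
  have hle := bint_two_mul_sub_re_mul_le hv
    (f := fun z => ∑ k ∈ s, c k * z ^ k) (by fun_prop)
  have hcoeff {k : ℕ} (hk : k ∈ s) :
      boundaryCoeff (fun z => 2 * v z - (∑ k ∈ s, c k * z ^ k).re) k = boundaryCoeff v k := by
    rw [boundaryCoeff_two_mul_sub hv.continuous (by fun_prop), boundaryCoeff_re_sum_pow hs c hk]
    simp only [c]
    ring
  have hcont := hv.continuous
  simp only [mul_deriv_sum_pow] at hle
  rw [bint_eq_two_pi_mul_circleAverage, circleAverage_mul_re_sum_pow (by fun_prop),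
    Finset.sum_congr rfl fun k hk => by rw [hcoeff hk]] at hle
  rw [le_div_iff₀ (by positivity)]
  refine le_of_eq_of_le ?_ hle
  rw [Finset.sum_mul, Finset.mul_sum]
  refine Finset.sum_congr rfl fun k _ => ?_
  have hre : (k * c k * starRingEnd ℂ (boundaryCoeff v k)).re =
      2 * k * ‖boundaryCoeff v k‖ ^ 2 := by
    rw [show k * c k * starRingEnd ℂ (boundaryCoeff v k) =
        ((2 * k : ℝ) : ℂ) * (boundaryCoeff v k * starRingEnd ℂ (boundaryCoeff v k)) by
      simp only [c]; push_cast; ring, Complex.mul_conj', ← Complex.ofReal_pow,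
      ← Complex.ofReal_mul, Complex.ofReal_re]
  rw [hre]
  ring

end BoundaryCoeff

/-! ### The Lebedev–Milin and Szegő inequalities on the disk -/

section FourierSeries

lemma norm_fourierCoeffOn_eq_of_hasDerivAt {a b : ℝ} (hab : a < b) {φ ψ : ℝ → ℂ}
    (hφ : ∀ θ, HasDerivAt φ (ψ θ) θ) (hψ : Continuous ψ) (hper : φ b = φ a) {n : ℤ} (hn : n ≠ 0) :
    ‖fourierCoeffOn hab φ n‖ = (b - a) / (2 * π) * (|(n : ℝ)|⁻¹ * ‖fourierCoeffOn hab ψ n‖) := by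
  rw [fourierCoeffOn_of_hasDerivAt hab hn (fun θ _ => hφ θ) (hψ.intervalIntegrable _ _), hper,
    sub_self, mul_zero, zero_sub, norm_mul, norm_neg, norm_mul, ← Complex.ofReal_sub,
    Complex.norm_real, Real.norm_of_nonneg (sub_pos.2 hab).le]
  simp only [norm_div, norm_mul, norm_neg, Complex.norm_I, Complex.norm_intCast, Complex.norm_real,
    Complex.norm_ofNat, norm_one, mul_one, Real.norm_of_nonneg pi_pos.le]
  field_simp

lemma summable_norm_fourierCoeffOn_of_hasDerivAt {a b : ℝ} (hab : a < b) {φ ψ : ℝ → ℂ}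
    (hφ : ∀ θ, HasDerivAt φ (ψ θ) θ) (hψ : Continuous ψ) (hper : φ b = φ a) :
    Summable fun n => ‖fourierCoeffOn hab φ n‖ := by
  have hbound : MemLp ψ 2 (volume.restrict (Set.Ioc a b)) := by
    obtain ⟨C, hC⟩ :=
      isCompact_Icc.exists_bound_of_continuousOn (hψ.continuousOn (s := Set.Icc a b))
    refine MemLp.of_bound hψ.aestronglyMeasurable C ?_
    filter_upwards [ae_restrict_mem measurableSet_Ioc] with θ hθ
    exact hC θ (Set.Ioc_subset_Icc_self hθ)
  have hsq : Summable fun n : ℤ => ‖fourierCoeffOn hab ψ n‖ ^ 2 :=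
    (hasSum_sq_fourierCoeffOn hab hbound).summable
  have hinv : Summable fun n : ℤ => 1 / (n : ℝ) ^ 2 := Real.summable_one_div_int_pow.2 one_lt_two
  refine Summable.of_norm_bounded_eventually ((hinv.add hsq).mul_left ((b - a) / (2 * π))) ?_
  have hne : ∀ᶠ n : ℤ in cofinite, n ≠ 0 :=
    (Set.finite_singleton 0).eventually_cofinite_notMem
  filter_upwards [hne] with n hn
  rw [norm_norm, norm_fourierCoeffOn_eq_of_hasDerivAt hab hφ hψ hper hn]
  have : 0 ≤ b - a := (sub_pos.2 hab).le
  gcongr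
  have hamgm := two_mul_le_add_sq |(n : ℝ)|⁻¹ ‖fourierCoeffOn hab ψ n‖
  have hnonneg : 0 ≤ |(n : ℝ)|⁻¹ * ‖fourierCoeffOn hab ψ n‖ := by positivity
  rw [inv_pow, sq_abs] at hamgm
  rw [one_div]
  linarith

instance fact_two_pi_pos : Fact (0 < 2 * π) := ⟨two_pi_pos⟩

lemma fourier_two_pi_natCast (k : ℕ) (θ : ℝ) :
    fourier (k : ℤ) (θ : AddCircle (2 * π)) = bpt θ ^ k := by
  have hpi : (π : ℂ) ≠ 0 := by exact_mod_cast pi_ne_zero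
  rw [fourier_coe_apply, bpt, ← Complex.exp_nat_mul]
  congr 1
  push_cast
  field_simp

lemma exists_bpt_eq {z : ℂ} (hz : ‖z‖ = 1) : ∃ θ, bpt θ = z :=
  ⟨z.arg, by simpa [hz, bpt] using Complex.norm_mul_exp_arg_mul_I z⟩

variable {v : ℂ → ℝ}

/-- The restriction of `v` to the unit circle, as a function on `ℝ / 2πℤ`. -/
def boundaryMap (hv : Continuous v) : C(AddCircle (2 * π), ℂ) where
  toFun x := v (AddCircle.toCircle x)
  continuous_toFun := Complex.continuous_ofReal.comp
    (hv.comp (continuous_subtype_val.comp AddCircle.continuous_toCircle))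

lemma boundaryMap_coe (hv : Continuous v) (θ : ℝ) :
    boundaryMap hv (θ : AddCircle (2 * π)) = v (bpt θ) := by
  simp [boundaryMap, AddCircle.toCircle_apply_mk, Circle.coe_exp, bpt, two_pi_pos.ne']

lemma fourierCoeff_boundaryMap_natCast (hv : Continuous v) (k : ℕ) :
    fourierCoeff (boundaryMap hv) k = boundaryCoeff v k := by
  rw [fourierCoeff_eq_intervalIntegral _ _ 0, boundaryCoeff, circleAverage_zero_one_eq, zero_add,
    one_div]
  simp only [fourier_neg, fourier_two_pi_natCast, boundaryMap_coe, smul_eq_mul, map_pow, mul_comm]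

lemma fourierCoeff_boundaryMap_neg_natCast (hv : Continuous v) (k : ℕ) :
    fourierCoeff (boundaryMap hv) (-k) = starRingEnd ℂ (boundaryCoeff v k) := by
  rw [fourierCoeff_eq_intervalIntegral _ _ 0, ← circleAverage_mul_pow, circleAverage_zero_one_eq,
    zero_add, one_div]
  simp only [neg_neg, fourier_two_pi_natCast, boundaryMap_coe, smul_eq_mul, mul_comm]

lemma summable_norm_fourierCoeff_boundaryMap (hv : ContDiff ℝ 1 v) :
    Summable fun n => ‖fourierCoeff (boundaryMap hv.continuous) n‖ := by
  have hcoeff (n : ℤ) : fourierCoeff (boundaryMap hv.continuous) n =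
      fourierCoeffOn two_pi_pos (fun θ => (v (bpt θ) : ℂ)) n := by
    rw [fourierCoeff_eq_intervalIntegral _ _ 0, fourierCoeffOn_eq_integral, zero_add, sub_zero]
    simp only [boundaryMap_coe]
  have hderiv (θ : ℝ) : HasDerivAt (fun θ => (v (bpt θ) : ℂ))
      (fderiv ℝ v (bpt θ) (bpt θ * Complex.I) : ℝ) θ :=
    ((hv.differentiable one_ne_zero _).hasFDerivAt.comp_hasDerivAt θ
      (hasDerivAt_bpt θ)).ofReal_comp
  have hcont : Continuous fun θ => ((fderiv ℝ v (bpt θ) (bpt θ * Complex.I) : ℝ) : ℂ) :=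
    Complex.continuous_ofReal.comp (((hv.continuous_fderiv one_ne_zero).comp
      continuous_bpt).clm_apply (continuous_bpt.mul continuous_const))
  simp only [hcoeff]
  exact summable_norm_fourierCoeffOn_of_hasDerivAt two_pi_pos hderiv hcont
    (by rw [← zero_add (2 * π), periodic_bpt])

lemma summable_norm_boundaryCoeff (hv : ContDiff ℝ 1 v) :
    Summable fun k => ‖boundaryCoeff v k‖ := by
  simpa [Function.comp_def, fourierCoeff_boundaryMap_natCast] using
    (summable_norm_fourierCoeff_boundaryMap hv).comp_injective Nat.cast_injective

lemma hasSum_two_mul_re_boundaryCoeff (hv : ContDiff ℝ 1 v) {z : ℂ} (hz : ‖z‖ = 1) :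
    HasSum (fun k => 2 * (boundaryCoeff v k * z ^ k).re) (v z + (boundaryCoeff v 0).re) := by
  obtain ⟨θ, rfl⟩ := exists_bpt_eq hz
  have hsum := (has_pointwise_sum_fourier_series_of_summable
    (summable_norm_fourierCoeff_boundaryMap hv).of_norm (θ : AddCircle (2 * π))).nat_add_neg
  have hzero := fourierCoeff_boundaryMap_natCast hv.continuous 0
  rw [Nat.cast_zero] at hzero
  rw [hzero, fourier_zero, boundaryMap_coe] at hsum
  simp only [fourierCoeff_boundaryMap_natCast, fourierCoeff_boundaryMap_neg_natCast, fourier_neg,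
    fourier_two_pi_natCast, smul_eq_mul, mul_one, ← map_mul, Complex.add_conj] at hsum
  simpa using Complex.hasSum_re hsum

end FourierSeries

section LebedevMilin

/-- The `N`-th partial sum of the holomorphic function whose doubled real part is, up to the
mean value of `v` on the circle, the harmonic extension of the boundary values of `v`. -/
def analyticPart (v : ℂ → ℝ) (N : ℕ) (z : ℂ) : ℂ :=
  ∑ k ∈ Finset.Ico 1 N, boundaryCoeff v k * z ^ k

variable {v : ℂ → ℝ}

lemma differentiable_analyticPart (v : ℂ → ℝ) (N : ℕ) : Differentiable ℂ (analyticPart v N) := by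
  unfold analyticPart
  fun_prop

lemma analyticPart_zero (v : ℂ → ℝ) (N : ℕ) : analyticPart v N 0 = 0 :=
  Finset.sum_eq_zero fun k hk => by
    rw [zero_pow (Nat.one_le_iff_ne_zero.1 (Finset.mem_Ico.1 hk).1), mul_zero]

lemma tendsto_two_mul_re_analyticPart (hv : ContDiff ℝ 1 v) {z : ℂ} (hz : ‖z‖ = 1) :
    Tendsto (fun N => 2 * (analyticPart v N z).re) atTop
      (nhds (v z - bint v / (2 * π))) := by
  have hlim := (hasSum_two_mul_re_boundaryCoeff hv hz).tendsto_sum_nat.sub_const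
    (2 * (boundaryCoeff v 0).re)
  rw [show v z + (boundaryCoeff v 0).re - 2 * (boundaryCoeff v 0).re =
    v z - (boundaryCoeff v 0).re by ring, re_boundaryCoeff_zero hv.continuous] at hlim
  refine hlim.congr' ((eventually_ge_atTop 1).mono fun N hN => ?_)
  simp only [analyticPart, Complex.re_sum, Finset.mul_sum, Finset.sum_Ico_eq_sub _ hN,
    Finset.sum_range_one, pow_zero, mul_one, Complex.sub_re, mul_sub,
    re_boundaryCoeff_zero hv.continuous]

lemma norm_analyticPart_le (hv : ContDiff ℝ 1 v) {z : ℂ} (hz : ‖z‖ = 1) (N : ℕ) :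
    ‖analyticPart v N z‖ ≤ ∑' k, ‖boundaryCoeff v k‖ := by
  refine (norm_sum_le _ _).trans ?_
  simp only [norm_mul, norm_pow, hz, one_pow, mul_one]
  exact (summable_norm_boundaryCoeff hv).sum_le_tsum _ fun _ _ => norm_nonneg _

lemma tendsto_circleAverage_mul_exp_analyticPart (hv : ContDiff ℝ 1 v) {g : ℂ → ℂ}
    (hg : Continuous g) (hg1 : ∀ z, ‖z‖ = 1 → ‖g z‖ ≤ 1) :
    Tendsto (fun N => circleAverage (fun z => g z * (Real.exp (2 * (analyticPart v N z).re) : ℝ))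
        0 1) atTop
      (nhds (circleAverage (fun z => g z * (Real.exp (v z - bint v / (2 * π)) : ℝ)) 0 1)) := by
  refine tendsto_circleAverage_of_bounded (B := Real.exp (2 * ∑' k, ‖boundaryCoeff v k‖))
    (fun N => ?_) (fun N z hz => ?_) fun z hz => ?_
  · have := (differentiable_analyticPart v N).continuous
    fun_prop
  · rw [norm_mul, Complex.norm_real, Real.norm_of_nonneg (Real.exp_pos _).le]
    refine (mul_le_of_le_one_left (Real.exp_pos _).le (hg1 z hz)).trans (Real.exp_le_exp.2 ?_)
    linarith [(Complex.re_le_norm _).trans (norm_analyticPart_le hv hz N)]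
  · exact ((Complex.continuous_ofReal.tendsto _).comp ((Real.continuous_exp.tendsto _).comp
      (tendsto_two_mul_re_analyticPart hv hz))).const_mul _

lemma tendsto_circleAverage_exp_analyticPart (hv : ContDiff ℝ 1 v) :
    Tendsto (fun N => circleAverage (fun z => Real.exp (2 * (analyticPart v N z).re)) 0 1) atTop
      (nhds (circleAverage (fun z => Real.exp (v z - bint v / (2 * π))) 0 1)) := by
  have hlim := (Complex.continuous_re.tendsto _).comp
    (tendsto_circleAverage_mul_exp_analyticPart hv (g := fun _ => 1) continuous_const (by simp))
  have hcont := hv.continuous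
  simp only [one_mul] at hlim
  rw [re_circleAverage (by fun_prop)] at hlim
  refine hlim.congr fun N => ?_
  have := (differentiable_analyticPart v N).continuous
  simp only [Function.comp_apply]
  rw [re_circleAverage (by fun_prop)]
  simp only [Complex.ofReal_re]

lemma sum_norm_taylorCoeff_deriv_analyticPart_le (hv : ContDiff ℝ 1 v) (N M : ℕ) :
    ∑ k ∈ Finset.range M, ‖taylorCoeff (deriv (analyticPart v N)) k‖ ^ 2 / (k + 1) ≤
      (∫ x in unitDisk, gradSq v x) / (4 * π) := by
  have hterm (k : ℕ) : ‖taylorCoeff (deriv (analyticPart v N)) k‖ ^ 2 / (k + 1) =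
      if k + 1 ∈ Finset.Ico 1 N then ((k + 1 : ℕ) : ℝ) * ‖boundaryCoeff v (k + 1)‖ ^ 2 else 0 := by
    have hcoeff : taylorCoeff (analyticPart v N) (k + 1) =
        if k + 1 ∈ Finset.Ico 1 N then boundaryCoeff v (k + 1) else 0 := taylorCoeff_sum_pow _ _ _
    have : (0 : ℝ) < k + 1 := by positivity
    rw [taylorCoeff_deriv, hcoeff, norm_mul, mul_pow, ← Nat.cast_add_one, Complex.norm_natCast,
      Nat.cast_add_one]
    split_ifs
    · field_simp
    · simp
  simp only [hterm]
  rw [Finset.range_eq_Ico, Finset.sum_Ico_add' (fun j : ℕ =>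
    if j ∈ Finset.Ico 1 N then (j : ℝ) * ‖boundaryCoeff v j‖ ^ 2 else 0), ← Finset.sum_filter]
  exact sum_mul_norm_boundaryCoeff_sq_le hv (by simp)

theorem lebedev_milin_inequality (hv : ContDiff ℝ 1 v) :
    bint (fun x => Real.exp (v x)) / (2 * π) ≤
      Real.exp ((∫ x in unitDisk, gradSq v x) / (4 * π) + bint v / (2 * π)) := by
  have hle := le_of_tendsto' (tendsto_circleAverage_exp_analyticPart hv) fun N =>
    circleAverage_exp_two_mul_re_le (differentiable_analyticPart v N) (analyticPart_zero v N)
      (sum_norm_taylorCoeff_deriv_analyticPart_le hv N)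
  have hscale : circleAverage (fun z => Real.exp (v z - bint v / (2 * π))) 0 1 =
      Real.exp (-(bint v / (2 * π))) * circleAverage (fun z => Real.exp (v z)) 0 1 := by
    simp only [sub_eq_neg_add, Real.exp_add]
    exact circleAverage_fun_smul (a := Real.exp _) (f := fun z => Real.exp (v z))
  rw [hscale, Real.exp_neg, inv_mul_le_iff₀ (Real.exp_pos _), ← Real.exp_add, add_comm] at hle
  rwa [bint_eq_two_pi_mul_circleAverage, mul_div_cancel_left₀ _ two_pi_pos.ne']

lemma norm_circleAverage_conj_mul_sq {w : ℂ → ℝ} (hw : Continuous w) :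
    ‖circleAverage (fun z => starRingEnd ℂ z * (w z : ℂ)) 0 1‖ ^ 2 =
      circleAverage (fun z => z.re * w z) 0 1 ^ 2 +
        circleAverage (fun z => z.im * w z) 0 1 ^ 2 := by
  have := Complex.continuous_conj
  have him : circleAverage (fun z => -(z.im * w z)) 0 1 =
      -circleAverage (fun z => z.im * w z) 0 1 := by
    simpa using circleAverage_fun_smul (a := (-1 : ℝ)) (f := fun z : ℂ => z.im * w z) (c := 0)
      (R := 1)
  rw [← Complex.normSq_eq_norm_sq, Complex.normSq_apply, re_circleAverage (by fun_prop),
    im_circleAverage (by fun_prop)]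
  simp only [Complex.re_mul_ofReal, Complex.im_mul_ofReal, Complex.conj_re, Complex.conj_im,
    neg_mul, him]
  ring

theorem szego_inequality (hv : ContDiff ℝ 1 v) :
    bint (fun x => Real.exp (v x)) ^ 2 - bint (fun x => x.re * Real.exp (v x)) ^ 2 -
        bint (fun x => x.im * Real.exp (v x)) ^ 2 ≤
      (2 * π) ^ 2 *
        Real.exp ((∫ x in unitDisk, gradSq v x) / (4 * π) + 2 * (bint v / (2 * π))) := by
  set m := bint v / (2 * π)
  have hcont := hv.continuous
  have hle := le_of_tendsto' (((tendsto_circleAverage_exp_analyticPart hv).pow 2).sub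
    ((tendsto_circleAverage_mul_exp_analyticPart hv Complex.continuous_conj
      fun z hz => by rw [RCLike.norm_conj, hz]).norm.pow 2)) fun N =>
    circleAverage_exp_two_mul_re_sq_sub_le (differentiable_analyticPart v N) (analyticPart_zero v N)
      (sum_norm_taylorCoeff_deriv_analyticPart_le hv N)
  have hscale (p : ℂ → ℝ) : circleAverage (fun z => p z * Real.exp (v z - m)) 0 1 =
      Real.exp (-m) * circleAverage (fun z => p z * Real.exp (v z)) 0 1 := by
    rw [← smul_eq_mul, ← circleAverage_fun_smul]
    congr 1
    funext z
    rw [smul_eq_mul, sub_eq_neg_add, Real.exp_add]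
    ring
  have hscale_one := hscale fun _ => 1
  simp only [one_mul] at hscale_one
  rw [norm_circleAverage_conj_mul_sq (by fun_prop), hscale, hscale, hscale_one] at hle
  simp only [bint_eq_two_pi_mul_circleAverage]
  calc _ = (2 * π) ^ 2 * Real.exp (2 * m) *
        ((Real.exp (-m) * circleAverage (fun z => Real.exp (v z)) 0 1) ^ 2 -
          ((Real.exp (-m) * circleAverage (fun z => z.re * Real.exp (v z)) 0 1) ^ 2 +
            (Real.exp (-m) * circleAverage (fun z => z.im * Real.exp (v z)) 0 1) ^ 2)) := by
        rw [Real.exp_neg, two_mul m, Real.exp_add]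
        field_simp
        ring
    _ ≤ (2 * π) ^ 2 * Real.exp (2 * m) * Real.exp ((∫ x in unitDisk, gradSq v x) / (4 * π)) := by
        gcongr
    _ = _ := by rw [Real.exp_add]; ring

end LebedevMilin

/-! ### Lower bound for the energy on the constraint set -/

section BoundaryIntegral

variable {f g : ℂ → ℝ}

lemma bint_add (hf : Continuous fun θ => f (bpt θ)) (hg : Continuous fun θ => g (bpt θ)) :
    bint (fun x => f x + g x) = bint f + bint g :=
  intervalIntegral.integral_add (hf.intervalIntegrable _ _) (hg.intervalIntegrable _ _)

lemma bint_sub (hf : Continuous fun θ => f (bpt θ)) (hg : Continuous fun θ => g (bpt θ)) :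
    bint (fun x => f x - g x) = bint f - bint g :=
  intervalIntegral.integral_sub (hf.intervalIntegrable _ _) (hg.intervalIntegrable _ _)

lemma bint_const_mul (c : ℝ) (f : ℂ → ℝ) : bint (fun x => c * f x) = c * bint f :=
  intervalIntegral.integral_const_mul _ _

lemma bint_const (c : ℝ) : bint (fun _ => c) = 2 * π * c := by
  simp [bint]

lemma bint_mono (hf : Continuous fun θ => f (bpt θ)) (hg : Continuous fun θ => g (bpt θ))
    (hfg : ∀ θ, f (bpt θ) ≤ g (bpt θ)) : bint f ≤ bint g :=
  intervalIntegral.integral_mono two_pi_pos.le (hf.intervalIntegrable _ _)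
    (hg.intervalIntegrable _ _) hfg

lemma exists_pos_forall_bpt_le (hf : Continuous fun θ => f (bpt θ)) :
    ∃ B > 0, ∀ θ, f (bpt θ) ≤ B := by
  have hper : Function.Periodic (fun θ => f (bpt θ)) (2 * π) := fun θ =>
    congrArg f (periodic_bpt θ)
  obtain ⟨B, hB0, hB⟩ :=
    (hper.isBounded_of_continuous two_pi_pos.ne' hf).exists_pos_norm_le
  exact ⟨B, hB0, fun θ => (le_abs_self _).trans (hB _ (Set.mem_range_self θ))⟩

end BoundaryIntegral

lemma setIntegral_unitDisk_mono {f g : ℂ → ℝ} (hf : ContinuousOn f (Metric.closedBall 0 1))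
    (hg : ContinuousOn g (Metric.closedBall 0 1)) (hfg : ∀ x ∈ unitDisk, f x ≤ g x) :
    ∫ x in unitDisk, f x ≤ ∫ x in unitDisk, g x :=
  setIntegral_mono_on (integrableOn_unitDisk_of_continuousOn hf)
    (integrableOn_unitDisk_of_continuousOn hg) measurableSet_ball hfg

lemma setIntegral_unitDisk_const (c : ℝ) : ∫ _ in unitDisk, c = π * c := by
  simp [unitDisk, Measure.real, Complex.volume_ball]

lemma re_sq_add_im_sq (x : ℂ) : x.re ^ 2 + x.im ^ 2 = ‖x‖ ^ 2 := by
  rw [← Complex.normSq_eq_norm_sq, Complex.normSq_apply, sq, sq]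

section RadialDerivative

variable {u : ℂ → ℝ}

lemma continuous_nderiv (hu : ContDiff ℝ 1 u) : Continuous (nderiv u) := by
  have := continuous_pd hu
  unfold nderiv
  fun_prop

lemma nderiv_sq_le_gradSq (u : ℂ → ℝ) {x : ℂ} (hx : x ∈ unitDisk) :
    nderiv u x ^ 2 ≤ gradSq u x := by
  have hnorm : x.re ^ 2 + x.im ^ 2 ≤ 1 := by
    rw [re_sq_add_im_sq]
    exact pow_le_one₀ (norm_nonneg x) (mem_ball_zero_iff.1 hx).le
  calc nderiv u x ^ 2
      ≤ (x.re ^ 2 + x.im ^ 2) * gradSq u x := by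
        unfold nderiv gradSq
        linarith [sq_nonneg (x.re * pd u Complex.I x - x.im * pd u 1 x)]
    _ ≤ gradSq u x := mul_le_of_le_one_left (by unfold gradSq; positivity) hnorm

lemma setIntegral_gradSq_nonneg (u : ℂ → ℝ) : 0 ≤ ∫ x in unitDisk, gradSq u x :=
  integral_nonneg fun _ => add_nonneg (sq_nonneg _) (sq_nonneg _)

lemma setIntegral_two_mul_add_nderiv (hu : ContDiff ℝ 1 u) :
    ∫ x in unitDisk, (2 * u x + nderiv u x) = bint u := by
  have hdiff := hu.differentiable one_ne_zero
  have hre : ContDiff ℝ 1 fun x : ℂ => x.re := Complex.reCLM.contDiff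
  have him : ContDiff ℝ 1 fun x : ℂ => x.im := Complex.imCLM.contDiff
  have hdiv := setIntegral_unitDisk_divergence (fun x _ => (hre.mul hu).contDiffAt)
    fun x _ => (him.mul hu).contDiffAt
  have hpd_re (x : ℂ) : pd (fun x => x.re) 1 x = 1 := by
    simpa using pd_re (f := id) differentiableAt_id 1
  have hpd_im (x : ℂ) : pd (fun x => x.im) Complex.I x = 1 := by
    simpa using pd_im (f := id) differentiableAt_id Complex.I
  have hbdry : bint (fun x => x.re * (x.re * u x) + x.im * (x.im * u x)) = bint u := by
    unfold bint
    congr 1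
    funext θ
    have hcircle := re_sq_add_im_sq (bpt θ)
    rw [norm_bpt] at hcircle
    linear_combination u (bpt θ) * hcircle
  rw [← hbdry, ← hdiv]
  congr 1
  funext x
  rw [pd_mul (hre.differentiable one_ne_zero x) (hdiff x),
    pd_mul (him.differentiable one_ne_zero x) (hdiff x), hpd_re, hpd_im, nderiv]
  ring

lemma le_setIntegral_unitDisk (hu : ContDiff ℝ 1 u) :
    bint u / 2 - (π + ∫ x in unitDisk, gradSq u x) / 4 ≤ ∫ x in unitDisk, u x := by
  have hn := continuous_nderiv hu
  have hg := continuous_gradSq hu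
  have hcont := hu.continuous
  have hradial : ∫ x in unitDisk, nderiv u x ≤ ∫ x in unitDisk, (1 / 2 + 1 / 2 * gradSq u x) :=
    setIntegral_unitDisk_mono hn.continuousOn (by fun_prop) fun x hx => by
      linarith [nderiv_sq_le_gradSq u hx, sq_nonneg (nderiv u x - 1)]
  have hdiv := setIntegral_two_mul_add_nderiv hu
  rw [integral_add (integrableOn_unitDisk_of_continuous (by fun_prop))
    (integrableOn_unitDisk_of_continuous hn), integral_const_mul] at hdiv
  rw [integral_add (integrableOn_unitDisk_of_continuous (by fun_prop))
    (integrableOn_unitDisk_of_continuous (by fun_prop)), integral_const_mul,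
    setIntegral_unitDisk_const] at hradial
  linarith

end RadialDerivative

section Coercivity

variable {K h u : ℂ → ℝ} {ε : ℝ}

lemma gradSq_const_mul (c : ℝ) (hu : ContDiff ℝ 1 u) (x : ℂ) :
    gradSq (fun x => c * u x) x = c ^ 2 * gradSq u x := by
  unfold gradSq pd
  rw [fderiv_const_mul (hu.differentiable one_ne_zero x)]
  simp only [smul_apply, smul_eq_mul]
  ring

lemma szego_inequality_half (hu : ContDiff ℝ 1 u) :
    bint (fun x => Real.exp (u x / 2)) ^ 2 - bint (fun x => x.re * Real.exp (u x / 2)) ^ 2 -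
        bint (fun x => x.im * Real.exp (u x / 2)) ^ 2 ≤
      (2 * π) ^ 2 * Real.exp ((∫ x in unitDisk, gradSq u x) / (16 * π) + bint u / (2 * π)) := by
  have hszego := szego_inequality (v := fun x => 1 / 2 * u x) (contDiff_const.mul hu)
  simp only [gradSq_const_mul _ hu, bint_const_mul, integral_const_mul] at hszego
  simp only [one_div_mul_eq_div] at hszego
  refine hszego.trans_eq ?_
  congr 2
  ring

lemma neg_le_bint_of_memM (hu : MemM u) :
    -(4 * π * Real.log (2 * π)) - (∫ x in unitDisk, gradSq u x) / 8 ≤ bint u := by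
  obtain ⟨hsmooth, hmass, hre, him⟩ := hu
  have hszego := szego_inequality_half hsmooth
  rw [hmass, hre, him, ← Real.exp_log (pow_pos two_pi_pos 2), ← Real.exp_add, Real.log_pow]
    at hszego
  have hexp := Real.one_le_exp_iff.1 (le_trans (by norm_num) hszego)
  have := pi_pos
  field_simp at hexp
  push_cast at hexp
  linarith

lemma Ifun_add_mul_Tfun_eq (hK : Continuous K) (hh : Continuous fun θ => h (bpt θ)) (ε : ℝ)
    (hu : ContDiff ℝ 1 u) :
    Ifun K h u + ε * Tfun u =
      (1 + ε) / 2 * (∫ x in unitDisk, gradSq u x)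
        + (∫ x in unitDisk, (-2 * K x + ε) * Real.exp (u x)) + 2 * bint u
        - ε * (∫ x in unitDisk, u x) - 4 * bint (fun x => h x * Real.exp (u x / 2)) := by
  have hg := continuous_gradSq hu
  have hcont := hu.continuous
  have hbdry : bint (fun x => 2 * u x - 4 * h x * Real.exp (u x / 2)) =
      2 * bint u - 4 * bint (fun x => h x * Real.exp (u x / 2)) := by
    simp only [mul_assoc]
    rw [bint_sub (by fun_prop) ((hh.mul (by fun_prop)).const_mul 4), bint_const_mul,
      bint_const_mul]
  have hdisk : ∫ x in unitDisk, (-2 * K x + ε) * Real.exp (u x) =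
      ε * (∫ x in unitDisk, Real.exp (u x)) - ∫ x in unitDisk, 2 * K x * Real.exp (u x) := by
    rw [← integral_const_mul, ← integral_sub (integrableOn_unitDisk_of_continuous (by fun_prop))
      (integrableOn_unitDisk_of_continuous (by fun_prop))]
    congr 1
    funext x
    ring
  unfold Ifun Tfun
  rw [hbdry, hdisk, integral_sub (integrableOn_unitDisk_of_continuous (by fun_prop))
    (integrableOn_unitDisk_of_continuous (by fun_prop)),
    integral_sub (integrableOn_unitDisk_of_continuous (by fun_prop))
    (integrableOn_unitDisk_of_continuous (by fun_prop)),
    integral_add (integrableOn_unitDisk_of_continuous (by fun_prop))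
    (integrableOn_unitDisk_of_continuous (by fun_prop)), integral_const_mul]
  ring

lemma le_Ifun_add_mul_Tfun_of_memM {B : ℝ} (hK : Continuous K)
    (hh : Continuous fun θ => h (bpt θ)) (hB : ∀ θ, h (bpt θ) ≤ B)
    (hKε : ∀ x ∈ unitDisk, 2 * K x ≤ ε) (hε : -(1 / 4) ≤ ε) (hε0 : ε ≤ 0) (hu : MemM u) :
    -(10 * π * Real.log (2 * π) + π + 4 * B) ≤ Ifun K h u + ε * Tfun u := by
  have hcont := hu.1.continuous
  have hdisk : 0 ≤ ∫ x in unitDisk, (-2 * K x + ε) * Real.exp (u x) :=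
    setIntegral_nonneg measurableSet_ball fun x hx =>
      mul_nonneg (by linarith [hKε x hx]) (Real.exp_pos _).le
  have hbdry : bint (fun x => h x * Real.exp (u x / 2)) ≤ B := by
    have hle : bint (fun x => h x * Real.exp (u x / 2)) ≤ bint (fun x => B * Real.exp (u x / 2)) :=
      bint_mono (hh.mul (by fun_prop)) (by fun_prop) fun θ =>
        mul_le_mul_of_nonneg_right (hB θ) (Real.exp_pos _).le
    rwa [bint_const_mul, hu.2.1, mul_one] at hle
  rw [Ifun_add_mul_Tfun_eq hK hh ε hu.1]
  have hmean := mul_le_mul_of_nonneg_left (le_setIntegral_unitDisk hu.1) (neg_nonneg.2 hε0)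
  have htrace := mul_le_mul_of_nonneg_left (neg_le_bint_of_memM hu)
    (show (0 : ℝ) ≤ 2 - ε / 2 by linarith)
  have hgrad := mul_nonneg (show (0 : ℝ) ≤ 1 / 4 + ε by linarith) (setIntegral_gradSq_nonneg u)
  have hlog : 0 ≤ π * Real.log (2 * π) :=
    mul_nonneg pi_pos.le (Real.log_nonneg (by linarith [pi_gt_three]))
  have hlogε := mul_nonneg (show (0 : ℝ) ≤ 1 / 4 + ε by linarith) hlog
  have hpiε := mul_nonneg (show (0 : ℝ) ≤ 1 / 4 + ε by linarith) pi_pos.le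
  linarith [pi_pos, setIntegral_gradSq_nonneg u]

/-- With `G` the Dirichlet integral of `u`, Szegő's inequality bounds the trace term `2 ∫ u` below
by `-G / 4` on `M`. The Lebedev–Milin inequality alone gives `-G / 2`, which leaves no room for
`ε < 0`. -/
theorem exists_forall_memM_le_Ieps (hK : Continuous K) (hKneg : ∀ x ∈ closedUnitDisk, K x < 0)
    (hh : Continuous fun θ => h (bpt θ)) :
    ∃ δ > 0, δ ≤ 1 / 4 ∧ ∃ C ≥ 0, ∀ ε ∈ Set.Ioc (-δ) 0, ∀ u, MemM u → -C ≤ Ieps K h ε u := by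
  obtain ⟨x₀, hx₀, hmax⟩ := (isCompact_closedBall (0 : ℂ) 1).exists_isMaxOn
    (Metric.nonempty_closedBall.2 zero_le_one) hK.continuousOn
  obtain ⟨B, hB0, hB⟩ := exists_pos_forall_bpt_le hh
  have hlog : 0 ≤ Real.log (2 * π) := Real.log_nonneg (by linarith [pi_gt_three])
  have hC : 0 ≤ 10 * π * Real.log (2 * π) + π + 4 * B := by positivity
  refine ⟨min (1 / 4) (-2 * K x₀), lt_min (by norm_num) (by linarith [hKneg x₀ hx₀]),
    min_le_left _ _, 2 * (10 * π * Real.log (2 * π) + π + 4 * B), by positivity,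
    fun ε hε u hu => ?_⟩
  have hε4 : -(1 / 4) < ε := (neg_le_neg (min_le_left _ _)).trans_lt hε.1
  have hεK : 2 * K x₀ < ε := by linarith [min_le_right (1 / 4) (-2 * K x₀), hε.1]
  have hle := le_Ifun_add_mul_Tfun_of_memM hK hh hB
    (fun x hx => by linarith [isMaxOn_iff.1 hmax x (Metric.ball_subset_closedBall hx)])
    hε4.le hε.2 hu
  rw [Ieps, le_div_iff₀ (by linarith)]
  nlinarith

end Coercivity

/-! ### Continuity of boundary moments in the H¹ norm -/

section BoundaryMoments

variable {w : ℂ → ℝ}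

lemma nderiv_sq (hw : ContDiff ℝ 1 w) (x : ℂ) :
    nderiv (fun x => w x ^ 2) x = 2 * w x * nderiv w x := by
  have hdiff := hw.differentiable one_ne_zero x
  simp only [sq, nderiv, pd_mul hdiff hdiff]
  ring

lemma bint_sq_le_three_mul_H1normSq (hw : ContDiff ℝ 1 w) :
    bint (fun x => w x ^ 2) ≤ 3 * H1normSq w := by
  have hg := continuous_gradSq hw
  have hcont := hw.continuous
  have hn := continuous_nderiv hw
  calc bint (fun x => w x ^ 2)
      = ∫ x in unitDisk, (2 * w x ^ 2 + 2 * w x * nderiv w x) := by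
        simp only [← setIntegral_two_mul_add_nderiv (hw.pow 2), nderiv_sq hw]
    _ ≤ ∫ x in unitDisk, (gradSq w x + 3 * w x ^ 2) :=
        setIntegral_unitDisk_mono (by fun_prop) (by fun_prop) fun x hx => by
          linarith [nderiv_sq_le_gradSq w hx, sq_nonneg (nderiv w x - w x)]
    _ ≤ 3 * H1normSq w := by
        rw [integral_add (integrableOn_unitDisk_of_continuous hg)
          (integrableOn_unitDisk_of_continuous (by fun_prop)), integral_const_mul, H1normSq]
        linarith [setIntegral_gradSq_nonneg w]

lemma abs_exp_sub_one_le_abs_mul (s : ℝ) : |Real.exp s - 1| ≤ |s| * (1 + Real.exp s) := by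
  have hpos := Real.exp_pos s
  have hupper : Real.exp s - 1 ≤ s * Real.exp s := by
    have hmul := mul_le_mul_of_nonneg_right (Real.add_one_le_exp (-s)) hpos.le
    rw [← Real.exp_add, neg_add_cancel, Real.exp_zero] at hmul
    linarith
  have hmul := mul_le_mul_of_nonneg_right (le_abs_self s) hpos.le
  have hnonneg := mul_nonneg (abs_nonneg s) hpos.le
  rw [abs_le]
  constructor <;> linarith [Real.add_one_le_exp s, neg_abs_le s, abs_nonneg s]

lemma bint_exp_le_of_H1normSq_le_one (hw : ContDiff ℝ 1 w) (hnorm : H1normSq w ≤ 1) :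
    bint (fun x => Real.exp (w x)) ≤ 2 * π * Real.exp 2 := by
  have hcont := hw.continuous
  have hpi := pi_gt_three
  have hgrad : (∫ x in unitDisk, gradSq w x) / (4 * π) ≤ 1 := by
    have hsq : 0 ≤ ∫ x in unitDisk, w x ^ 2 := integral_nonneg fun _ => sq_nonneg _
    rw [H1normSq] at hnorm
    rw [div_le_one (by positivity)]
    linarith
  have hmean : bint w / (2 * π) ≤ 1 := by
    have hle : bint w ≤ bint (fun x => 1 / 2 * w x ^ 2 + 1 / 2) :=
      bint_mono (by fun_prop) (by fun_prop) fun θ => by linarith [sq_nonneg (w (bpt θ) - 1)]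
    rw [bint_add (by fun_prop) (by fun_prop), bint_const_mul, bint_const] at hle
    rw [div_le_one (by positivity)]
    linarith [bint_sq_le_three_mul_H1normSq hw]
  have hle := lebedev_milin_inequality hw
  rw [div_le_iff₀' two_pi_pos] at hle
  refine hle.trans ?_
  gcongr
  linarith

lemma abs_exp_half_sub_one_le {d : ℝ} (hd : 0 < d) (t : ℝ) :
    |Real.exp (t / 2) - 1| ≤ 1 / (8 * d) * t ^ 2 + d * (1 + Real.exp t) := by
  obtain ⟨s, rfl⟩ : ∃ s, t = 2 * s := ⟨t / 2, by ring⟩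
  have hamgm : |s| * (1 + Real.exp s) ≤ |s| ^ 2 / (2 * d) + d * (1 + Real.exp s) ^ 2 / 2 := by
    have hsq : 0 ≤ (|s| - d * (1 + Real.exp s)) ^ 2 / (2 * d) := by positivity
    calc |s| * (1 + Real.exp s)
        = |s| ^ 2 / (2 * d) + d * (1 + Real.exp s) ^ 2 / 2
            - (|s| - d * (1 + Real.exp s)) ^ 2 / (2 * d) := by field_simp; ring
      _ ≤ _ := by linarith
  have hquad : 1 / (8 * d) * (2 * s) ^ 2 = |s| ^ 2 / (2 * d) := by
    rw [sq_abs]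
    field_simp
    norm_num
  have hexp : Real.exp (2 * s) = Real.exp s ^ 2 := by rw [← Real.exp_nat_mul, Nat.cast_ofNat]
  rw [mul_div_cancel_left₀ s two_ne_zero, hquad, hexp]
  linarith [abs_exp_sub_one_le_abs_mul s, mul_nonneg hd.le (sq_nonneg (Real.exp s - 1))]

lemma bint_abs_exp_half_sub_one_le (hw : ContDiff ℝ 1 w) {d : ℝ} (hd : 0 < d) (hd1 : d ≤ 1)
    (hnorm : H1normSq w ≤ d ^ 2) :
    bint (fun x => |Real.exp (w x / 2) - 1|) ≤ d * (1 + 2 * π * (1 + Real.exp 2)) := by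
  have hcont := hw.continuous
  have hquad : 1 / (8 * d) * bint (fun x => w x ^ 2) ≤ d := by
    rw [one_div, inv_mul_le_iff₀ (by positivity)]
    linarith [bint_sq_le_three_mul_H1normSq hw, sq_nonneg d]
  have hexp := bint_exp_le_of_H1normSq_le_one hw (hnorm.trans (pow_le_one₀ hd.le hd1))
  calc bint (fun x => |Real.exp (w x / 2) - 1|)
      ≤ bint (fun x => 1 / (8 * d) * w x ^ 2 + d * (1 + Real.exp (w x))) :=
        bint_mono (by fun_prop) (by fun_prop) fun θ => abs_exp_half_sub_one_le hd _
    _ = 1 / (8 * d) * bint (fun x => w x ^ 2)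
          + d * (2 * π * 1 + bint (fun x => Real.exp (w x))) := by
        rw [bint_add (by fun_prop) (by fun_prop), bint_const_mul, bint_const_mul,
          bint_add (by fun_prop) (by fun_prop), bint_const]
    _ ≤ d + d * (2 * π * 1 + 2 * π * Real.exp 2) := by gcongr
    _ = d * (1 + 2 * π * (1 + Real.exp 2)) := by ring

lemma abs_bint_le_bint {f g : ℂ → ℝ} (hf : Continuous fun θ => f (bpt θ))
    (hg : Continuous fun θ => g (bpt θ)) (hfg : ∀ θ, |f (bpt θ)| ≤ g (bpt θ)) :
    |bint f| ≤ bint g :=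
  (intervalIntegral.abs_integral_le_integral_abs two_pi_pos.le).trans
    (bint_mono (f := fun x => |f x|) hf.abs hg hfg)

lemma abs_bint_mul_exp_half_sub_le {p u v : ℂ → ℝ} (hp : Continuous p)
    (hp1 : ∀ θ, |p (bpt θ)| ≤ 1) (hu : Continuous u) (hv : Continuous v) {B : ℝ}
    (hB : ∀ θ, Real.exp (u (bpt θ) / 2) ≤ B) :
    |bint (fun x => p x * Real.exp (v x / 2)) - bint (fun x => p x * Real.exp (u x / 2))| ≤
      B * bint (fun x => |Real.exp ((v x - u x) / 2) - 1|) := by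
  rw [← bint_sub (by fun_prop) (by fun_prop), ← bint_const_mul]
  refine abs_bint_le_bint (by fun_prop) (by fun_prop) fun θ => ?_
  have hfactor : p (bpt θ) * Real.exp (v (bpt θ) / 2) - p (bpt θ) * Real.exp (u (bpt θ) / 2) =
      p (bpt θ) * (Real.exp (u (bpt θ) / 2) * (Real.exp ((v (bpt θ) - u (bpt θ)) / 2) - 1)) := by
    rw [mul_sub (Real.exp _), ← Real.exp_add]
    ring_nf
  rw [hfactor, abs_mul, abs_mul, Real.abs_exp]
  calc |p (bpt θ)| * (Real.exp (u (bpt θ) / 2) * |Real.exp ((v (bpt θ) - u (bpt θ)) / 2) - 1|)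
      ≤ 1 * (B * |Real.exp ((v (bpt θ) - u (bpt θ)) / 2) - 1|) := by
        gcongr
        exacts [hp1 θ, hB θ]
    _ = _ := one_mul _

-- The modulus of continuity at `y` depends on the supremum of `η y` on the circle.
theorem continuousOn_bint_mul_exp_half {E : Type*} [PseudoMetricSpace E] {S : Set E}
    {η : E → ℂ → ℝ} (hη : H1ContinuousOn η S) (hsmooth : ∀ y ∈ S, ContDiff ℝ 1 (η y))
    {p : ℂ → ℝ} (hp : Continuous p) (hp1 : ∀ θ, |p (bpt θ)| ≤ 1) :
    ContinuousOn (fun y => bint fun x => p x * Real.exp (η y x / 2)) S := by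
  rw [Metric.continuousOn_iff]
  intro y hy r hr
  have hcont := (hsmooth y hy).continuous
  obtain ⟨B, hB0, hB⟩ := exists_pos_forall_bpt_le (f := fun x => Real.exp (η y x / 2))
    (by fun_prop)
  set M := 1 + 2 * π * (1 + Real.exp 2)
  have : 0 < M := by positivity
  set d := min 1 (r / (2 * B * M))
  have hd0 : 0 < d := lt_min one_pos (by positivity)
  have hdM : d * (2 * B * M) ≤ r := (le_div_iff₀ (by positivity)).1 (min_le_right _ _)
  obtain ⟨ρ, hρ, hclose⟩ := hη y hy d hd0
  refine ⟨ρ, hρ, fun y' hy' hdist => ?_⟩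
  have hnorm := ((Real.sqrt_lt' hd0).1 (hclose y' hy' hdist)).le
  calc |bint (fun x => p x * Real.exp (η y' x / 2)) - bint (fun x => p x * Real.exp (η y x / 2))|
      ≤ B * bint (fun x => |Real.exp ((η y' x - η y x) / 2) - 1|) :=
        abs_bint_mul_exp_half_sub_le hp hp1 hcont (hsmooth y' hy').continuous hB
    _ ≤ B * (d * M) := by
        gcongr
        exact bint_abs_exp_half_sub_one_le ((hsmooth y' hy').sub (hsmooth y hy)) hd0
          (min_le_left _ _) hnorm
    _ < r := by linarith

end BoundaryMoments

/-! ### Integrals of Möbius denominators -/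

/-- The squared modulus of the denominator of the Möbius automorphism
`x ↦ (x - a) / (1 - conj a * x)` of the disk. On the unit circle it equals `‖x - a‖ ^ 2`, the
denominator of the Poisson kernel with pole `a`. -/
def mobiusDenom (a x : ℂ) : ℝ := ‖1 - starRingEnd ℂ a * x‖ ^ 2

section MobiusDenom

variable {a x : ℂ}

lemma one_sub_norm_sq_pos (ha : ‖a‖ < 1) : 0 < 1 - ‖a‖ ^ 2 :=
  sub_pos.2 (pow_lt_one₀ (norm_nonneg a) ha two_ne_zero)

lemma log_one_sub_norm_sq_nonpos (ha : ‖a‖ < 1) : Real.log (1 - ‖a‖ ^ 2) ≤ 0 :=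
  Real.log_nonpos (one_sub_norm_sq_pos ha).le (by linarith [sq_nonneg ‖a‖])

lemma inner_eq_re_mul_re_add_im_mul_im (a x : ℂ) :
    inner ℝ a x = a.re * x.re + a.im * x.im := by
  simp [Complex.inner, mul_comm]

lemma mobiusDenom_eq (a x : ℂ) :
    mobiusDenom a x = 1 - 2 * inner ℝ a x + ‖a‖ ^ 2 * ‖x‖ ^ 2 := by
  simp only [mobiusDenom, ← re_sq_add_im_sq, inner_eq_re_mul_re_add_im_mul_im, Complex.sub_re,
    Complex.sub_im, Complex.mul_re, Complex.mul_im, Complex.one_re, Complex.one_im,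
    Complex.conj_re, Complex.conj_im]
  ring

lemma one_sub_norm_sq_le_mobiusDenom (ha : ‖a‖ ≤ 1) (hx : ‖x‖ ≤ 1) :
    (1 - ‖a‖) ^ 2 ≤ mobiusDenom a x := by
  have hnorm : 1 - ‖a‖ ≤ ‖1 - starRingEnd ℂ a * x‖ := by
    have htri := norm_sub_norm_le (1 : ℂ) (starRingEnd ℂ a * x)
    rw [norm_one, norm_mul, Complex.norm_conj] at htri
    linarith [mul_le_of_le_one_right (norm_nonneg a) hx]
  exact pow_le_pow_left₀ (sub_nonneg.2 ha) hnorm 2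

lemma mobiusDenom_pos (ha : ‖a‖ < 1) (hx : ‖x‖ ≤ 1) : 0 < mobiusDenom a x :=
  (pow_pos (sub_pos.2 ha) 2).trans_le (one_sub_norm_sq_le_mobiusDenom ha.le hx)

lemma mobiusDenom_bpt_pos (ha : ‖a‖ < 1) (θ : ℝ) : 0 < mobiusDenom a (bpt θ) :=
  mobiusDenom_pos ha (norm_bpt θ).le

lemma mobiusDenom_of_norm_eq_one (a : ℂ) (hx : ‖x‖ = 1) : mobiusDenom a x = ‖x - a‖ ^ 2 := by
  rw [mobiusDenom_eq, norm_sub_sq_real, real_inner_comm, hx]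
  ring

lemma mobiusDenom_ofReal_mul (a x : ℂ) (r : ℝ) : mobiusDenom a (r * x) = mobiusDenom (r * a) x := by
  simp only [mobiusDenom, map_mul, Complex.conj_ofReal]
  ring_nf

lemma continuous_mobiusDenom (a : ℂ) : Continuous (mobiusDenom a) := by
  unfold mobiusDenom; fun_prop

lemma continuous_one_div_mobiusDenom_bpt (ha : ‖a‖ < 1) :
    Continuous fun θ => 1 / mobiusDenom a (bpt θ) :=
  continuous_const.div ((continuous_mobiusDenom a).comp continuous_bpt)
    fun θ => (mobiusDenom_bpt_pos ha θ).ne'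

lemma continuousOn_one_div_mobiusDenom (ha : ‖a‖ < 1) :
    ContinuousOn (fun x => 1 / mobiusDenom a x) (Metric.closedBall 0 1) :=
  continuousOn_const.div (continuous_mobiusDenom a).continuousOn fun _ hx =>
    (mobiusDenom_pos ha (mem_closedBall_zero_iff.1 hx)).ne'

lemma bint_div_mobiusDenom {g : ℂ → ℝ}
    (hg : InnerProductSpace.HarmonicOnNhd g (Metric.closedBall 0 1)) (ha : ‖a‖ < 1) :
    bint (fun x => g x / mobiusDenom a x) = 2 * π / (1 - ‖a‖ ^ 2) * g a := by
  have hpoisson := hg.circleAverage_poissonKernel_smul (mem_ball_zero_iff.2 ha)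
  have hkernel (θ : ℝ) : g (bpt θ) / mobiusDenom a (bpt θ) =
      (1 - ‖a‖ ^ 2)⁻¹ * (poissonKernel 0 a • g) (bpt θ) := by
    have := (one_sub_norm_sq_pos ha).ne'
    simp only [mobiusDenom_of_norm_eq_one a (norm_bpt θ), Pi.smul_apply', poissonKernel_def,
      sub_zero, norm_bpt, smul_eq_mul]
    field_simp
  have hbint : bint (fun x => g x / mobiusDenom a x) =
      bint fun x => (1 - ‖a‖ ^ 2)⁻¹ * (poissonKernel 0 a • g) x := by
    simp only [bint, hkernel]
  rw [hbint, bint_const_mul, bint_eq_two_pi_mul_circleAverage, hpoisson]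
  ring

lemma bint_one_div_mobiusDenom (ha : ‖a‖ < 1) :
    bint (fun x => 1 / mobiusDenom a x) = 2 * π / (1 - ‖a‖ ^ 2) := by
  rw [bint_div_mobiusDenom (g := fun _ => 1)
    (fun x _ => InnerProductSpace.harmonicAt_const 1) ha, mul_one]

lemma bint_log_mobiusDenom (ha : ‖a‖ < 1) : bint (fun x => Real.log (mobiusDenom a x)) = 0 := by
  have hbint : bint (fun x => Real.log (mobiusDenom a x)) =
      bint fun x => 2 * Real.log ‖x - a‖ := by
    simp only [bint, mobiusDenom_of_norm_eq_one a (norm_bpt _), Real.log_pow, Nat.cast_ofNat]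
  rw [hbint, bint_const_mul, bint_eq_two_pi_mul_circleAverage,
    circleAverage_log_norm_sub_const₀ ha, mul_zero, mul_zero]

lemma setIntegral_one_div_mobiusDenom_eq_intervalIntegral (ha : ‖a‖ < 1) :
    ∫ x in unitDisk, 1 / mobiusDenom a x =
      ∫ r in (0 : ℝ)..1, r * (2 * π / (1 - r ^ 2 * ‖a‖ ^ 2)) := by
  rw [setIntegral_unitDisk_eq_polar (continuousOn_one_div_mobiusDenom ha)]
  refine intervalIntegral.integral_congr fun r hr => ?_
  rw [Set.uIcc_of_le zero_le_one] at hr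
  have hnorm : ‖(r : ℂ) * a‖ = r * ‖a‖ := by
    rw [norm_mul, Complex.norm_real, Real.norm_of_nonneg hr.1]
  have hlt : ‖(r : ℂ) * a‖ < 1 := by
    rw [hnorm]; exact (mul_le_of_le_one_left (norm_nonneg a) hr.2).trans_lt ha
  have hpoisson := bint_one_div_mobiusDenom hlt
  rw [hnorm, mul_pow] at hpoisson
  simp only [polarPoint, mobiusDenom_ofReal_mul, intervalIntegral.integral_const_mul]
  rw [← hpoisson, bint]

lemma norm_sq_mul_setIntegral_one_div_mobiusDenom (ha : ‖a‖ < 1) :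
    ‖a‖ ^ 2 * ∫ x in unitDisk, 1 / mobiusDenom a x = -π * Real.log (1 - ‖a‖ ^ 2) := by
  have hpos : ∀ r ∈ Set.uIcc (0 : ℝ) 1, 1 - r ^ 2 * ‖a‖ ^ 2 ≠ 0 := by
    intro r hr
    rw [Set.uIcc_of_le zero_le_one] at hr
    have hr2 : r ^ 2 * ‖a‖ ^ 2 ≤ ‖a‖ ^ 2 :=
      mul_le_of_le_one_left (sq_nonneg _) (pow_le_one₀ hr.1 hr.2)
    linarith [one_sub_norm_sq_pos ha]
  have hderiv : ∀ r ∈ Set.uIcc (0 : ℝ) 1,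
      HasDerivAt (fun r => -π * Real.log (1 - r ^ 2 * ‖a‖ ^ 2))
        (‖a‖ ^ 2 * (r * (2 * π / (1 - r ^ 2 * ‖a‖ ^ 2)))) r := by
    intro r hr
    have hinner := ((hasDerivAt_pow 2 r).mul_const (‖a‖ ^ 2)).const_sub 1
    refine ((hinner.log (hpos r hr)).const_mul (-π)).congr_deriv ?_
    norm_num
    ring
  have hint : IntervalIntegrable (fun r => ‖a‖ ^ 2 * (r * (2 * π / (1 - r ^ 2 * ‖a‖ ^ 2))))
      volume 0 1 := by
    refine ContinuousOn.intervalIntegrable fun r hr => ContinuousAt.continuousWithinAt ?_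
    have := hpos r hr
    fun_prop (disch := assumption)
  rw [setIntegral_one_div_mobiusDenom_eq_intervalIntegral ha, ← intervalIntegral.integral_const_mul,
    intervalIntegral.integral_eq_sub_of_hasDerivAt hderiv hint]
  simp

end MobiusDenom

/-- The quadratic polynomial `l * |1 - conj a * x|² + (1 - |a|²) * (1 - |x|²)`, whose inverse
square is, up to constants, the conformal factor of the bubble centered at `a` with scale `l`. -/
def bubbleDenom (l : ℝ) (a x : ℂ) : ℝ :=
  l * mobiusDenom a x + (1 - ‖a‖ ^ 2) * (1 - ‖x‖ ^ 2)

/-- The coefficient of `‖x‖ ^ 2` in `bubbleDenom l a x`. -/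
def bubbleDenomCoeff (l : ℝ) (a : ℂ) : ℝ := l * ‖a‖ ^ 2 - (1 - ‖a‖ ^ 2)

/-- The gradient of `bubbleDenom l a`, as a vector of `ℂ ≅ ℝ²`. -/
def bubbleDenomGrad (l : ℝ) (a x : ℂ) : ℂ := 2 * (bubbleDenomCoeff l a * x - l * a)

section BubbleDenom

variable {l : ℝ} {a x : ℂ}

lemma mul_mobiusDenom_le_bubbleDenom (l : ℝ) (ha : ‖a‖ < 1) (hx : ‖x‖ ≤ 1) :
    l * mobiusDenom a x ≤ bubbleDenom l a x :=
  le_add_of_nonneg_right <| mul_nonneg (one_sub_norm_sq_pos ha).le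
    (sub_nonneg.2 (pow_le_one₀ (norm_nonneg x) hx))

lemma one_sub_norm_sq_mul_le_bubbleDenom (hl : 0 < l) (a x : ℂ) :
    (1 - ‖a‖ ^ 2) * (1 - ‖x‖ ^ 2) ≤ bubbleDenom l a x :=
  le_add_of_nonneg_left (mul_nonneg hl.le (sq_nonneg _))

lemma mul_one_sub_norm_sq_le_bubbleDenom (hl : 0 < l) (ha : ‖a‖ < 1) (hx : ‖x‖ ≤ 1) :
    l * (1 - ‖a‖) ^ 2 ≤ bubbleDenom l a x :=
  (mul_le_mul_of_nonneg_left (one_sub_norm_sq_le_mobiusDenom ha.le hx) hl.le).trans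
    (mul_mobiusDenom_le_bubbleDenom l ha hx)

lemma bubbleDenom_pos (hl : 0 < l) (ha : ‖a‖ < 1) (hx : ‖x‖ ≤ 1) : 0 < bubbleDenom l a x :=
  (mul_pos hl (mobiusDenom_pos ha hx)).trans_le (mul_mobiusDenom_le_bubbleDenom l ha hx)

lemma bubbleDenom_bpt (l : ℝ) (a : ℂ) (θ : ℝ) :
    bubbleDenom l a (bpt θ) = l * mobiusDenom a (bpt θ) := by
  simp [bubbleDenom]

lemma bubbleDenom_eq (l : ℝ) (a x : ℂ) :
    bubbleDenom l a x =
      bubbleDenomCoeff l a * ‖x‖ ^ 2 - 2 * l * inner ℝ a x + (l + (1 - ‖a‖ ^ 2)) := by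
  rw [bubbleDenom, mobiusDenom_eq, bubbleDenomCoeff]
  ring

lemma contDiff_bubbleDenom (l : ℝ) (a : ℂ) : ContDiff ℝ 1 (bubbleDenom l a) := by
  have hinner : ContDiff ℝ 1 fun x : ℂ => inner ℝ a x := contDiff_const.inner ℝ contDiff_id
  have hnorm : ContDiff ℝ 1 fun x : ℂ => ‖x‖ ^ 2 := contDiff_norm_sq ℝ
  rw [funext (bubbleDenom_eq l a)]
  fun_prop

lemma re_bubbleDenomGrad (l : ℝ) (a x : ℂ) :
    (bubbleDenomGrad l a x).re = 2 * (bubbleDenomCoeff l a * x.re - l * a.re) := by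
  simp [bubbleDenomGrad]

lemma im_bubbleDenomGrad (l : ℝ) (a x : ℂ) :
    (bubbleDenomGrad l a x).im = 2 * (bubbleDenomCoeff l a * x.im - l * a.im) := by
  simp [bubbleDenomGrad]

lemma hasFDerivAt_bubbleDenom (l : ℝ) (a x : ℂ) :
    HasFDerivAt (bubbleDenom l a) (innerSL ℝ (bubbleDenomGrad l a x)) x := by
  have hnorm := (hasStrictFDerivAt_norm_sq x).hasFDerivAt
  have hinner : HasFDerivAt (fun y : ℂ => inner ℝ a y) (innerSL ℝ a) x := (innerSL ℝ a).hasFDerivAt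
  rw [funext (bubbleDenom_eq l a)]
  refine (((hnorm.const_mul (bubbleDenomCoeff l a)).sub
    (hinner.const_mul (2 * l))).add_const _).congr_fderiv ?_
  ext v
  simp only [sub_apply, smul_apply, innerSL_apply_apply,
    smul_eq_mul, nsmul_eq_mul, Nat.cast_ofNat, inner_eq_re_mul_re_add_im_mul_im,
    re_bubbleDenomGrad, im_bubbleDenomGrad]
  ring

lemma norm_bubbleDenomGrad_sq (l : ℝ) (a x : ℂ) :
    ‖bubbleDenomGrad l a x‖ ^ 2 =
      4 * bubbleDenomCoeff l a * bubbleDenom l a x + 4 * (1 + l) * (1 - ‖a‖ ^ 2) ^ 2 := by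
  simp only [bubbleDenom_eq, ← re_sq_add_im_sq, inner_eq_re_mul_re_add_im_mul_im,
    re_bubbleDenomGrad, im_bubbleDenomGrad, bubbleDenomCoeff]
  ring

lemma continuousOn_one_div_bubbleDenom (hl : 0 < l) (ha : ‖a‖ < 1) :
    ContinuousOn (fun x => 1 / bubbleDenom l a x) (Metric.closedBall 0 1) :=
  continuousOn_const.div (contDiff_bubbleDenom l a).continuous.continuousOn fun _ hx =>
    (bubbleDenom_pos hl ha (mem_closedBall_zero_iff.1 hx)).ne'

-- This is `Δ log Q = (Q ΔQ - |∇Q|²) / Q²` for `Q = bubbleDenom l a`.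
lemma pd_bubbleDenomGrad_div_add (hQ : bubbleDenom l a x ≠ 0) :
    pd (fun y => (bubbleDenomGrad l a y).re / bubbleDenom l a y) 1 x +
        pd (fun y => (bubbleDenomGrad l a y).im / bubbleDenom l a y) Complex.I x =
      -4 * (1 + l) * ((1 - ‖a‖ ^ 2) ^ 2 / bubbleDenom l a x ^ 2) := by
  have hinv : HasFDerivAt (fun y => (bubbleDenom l a y)⁻¹) _ x :=
    (hasDerivAt_inv hQ).comp_hasFDerivAt x (hasFDerivAt_bubbleDenom l a x)
  have hre := ((Complex.reCLM.hasFDerivAt (x := x)).const_mul (bubbleDenomCoeff l a)).sub_const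
    (l * a.re) |>.const_mul 2
  have him := ((Complex.imCLM.hasFDerivAt (x := x)).const_mul (bubbleDenomCoeff l a)).sub_const
    (l * a.im) |>.const_mul 2
  simp only [Complex.reCLM_apply, ← re_bubbleDenomGrad] at hre
  simp only [Complex.imCLM_apply, ← im_bubbleDenomGrad] at him
  have hsq := norm_bubbleDenomGrad_sq l a x
  rw [← re_sq_add_im_sq] at hsq
  simp only [pd, div_eq_mul_inv, (hre.fun_mul hinv).fderiv, (him.fun_mul hinv).fderiv,
    add_apply, smul_apply, innerSL_apply_apply,
    inner_eq_re_mul_re_add_im_mul_im, Complex.reCLM_apply, Complex.imCLM_apply, smul_eq_mul,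
    Complex.one_re, Complex.one_im, Complex.I_re, Complex.I_im]
  field_simp
  linear_combination -hsq

lemma re_mul_add_im_mul_bubbleDenomGrad_div (hl : 0 < l) (ha : ‖a‖ < 1) (θ : ℝ) :
    (bpt θ).re * ((bubbleDenomGrad l a (bpt θ)).re / bubbleDenom l a (bpt θ)) +
        (bpt θ).im * ((bubbleDenomGrad l a (bpt θ)).im / bubbleDenom l a (bpt θ)) =
      1 - (1 - ‖a‖ ^ 2) * (l + 2) / l * (1 / mobiusDenom a (bpt θ)) := by
  have := (mobiusDenom_bpt_pos ha θ).ne'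
  have hcircle := re_sq_add_im_sq (bpt θ)
  have hQ := bubbleDenom_eq l a (bpt θ)
  rw [norm_bpt, one_pow] at hcircle
  rw [bubbleDenom_bpt, norm_bpt, inner_eq_re_mul_re_add_im_mul_im] at hQ
  rw [bubbleDenom_bpt, re_bubbleDenomGrad, im_bubbleDenomGrad]
  field_simp
  simp only [bubbleDenomCoeff] at hQ ⊢
  linear_combination 2 * (l * ‖a‖ ^ 2 - (1 - ‖a‖ ^ 2)) * hcircle - hQ

lemma setIntegral_one_sub_norm_sq_sq_div_bubbleDenom_sq (hl : 0 < l) (ha : ‖a‖ < 1) :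
    ∫ x in unitDisk, (1 - ‖a‖ ^ 2) ^ 2 / bubbleDenom l a x ^ 2 = π / (l * (1 + l)) := by
  have hQ : ∀ x ∈ Metric.closedBall (0 : ℂ) 1, bubbleDenom l a x ≠ 0 := fun x hx =>
    (bubbleDenom_pos hl ha (mem_closedBall_zero_iff.1 hx)).ne'
  have hgrad : ContDiff ℝ 1 (bubbleDenomGrad l a) := by unfold bubbleDenomGrad; fun_prop
  have hdiv := setIntegral_unitDisk_divergence
    (X := fun x => (bubbleDenomGrad l a x).re / bubbleDenom l a x)
    (Y := fun x => (bubbleDenomGrad l a x).im / bubbleDenom l a x)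
    (fun x hx => ((Complex.reCLM.contDiff.comp hgrad).contDiffAt (x := x)).div
      (contDiff_bubbleDenom l a).contDiffAt (hQ x hx))
    (fun x hx => ((Complex.imCLM.contDiff.comp hgrad).contDiffAt (x := x)).div
      (contDiff_bubbleDenom l a).contDiffAt (hQ x hx))
  rw [setIntegral_congr_fun (s := unitDisk) measurableSet_ball fun x hx =>
    pd_bubbleDenomGrad_div_add (hQ x (Metric.ball_subset_closedBall hx)),
    integral_const_mul] at hdiv
  have hflux : bint (fun x => x.re * ((bubbleDenomGrad l a x).re / bubbleDenom l a x) +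
      x.im * ((bubbleDenomGrad l a x).im / bubbleDenom l a x)) =
      2 * π - (1 - ‖a‖ ^ 2) * (l + 2) / l * (2 * π / (1 - ‖a‖ ^ 2)) := by
    rw [← bint_one_div_mobiusDenom ha, ← bint_const_mul, ← mul_one (2 * π), ← bint_const,
      ← bint_sub continuous_const (continuous_const.mul (continuous_one_div_mobiusDenom_bpt ha))]
    simp only [bint, re_mul_add_im_mul_bubbleDenomGrad_div hl ha]
  rw [hflux] at hdiv
  have := (one_sub_norm_sq_pos ha).ne'
  field_simp at hdiv ⊢
  linear_combination -hdiv / 4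

lemma setIntegral_one_div_bubbleDenom_le (hl : 0 < l) (ha : ‖a‖ < 1) :
    ∫ x in unitDisk, 1 / bubbleDenom l a x ≤ (∫ x in unitDisk, 1 / mobiusDenom a x) / l := by
  rw [← integral_div]
  refine setIntegral_unitDisk_mono (continuousOn_one_div_bubbleDenom hl ha)
    ((continuousOn_one_div_mobiusDenom ha).div_const l) fun x hx => ?_
  have hx1 := (mem_ball_zero_iff.1 hx).le
  rw [div_div, mul_comm]
  exact one_div_le_one_div_of_le (mul_pos hl (mobiusDenom_pos ha hx1))
    (mul_mobiusDenom_le_bubbleDenom l ha hx1)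

lemma bubbleDenomCoeff_mul_setIntegral_one_div_bubbleDenom_le (hl : 0 < l) (ha : ‖a‖ < 1) :
    bubbleDenomCoeff l a * ∫ x in unitDisk, 1 / bubbleDenom l a x ≤
      -π * Real.log (1 - ‖a‖ ^ 2) := by
  rcases le_total (bubbleDenomCoeff l a) 0 with hcoeff | hcoeff
  · have hint : 0 ≤ ∫ x in unitDisk, 1 / bubbleDenom l a x :=
      setIntegral_nonneg measurableSet_ball fun x hx =>
        (one_div_pos.2 (bubbleDenom_pos hl ha (mem_ball_zero_iff.1 hx).le)).le
    exact (mul_nonpos_of_nonpos_of_nonneg hcoeff hint).trans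
      (mul_nonneg_of_nonpos_of_nonpos (by linarith [pi_pos]) (log_one_sub_norm_sq_nonpos ha))
  · have hint : 0 ≤ ∫ x in unitDisk, 1 / mobiusDenom a x :=
      setIntegral_nonneg measurableSet_ball fun x _ => one_div_nonneg.2 (sq_nonneg _)
    calc bubbleDenomCoeff l a * ∫ x in unitDisk, 1 / bubbleDenom l a x
        ≤ bubbleDenomCoeff l a * ((∫ x in unitDisk, 1 / mobiusDenom a x) / l) :=
          mul_le_mul_of_nonneg_left (setIntegral_one_div_bubbleDenom_le hl ha) hcoeff
      _ = bubbleDenomCoeff l a / l * ∫ x in unitDisk, 1 / mobiusDenom a x := by ring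
      _ ≤ ‖a‖ ^ 2 * ∫ x in unitDisk, 1 / mobiusDenom a x := by
          refine mul_le_mul_of_nonneg_right ?_ hint
          rw [div_le_iff₀ hl, bubbleDenomCoeff]
          linarith [one_sub_norm_sq_pos ha]
      _ = -π * Real.log (1 - ‖a‖ ^ 2) := norm_sq_mul_setIntegral_one_div_mobiusDenom ha

end BubbleDenom

/-! ### Bubbles -/

/-- A `C¹` extension to the whole line of the logarithm on `[q, ∞)`, for `q > 0`: it continues
`log` below `q` by its tangent at `q`. -/
def logExt (q t : ℝ) : ℝ := Real.log q + ∫ s in q..t, (max s q)⁻¹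

section LogExt

variable {q t : ℝ}

lemma continuous_inv_max (hq : 0 < q) : Continuous fun s : ℝ => (max s q)⁻¹ :=
  (continuous_id.max continuous_const).inv₀ fun _ => (lt_max_of_lt_right hq).ne'

lemma hasDerivAt_logExt (hq : 0 < q) (t : ℝ) : HasDerivAt (logExt q) (max t q)⁻¹ t :=
  ((continuous_inv_max hq).integral_hasStrictDerivAt q t).hasDerivAt.const_add _

lemma contDiff_logExt (hq : 0 < q) : ContDiff ℝ 1 (logExt q) := by
  have hderiv : deriv (logExt q) = fun t => (max t q)⁻¹ :=
    funext fun t => (hasDerivAt_logExt hq t).deriv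
  exact contDiff_one_iff_deriv.2
    ⟨fun t => (hasDerivAt_logExt hq t).differentiableAt, hderiv ▸ continuous_inv_max hq⟩

lemma logExt_of_le (hq : 0 < q) (ht : q ≤ t) : logExt q t = Real.log t := by
  have ht0 := hq.trans_le ht
  have hint : ∫ s in q..t, (max s q)⁻¹ = ∫ s in q..t, s⁻¹ :=
    intervalIntegral.integral_congr fun s hs => by
      rw [Set.uIcc_of_le ht] at hs
      simp only [max_eq_left hs.1]
  rw [logExt, hint, integral_inv_of_pos hq ht0, Real.log_div ht0.ne' hq.ne', add_sub_cancel]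

end LogExt

/-- The bubble with center `a`, scale `l` and height `t`, characterized by
`exp (bubble / 2) = exp t * (1 - ‖a‖ ^ 2) / bubbleDenom l a` on the closed disk. Replacing `log` by
`logExt q` makes it `C¹` on the whole plane without changing it where `q ≤ bubbleDenom l a`. -/
def bubble (l q : ℝ) (a : ℂ) (t : ℝ) (x : ℂ) : ℝ :=
  2 * t + 2 * Real.log (1 - ‖a‖ ^ 2) - 2 * logExt q (bubbleDenom l a x)

/-- The parameters for which `bubble l q a` involves only the logarithm on the closed disk. -/
structure IsBubbleParam (l q : ℝ) (a : ℂ) : Prop where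
  scale_pos : 0 < l
  cutoff_pos : 0 < q
  norm_center_lt_one : ‖a‖ < 1
  cutoff_le : q ≤ l * (1 - ‖a‖) ^ 2

lemma contDiff_bubble {q : ℝ} (hq : 0 < q) (l : ℝ) (a : ℂ) (t : ℝ) :
    ContDiff ℝ 1 (bubble l q a t) :=
  contDiff_const.sub (contDiff_const.mul ((contDiff_logExt hq).comp (contDiff_bubbleDenom l a)))

lemma pd_bubble {q : ℝ} (hq : 0 < q) (l : ℝ) (a : ℂ) (t : ℝ) (v x : ℂ) :
    pd (bubble l q a t) v x =
      -2 * ((max (bubbleDenom l a x) q)⁻¹ * inner ℝ (bubbleDenomGrad l a x) v) := by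
  have hderiv : HasFDerivAt (bubble l q a t) _ x :=
    (((hasDerivAt_logExt hq _).comp_hasFDerivAt x (hasFDerivAt_bubbleDenom l a x)).const_mul
      2).const_sub (2 * t + 2 * Real.log (1 - ‖a‖ ^ 2))
  rw [pd, hderiv.fderiv]
  simp

namespace IsBubbleParam

variable {l q : ℝ} {a x : ℂ}

lemma cutoff_le_bubbleDenom (p : IsBubbleParam l q a) (hx : ‖x‖ ≤ 1) : q ≤ bubbleDenom l a x :=
  p.cutoff_le.trans (mul_one_sub_norm_sq_le_bubbleDenom p.scale_pos p.norm_center_lt_one hx)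

lemma bubbleDenom_pos (p : IsBubbleParam l q a) (hx : ‖x‖ ≤ 1) : 0 < bubbleDenom l a x :=
  _root_.bubbleDenom_pos p.scale_pos p.norm_center_lt_one hx

lemma one_sub_norm_sq_pos (p : IsBubbleParam l q a) : 0 < 1 - ‖a‖ ^ 2 :=
  _root_.one_sub_norm_sq_pos p.norm_center_lt_one

lemma contDiff_bubble (p : IsBubbleParam l q a) (t : ℝ) : ContDiff ℝ 1 (bubble l q a t) :=
  _root_.contDiff_bubble p.cutoff_pos l a t

lemma bubble_eq (p : IsBubbleParam l q a) (t : ℝ) (hx : ‖x‖ ≤ 1) :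
    bubble l q a t x =
      2 * (t + Real.log (1 - ‖a‖ ^ 2) - Real.log (bubbleDenom l a x)) := by
  rw [bubble, logExt_of_le p.cutoff_pos (p.cutoff_le_bubbleDenom hx)]
  ring

lemma exp_half_bubble (p : IsBubbleParam l q a) (t : ℝ) (hx : ‖x‖ ≤ 1) :
    Real.exp (bubble l q a t x / 2) =
      Real.exp t * (1 - ‖a‖ ^ 2) / bubbleDenom l a x := by
  rw [p.bubble_eq t hx, mul_div_cancel_left₀ _ two_ne_zero, Real.exp_sub, Real.exp_add,
    Real.exp_log p.one_sub_norm_sq_pos, Real.exp_log (p.bubbleDenom_pos hx)]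

lemma exp_bubble (p : IsBubbleParam l q a) (t : ℝ) (hx : ‖x‖ ≤ 1) :
    Real.exp (bubble l q a t x) =
      Real.exp t ^ 2 * ((1 - ‖a‖ ^ 2) ^ 2 / bubbleDenom l a x ^ 2) := by
  rw [← add_halves (bubble l q a t x), Real.exp_add, p.exp_half_bubble t hx]
  ring

lemma gradSq_bubble (p : IsBubbleParam l q a) (t : ℝ) (hx : ‖x‖ ≤ 1) :
    gradSq (bubble l q a t) x =
      16 * bubbleDenomCoeff l a * (1 / bubbleDenom l a x)
        + 16 * (1 + l) * ((1 - ‖a‖ ^ 2) ^ 2 / bubbleDenom l a x ^ 2) := by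
  have := (p.bubbleDenom_pos hx).ne'
  have hgrad := norm_bubbleDenomGrad_sq l a x
  rw [← re_sq_add_im_sq] at hgrad
  simp only [gradSq, pd_bubble p.cutoff_pos, max_eq_left (p.cutoff_le_bubbleDenom hx),
    inner_eq_re_mul_re_add_im_mul_im, Complex.one_re, Complex.one_im, Complex.I_re, Complex.I_im]
  field_simp
  linear_combination 4 * hgrad

lemma continuousOn_one_sub_norm_sq_sq_div (p : IsBubbleParam l q a) :
    ContinuousOn (fun x => (1 - ‖a‖ ^ 2) ^ 2 / bubbleDenom l a x ^ 2) (Metric.closedBall 0 1) :=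
  continuousOn_const.div ((contDiff_bubbleDenom l a).continuous.pow 2).continuousOn fun _ hx =>
    (pow_pos (p.bubbleDenom_pos (mem_closedBall_zero_iff.1 hx)) 2).ne'

lemma setIntegral_gradSq_bubble (p : IsBubbleParam l q a) (t : ℝ) :
    ∫ x in unitDisk, gradSq (bubble l q a t) x =
      16 * (bubbleDenomCoeff l a * ∫ x in unitDisk, 1 / bubbleDenom l a x) + 16 * π / l := by
  have := p.scale_pos
  have hone_div := integrableOn_unitDisk_of_continuousOn
    (continuousOn_one_div_bubbleDenom p.scale_pos p.norm_center_lt_one)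
  have hdiv_sq := integrableOn_unitDisk_of_continuousOn p.continuousOn_one_sub_norm_sq_sq_div
  rw [setIntegral_congr_fun (s := unitDisk) measurableSet_ball fun x hx =>
      p.gradSq_bubble t (mem_ball_zero_iff.1 hx).le,
    integral_add (hone_div.const_mul _) (hdiv_sq.const_mul _), integral_const_mul,
    integral_const_mul,
    setIntegral_one_sub_norm_sq_sq_div_bubbleDenom_sq p.scale_pos p.norm_center_lt_one]
  field_simp

lemma setIntegral_gradSq_bubble_le (p : IsBubbleParam l q a) (t : ℝ) :
    ∫ x in unitDisk, gradSq (bubble l q a t) x ≤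
      16 * π / l - 16 * π * Real.log (1 - ‖a‖ ^ 2) := by
  rw [p.setIntegral_gradSq_bubble t]
  linarith [bubbleDenomCoeff_mul_setIntegral_one_div_bubbleDenom_le p.scale_pos
    p.norm_center_lt_one]

-- On the circle `exp (bubble / 2)` is a multiple of the Poisson kernel with pole `a`.
lemma bint_mul_exp_half_bubble (p : IsBubbleParam l q a) (t : ℝ) {g : ℂ → ℝ}
    (hg : InnerProductSpace.HarmonicOnNhd g (Metric.closedBall 0 1)) :
    bint (fun x => g x * Real.exp (bubble l q a t x / 2)) = 2 * π * Real.exp t / l * g a := by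
  have hl := p.scale_pos.ne'
  have hcenter := p.one_sub_norm_sq_pos.ne'
  have hbint : bint (fun x => g x * Real.exp (bubble l q a t x / 2)) =
      bint fun x => Real.exp t * (1 - ‖a‖ ^ 2) / l * (g x / mobiusDenom a x) := by
    have hpoint (θ : ℝ) : g (bpt θ) * Real.exp (bubble l q a t (bpt θ) / 2) =
        Real.exp t * (1 - ‖a‖ ^ 2) / l * (g (bpt θ) / mobiusDenom a (bpt θ)) := by
      rw [p.exp_half_bubble t (norm_bpt θ).le, bubbleDenom_bpt]
      field_simp
    simp only [bint, hpoint]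
  rw [hbint, bint_const_mul, bint_div_mobiusDenom hg p.norm_center_lt_one]
  field_simp

lemma bint_exp_half_bubble (p : IsBubbleParam l q a) (t : ℝ) :
    bint (fun x => Real.exp (bubble l q a t x / 2)) = 2 * π * Real.exp t / l := by
  simpa using p.bint_mul_exp_half_bubble t (g := fun _ => 1)
    fun _ _ => InnerProductSpace.harmonicAt_const 1

lemma bint_re_mul_exp_half_bubble (p : IsBubbleParam l q a) (t : ℝ) :
    bint (fun x => x.re * Real.exp (bubble l q a t x / 2)) = 2 * π * Real.exp t / l * a.re :=
  p.bint_mul_exp_half_bubble t fun _ _ => analyticAt_id.harmonicAt_re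

lemma bint_im_mul_exp_half_bubble (p : IsBubbleParam l q a) (t : ℝ) :
    bint (fun x => x.im * Real.exp (bubble l q a t x / 2)) = 2 * π * Real.exp t / l * a.im :=
  p.bint_mul_exp_half_bubble t fun _ _ => analyticAt_id.harmonicAt_im

lemma bint_bubble (p : IsBubbleParam l q a) (t : ℝ) :
    bint (bubble l q a t) = 4 * π * (t - Real.log l + Real.log (1 - ‖a‖ ^ 2)) := by
  have hpos (θ : ℝ) := mobiusDenom_bpt_pos p.norm_center_lt_one θ
  have hbint : bint (bubble l q a t) =
      bint fun x => 2 * (t - Real.log l + Real.log (1 - ‖a‖ ^ 2))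
        - 2 * Real.log (mobiusDenom a x) := by
    have hpoint (θ : ℝ) : bubble l q a t (bpt θ) =
        2 * (t - Real.log l + Real.log (1 - ‖a‖ ^ 2))
          - 2 * Real.log (mobiusDenom a (bpt θ)) := by
      rw [p.bubble_eq t (norm_bpt θ).le, bubbleDenom_bpt,
        Real.log_mul p.scale_pos.ne' (hpos θ).ne']
      ring
    simp only [bint, hpoint]
  have hlog : Continuous fun θ => Real.log (mobiusDenom a (bpt θ)) :=
    ((continuous_mobiusDenom a).comp continuous_bpt).log fun θ => (hpos θ).ne'
  rw [hbint, bint_sub continuous_const (continuous_const.mul hlog), bint_const, bint_const_mul,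
    bint_log_mobiusDenom p.norm_center_lt_one]
  ring

lemma neg_log_le_setIntegral_gradSq_bubble (p : IsBubbleParam l q a) (t : ℝ) :
    -16 * π * Real.log (1 - ‖a‖ ^ 2) ≤ ∫ x in unitDisk, gradSq (bubble l q a t) x := by
  have hszego := szego_inequality_half (p.contDiff_bubble t)
  rw [p.bint_exp_half_bubble, p.bint_re_mul_exp_half_bubble, p.bint_im_mul_exp_half_bubble,
    p.bint_bubble] at hszego
  have hmoments : (2 * π * Real.exp t / l) ^ 2 - (2 * π * Real.exp t / l * a.re) ^ 2
      - (2 * π * Real.exp t / l * a.im) ^ 2 =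
      (2 * π) ^ 2 * Real.exp (2 * (t - Real.log l) + Real.log (1 - ‖a‖ ^ 2)) := by
    rw [Real.exp_add, Real.exp_log p.one_sub_norm_sq_pos, two_mul (t - _), Real.exp_add,
      Real.exp_sub, Real.exp_log p.scale_pos, ← re_sq_add_im_sq]
    ring
  rw [hmoments, mul_le_mul_iff_right₀ (by positivity), Real.exp_le_exp] at hszego
  have := pi_pos
  field_simp at hszego
  linarith

end IsBubbleParam

/-! ### Energy of bubbles -/

lemma setIntegral_gradSq_div_two_le_Tfun {u : ℂ → ℝ} (hu : ContDiff ℝ 1 u) :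
    (∫ x in unitDisk, gradSq u x) / 2 ≤ Tfun u := by
  have hgrad := continuous_gradSq hu
  have hcont := hu.continuous
  rw [← integral_div, Tfun]
  refine setIntegral_unitDisk_mono (by fun_prop) (by fun_prop) fun x _ => ?_
  linarith [Real.add_one_le_exp (u x)]

namespace IsBubbleParam

variable {K h : ℂ → ℝ} {l q k C h₀ : ℝ} {a x : ℂ}

lemma le_bint_mul_exp_half_bubble (p : IsBubbleParam l q a) (t : ℝ)
    (hh : Continuous fun θ => h (bpt θ)) (hh₀ : ∀ θ, h₀ ≤ h (bpt θ)) :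
    h₀ * (2 * π * Real.exp t / l) ≤ bint (fun x => h x * Real.exp (bubble l q a t x / 2)) := by
  have hcont := (p.contDiff_bubble t).continuous
  rw [← p.bint_exp_half_bubble t, ← bint_const_mul]
  exact bint_mono (by fun_prop) (hh.mul (by fun_prop)) fun θ =>
    mul_le_mul_of_nonneg_right (hh₀ θ) (Real.exp_pos _).le

lemma one_sub_norm_sq_sq_mul_div_le_one (p : IsBubbleParam l q a) (hx : ‖x‖ ≤ 1) :
    (1 - ‖x‖ ^ 2) ^ 2 * ((1 - ‖a‖ ^ 2) ^ 2 / bubbleDenom l a x ^ 2) ≤ 1 := by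
  have hpos := p.bubbleDenom_pos hx
  have hx2 : 0 ≤ 1 - ‖x‖ ^ 2 := sub_nonneg.2 (pow_le_one₀ (norm_nonneg x) hx)
  rw [← mul_div_assoc, ← mul_pow, mul_comm, div_le_one (by positivity)]
  exact pow_le_pow_left₀ (mul_nonneg p.one_sub_norm_sq_pos.le hx2)
    (one_sub_norm_sq_mul_le_bubbleDenom p.scale_pos a x) 2

lemma setIntegral_neg_two_mul_exp_bubble_le (p : IsBubbleParam l q a) (t : ℝ) (hK : Continuous K)
    (hk : 0 ≤ k) (hC : 0 ≤ C) (hKk : ∀ x ∈ unitDisk, -K x ≤ k + C * (1 - ‖x‖ ^ 2) ^ 2) :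
    ∫ x in unitDisk, -2 * K x * Real.exp (bubble l q a t x) ≤
      2 * π * Real.exp t ^ 2 * (k / l + C) := by
  have hl := p.scale_pos
  have hcont := (p.contDiff_bubble t).continuous
  have hdiv_sq := p.continuousOn_one_sub_norm_sq_sq_div
  calc ∫ x in unitDisk, -2 * K x * Real.exp (bubble l q a t x)
      ≤ ∫ x in unitDisk, (2 * Real.exp t ^ 2 * k * ((1 - ‖a‖ ^ 2) ^ 2 / bubbleDenom l a x ^ 2)
          + 2 * Real.exp t ^ 2 * C) := by
        refine setIntegral_unitDisk_mono (by fun_prop) (by fun_prop) fun x hx => ?_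
        have hx1 := (mem_ball_zero_iff.1 hx).le
        have hone := p.one_sub_norm_sq_sq_mul_div_le_one hx1
        rw [p.exp_bubble t hx1]
        set R := (1 - ‖a‖ ^ 2) ^ 2 / bubbleDenom l a x ^ 2
        have : 0 ≤ R := by positivity
        calc -2 * K x * (Real.exp t ^ 2 * R) = 2 * Real.exp t ^ 2 * (-K x * R) := by ring
          _ ≤ 2 * Real.exp t ^ 2 * ((k + C * (1 - ‖x‖ ^ 2) ^ 2) * R) := by gcongr; exact hKk x hx
          _ = 2 * Real.exp t ^ 2 * (k * R + C * ((1 - ‖x‖ ^ 2) ^ 2 * R)) := by ring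
          _ ≤ 2 * Real.exp t ^ 2 * (k * R + C * 1) := by gcongr
          _ = 2 * Real.exp t ^ 2 * k * R + 2 * Real.exp t ^ 2 * C := by ring
    _ = 2 * π * Real.exp t ^ 2 * (k / (l * (1 + l)) + C) := by
        rw [integral_add ((integrableOn_unitDisk_of_continuousOn hdiv_sq).const_mul _)
          (integrableOn_unitDisk_of_continuous continuous_const), integral_const_mul,
          setIntegral_one_sub_norm_sq_sq_div_bubbleDenom_sq hl p.norm_center_lt_one,
          setIntegral_unitDisk_const]
        ring
    _ ≤ 2 * π * Real.exp t ^ 2 * (k / l + C) := by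
        gcongr
        exact le_mul_of_one_le_right hl.le (by linarith)

theorem Ifun_bubble_le (p : IsBubbleParam l q a) (t : ℝ) (hK : Continuous K)
    (hh : Continuous fun θ => h (bpt θ)) (hk : 0 ≤ k) (hC : 0 ≤ C)
    (hKk : ∀ x ∈ unitDisk, -K x ≤ k + C * (1 - ‖x‖ ^ 2) ^ 2) (hh₀ : ∀ θ, h₀ ≤ h (bpt θ)) :
    Ifun K h (bubble l q a t) ≤
      8 * π / l + 8 * π * (t - Real.log l) + 2 * π * Real.exp t ^ 2 * (k / l + C)
        - 8 * π * Real.exp t * h₀ / l := by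
  have henergy := Ifun_add_mul_Tfun_eq hK hh 0 (p.contDiff_bubble t)
  simp only [zero_mul, add_zero, sub_zero] at henergy
  rw [henergy, p.bint_bubble]
  have hdisk := p.setIntegral_neg_two_mul_exp_bubble_le t hK hk hC hKk
  have hgrad := p.setIntegral_gradSq_bubble_le t
  have hbdry := p.le_bint_mul_exp_half_bubble t hh hh₀
  calc _ ≤ 1 / 2 * (16 * π / l - 16 * π * Real.log (1 - ‖a‖ ^ 2))
        + 2 * π * Real.exp t ^ 2 * (k / l + C)
        + 2 * (4 * π * (t - Real.log l + Real.log (1 - ‖a‖ ^ 2)))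
        - 4 * (h₀ * (2 * π * Real.exp t / l)) := by gcongr
    _ = _ := by ring

lemma Ieps_bubble_le (p : IsBubbleParam l q a) {t δ ε B : ℝ} (hδ : 0 ≤ δ) (hε : -1 < ε)
    (hεδ : ε ≤ -δ / 2) (hB : 0 ≤ B)
    (hI : Ifun K h (bubble l q a t) + 4 * π * δ * Real.log (1 - ‖a‖ ^ 2) ≤ -B) :
    Ieps K h ε (bubble l q a t) ≤ -B := by
  have hlog := log_one_sub_norm_sq_nonpos p.norm_center_lt_one
  have hgrad := p.neg_log_le_setIntegral_gradSq_bubble t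
  have hT := setIntegral_gradSq_div_two_le_Tfun (p.contDiff_bubble t)
  set T := Tfun (bubble l q a t)
  have hT_log : -8 * π * Real.log (1 - ‖a‖ ^ 2) ≤ T := by linarith
  have hT0 : 0 ≤ T :=
    (mul_nonneg_of_nonpos_of_nonpos (by linarith [pi_pos]) hlog).trans hT_log
  have hεT : ε * T ≤ 4 * π * δ * Real.log (1 - ‖a‖ ^ 2) := by
    calc ε * T ≤ -δ / 2 * T := by gcongr
      _ ≤ -δ / 2 * (-8 * π * Real.log (1 - ‖a‖ ^ 2)) :=
          mul_le_mul_of_nonpos_left hT_log (by linarith)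
      _ = _ := by ring
  rw [Ieps, div_le_iff₀ (by linarith)]
  nlinarith [mul_nonneg hB (show 0 ≤ -ε by linarith)]

end IsBubbleParam

/-! ### Continuity of bubbles in the H¹ norm -/

lemma pd_sub {u v : ℂ → ℝ} (hu : ContDiff ℝ 1 u) (hv : ContDiff ℝ 1 v) (w x : ℂ) :
    pd (fun x => u x - v x) w x = pd u w x - pd v w x := by
  rw [pd, fderiv_fun_sub (hu.differentiable one_ne_zero x) (hv.differentiable one_ne_zero x)]
  rfl

lemma H1normSq_sub {u v : ℂ → ℝ} (hu : ContDiff ℝ 1 u) (hv : ContDiff ℝ 1 v) :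
    H1normSq (fun x => u x - v x) = ∫ x in Metric.closedBall 0 1,
      ((pd u 1 x - pd v 1 x) ^ 2 + (pd u Complex.I x - pd v Complex.I x) ^ 2
        + (u x - v x) ^ 2) := by
  have hgrad := continuous_gradSq (hu.sub hv)
  have hsq : Continuous fun x => (u x - v x) ^ 2 := (hu.sub hv).continuous.pow 2
  have hball : unitDisk =ᵐ[volume] Metric.closedBall (0 : ℂ) 1 :=
    ae_eq_of_subset_of_measure_ge Metric.ball_subset_closedBall
      (Measure.addHaar_closedBall_eq_addHaar_ball volume 0 1).le
      measurableSet_ball.nullMeasurableSet measure_closedBall_lt_top.ne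
  rw [← setIntegral_congr_set hball, H1normSq,
    ← integral_add (integrableOn_unitDisk_of_continuous hgrad)
      (integrableOn_unitDisk_of_continuous hsq)]
  simp only [gradSq, pd_sub hu hv]

theorem H1ContinuousOn_of_continuous_uncurry {E : Type*} [PseudoMetricSpace E]
    [LocallyCompactSpace E] {G : E → ℂ → ℝ} (hsmooth : ∀ y, ContDiff ℝ 1 (G y))
    (hG : Continuous fun z : E × ℂ => G z.1 z.2)
    (hpd : ∀ w, Continuous fun z : E × ℂ => pd (G z.1) w z.2) (S : Set E) :
    H1ContinuousOn G S := by
  intro y _ r hr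
  have hpd_y (w : ℂ) := continuous_pd (hsmooth y) w
  have hG_y := (hsmooth y).continuous
  have hcont : Continuous fun y' => H1normSq fun x => G y' x - G y x := by
    simp only [H1normSq_sub (hsmooth _) (hsmooth y)]
    refine continuous_parametric_integral_of_continuous ?_ (isCompact_closedBall 0 1)
    unfold Function.uncurry
    fun_prop
  have hzero : H1normSq (fun x => G y x - G y x) = 0 := by
    rw [H1normSq_sub (hsmooth y) (hsmooth y)]
    simp
  obtain ⟨d, hd, hclose⟩ := Metric.continuousAt_iff.1 hcont.continuousAt (r ^ 2) (by positivity)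
  refine ⟨d, hd, fun y' _ hy' => (Real.sqrt_lt' hr).2 ?_⟩
  have hdist := hclose hy'
  rw [hzero, Real.dist_0_eq_abs] at hdist
  exact (le_abs_self _).trans_lt hdist

section JointContinuity

variable {X : Type*} [TopologicalSpace X] {a x : X → ℂ}

lemma continuous_bubbleDenom_comp (l : ℝ) (ha : Continuous a) (hx : Continuous x) :
    Continuous fun z => bubbleDenom l (a z) (x z) := by
  have := Complex.continuous_conj
  unfold bubbleDenom mobiusDenom
  fun_prop

lemma continuous_bubble_comp {q : ℝ} (hq : 0 < q) (l : ℝ) {t : X → ℝ} (ha : Continuous a)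
    (ht : Continuous t) (hx : Continuous x) (ha1 : ∀ z, ‖a z‖ < 1) :
    Continuous fun z => bubble l q (a z) (t z) (x z) := by
  have hlog : Continuous fun z => Real.log (1 - ‖a z‖ ^ 2) :=
    (by fun_prop : Continuous fun z => 1 - ‖a z‖ ^ 2).log
      fun z => (one_sub_norm_sq_pos (ha1 z)).ne'
  have hlogExt : Continuous fun z => logExt q (bubbleDenom l (a z) (x z)) :=
    (contDiff_logExt hq).continuous.comp (continuous_bubbleDenom_comp l ha hx)
  unfold bubble
  fun_prop

lemma continuous_pd_bubble_comp {q : ℝ} (hq : 0 < q) (l : ℝ) (t : X → ℝ) (ha : Continuous a)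
    (hx : Continuous x) (w : ℂ) :
    Continuous fun z => pd (bubble l q (a z) (t z)) w (x z) := by
  have hinv : Continuous fun z => (max (bubbleDenom l (a z) (x z)) q)⁻¹ :=
    (continuous_inv_max hq).comp (continuous_bubbleDenom_comp l ha hx)
  simp only [pd_bubble hq, bubbleDenomGrad, bubbleDenomCoeff]
  fun_prop

end JointContinuity

lemma H1ContinuousOn_bubble {E : Type*} [PseudoMetricSpace E] [LocallyCompactSpace E] {q : ℝ}
    (hq : 0 < q) (l : ℝ) {a : E → ℂ} {t : E → ℝ} (ha : Continuous a) (ht : Continuous t)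
    (ha1 : ∀ y, ‖a y‖ < 1) (S : Set E) :
    H1ContinuousOn (fun y => bubble l q (a y) (t y)) S :=
  H1ContinuousOn_of_continuous_uncurry (fun y => contDiff_bubble hq l (a y) (t y))
    (continuous_bubble_comp hq l (by fun_prop) (by fun_prop) continuous_snd fun z => ha1 z.1)
    (fun w => continuous_pd_bubble_comp hq l (fun z => t z.1) (by fun_prop) continuous_snd w) S

/-! ### Comparison of the curvatures -/

lemma exists_forall_le_add_mul_of_isCompact {X : Type*} [TopologicalSpace X] {s : Set X}
    (hs : IsCompact s) {f g : X → ℝ} (hf : Continuous f) (hg : Continuous g)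
    (hg0 : ∀ x ∈ s, 0 ≤ g x) {k : ℝ} (hfg : ∀ x ∈ s, g x = 0 → f x < k) :
    ∃ C ≥ 0, ∀ x ∈ s, f x ≤ k + C * g x := by
  set t := s ∩ {x | k ≤ f x}
  have ht : IsCompact t := hs.inter_right (isClosed_le continuous_const hf)
  have hgt : ∀ x ∈ t, 0 < g x := fun x hx =>
    (hg0 x hx.1).lt_of_ne' fun h0 => (hfg x hx.1 h0).not_ge hx.2
  obtain ⟨C, hC⟩ := ht.bddAbove_image (f := fun x => (f x - k) / g x)
    ((hf.sub continuous_const).continuousOn.div hg.continuousOn fun x hx => (hgt x hx).ne')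
  refine ⟨max C 0, le_max_right _ _, fun x hx => ?_⟩
  rcases le_total k (f x) with hkf | hfk
  · have hle := (hC ⟨x, ⟨hx, hkf⟩, rfl⟩).trans (le_max_left C 0)
    rw [div_le_iff₀ (hgt x ⟨hx, hkf⟩)] at hle
    linarith
  · linarith [mul_nonneg (le_max_right C 0) (hg0 x hx)]

lemma exists_forall_bpt_ge {h : ℂ → ℝ} (hh : Continuous fun θ => h (bpt θ)) :
    ∃ θ₀, ∀ θ, h (bpt θ₀) ≤ h (bpt θ) := by
  have hper : Function.Periodic (fun θ => h (bpt θ)) (2 * π) := fun θ =>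
    congrArg h (periodic_bpt θ)
  obtain ⟨_, ⟨θ₀, rfl⟩, hleast⟩ :=
    (hper.compact_of_continuous two_pi_pos.ne' hh).exists_isLeast (Set.range_nonempty _)
  exact ⟨θ₀, fun θ => hleast (Set.mem_range_self θ)⟩

lemma exists_curvature_bounds {K h : ℂ → ℝ} (hK : Continuous K)
    (hh : Continuous fun θ => h (bpt θ))
    (hmin : ∀ x ∈ unitCircle, ∀ y ∈ unitCircle, Real.sqrt (-K y) < h x) :
    ∃ h₀ > 0, ∃ k ≥ 0, k < h₀ ^ 2 ∧ ∃ C ≥ 0, (∀ θ, h₀ ≤ h (bpt θ)) ∧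
      ∀ x ∈ unitDisk, -K x ≤ k + C * (1 - ‖x‖ ^ 2) ^ 2 := by
  obtain ⟨θ₀, hθ₀⟩ := exists_forall_bpt_ge hh
  obtain ⟨y₀, hy₀, hmax⟩ := (isCompact_sphere (0 : ℂ) 1).exists_isMaxOn
    ⟨bpt 0, bpt_mem_unitCircle 0⟩ (Real.continuous_sqrt.comp hK.neg).continuousOn
  obtain ⟨r, hr, hrh⟩ := exists_between (hmin _ (bpt_mem_unitCircle θ₀) y₀ hy₀)
  have hr0 := (Real.sqrt_nonneg _).trans_lt hr
  obtain ⟨C, hC, hbound⟩ := exists_forall_le_add_mul_of_isCompact (isCompact_closedBall (0 : ℂ) 1)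
    (f := fun x => -K x) (g := fun x => (1 - ‖x‖ ^ 2) ^ 2) (k := r ^ 2) (by fun_prop)
    (by fun_prop) (fun x _ => sq_nonneg _) fun x _ hx0 => by
      have hx : ‖x‖ = 1 := (pow_eq_one_iff_of_nonneg (norm_nonneg x) two_ne_zero).1
        (sub_eq_zero.1 (pow_eq_zero_iff two_ne_zero |>.1 hx0)).symm
      exact (Real.sqrt_lt' hr0).1 ((hmax (mem_sphere_zero_iff_norm.2 hx)).trans_lt hr)
  exact ⟨h (bpt θ₀), hr0.trans hrh, r ^ 2, sq_nonneg r, pow_lt_pow_left₀ hrh hr0.le two_ne_zero,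
    C, hC, hθ₀, fun x hx => hbound x (Metric.ball_subset_closedBall hx)⟩

/-! ### A sphere of bubbles of low energy -/

lemma eventually_add_mul_le_of_tendsto_atBot {α : Type*} {f : α → ℝ} {F : Filter α}
    (hf : Tendsto f F atBot) {c : ℝ} (hc : 0 < c) (b B : ℝ) : ∀ᶠ x in F, b + c * f x ≤ B :=
  (tendsto_atBot_add_const_left F b (hf.const_mul_atBot hc)).eventually_le_atBot B

lemma tendsto_neg_log_sub_div_nhdsGT_zero {c : ℝ} (hc : 0 < c) :
    Tendsto (fun l => -Real.log l - c / l) (nhdsWithin 0 (Set.Ioi 0)) atBot := by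
  have hlog : ∀ᶠ x : ℝ in atTop, Real.log x - c * x ≤ -(c / 2) * x := by
    filter_upwards [Real.isLittleO_log_id_atTop.bound (half_pos hc), eventually_ge_atTop 0]
      with x hx hx0
    have hle := (Real.le_norm_self _).trans hx
    rw [id, Real.norm_of_nonneg hx0] at hle
    linarith
  have hatTop : Tendsto (fun x : ℝ => Real.log x - c * x) atTop atBot :=
    tendsto_atBot_mono' _ hlog (tendsto_id.const_mul_atTop_of_neg (by linarith))
  refine (hatTop.comp tendsto_inv_nhdsGT_zero).congr fun l => ?_
  simp only [Function.comp_apply, Real.log_inv, div_eq_mul_inv]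

lemma tendsto_log_one_sub_sq_nhdsLT_one :
    Tendsto (fun m : ℝ => Real.log (1 - m ^ 2)) (nhdsWithin 1 (Set.Iio 1)) atBot := by
  refine Real.tendsto_log_nhdsGT_zero.comp (tendsto_nhdsWithin_iff.2 ⟨?_, ?_⟩)
  · have hcont : Continuous fun m : ℝ => 1 - m ^ 2 := by fun_prop
    simpa using (hcont.tendsto 1).mono_left nhdsWithin_le_nhds
  · filter_upwards [Ioo_mem_nhdsLT zero_lt_one] with m hm
    exact sub_pos.2 (pow_lt_one₀ hm.1.le hm.2 two_ne_zero)

/-- The projection of a point of `ℝ³` to the plane of its first two coordinates. -/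
def horizontal (y : EuclideanSpace ℝ (Fin 3)) : ℂ := ⟨y 0, y 1⟩

/-- The center of the bubble at `y ∈ 𝕊²`: it points in the horizontal direction of `y` and has
constant norm `m` away from the polar caps `1 / 2 < |y 2|`. -/
def bubbleCenter (m : ℝ) (y : EuclideanSpace ℝ (Fin 3)) : ℂ :=
  m • unitBallProj ((2 : ℝ) • horizontal y)

/-- The height of the bubble at `y ∈ 𝕊²`: it equals `t₀` on the northern polar cap `1 / 2 ≤ y 2`
and `t₁` on the southern one, and is affine in `y 2` in between. -/
def bubbleHeight (t₀ t₁ : ℝ) (y : EuclideanSpace ℝ (Fin 3)) : ℝ :=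
  t₁ + (t₀ - t₁) * max 0 (min 1 (y 2 + 1 / 2))

/-- The map `Λ` of the linking geometry. The cutoff is the largest one that is admissible for all
centers of norm at most `m`. -/
def bubbleSphere (l m t₀ t₁ : ℝ) (y : EuclideanSpace ℝ (Fin 3)) : ℂ → ℝ :=
  bubble l (l * (1 - m) ^ 2) (bubbleCenter m y) (bubbleHeight t₀ t₁ y)

section Parametrization

variable {m t₀ t₁ : ℝ} {y : EuclideanSpace ℝ (Fin 3)}

lemma norm_horizontal_sq_add_sq (y : EuclideanSpace ℝ (Fin 3)) :
    ‖horizontal y‖ ^ 2 + y 2 ^ 2 = ‖y‖ ^ 2 := by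
  simp [← re_sq_add_im_sq, EuclideanSpace.norm_sq_eq, Fin.sum_univ_three, horizontal]

lemma continuous_horizontal : Continuous horizontal := by
  have heq : horizontal = fun y => (y 0 : ℂ) + (y 1 : ℂ) * Complex.I :=
    funext fun y => Complex.mk_eq_add_mul_I _ _
  rw [heq]
  fun_prop

lemma continuous_bubbleCenter (m : ℝ) : Continuous (bubbleCenter m) :=
  (continuous_unitBallProj.comp (continuous_horizontal.const_smul (2 : ℝ))).const_smul m

lemma continuous_bubbleHeight (t₀ t₁ : ℝ) : Continuous (bubbleHeight t₀ t₁) := by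
  unfold bubbleHeight
  fun_prop

lemma norm_bubbleCenter_le (hm : 0 ≤ m) (y : EuclideanSpace ℝ (Fin 3)) :
    ‖bubbleCenter m y‖ ≤ m := by
  rw [bubbleCenter, norm_smul, Real.norm_of_nonneg hm]
  exact mul_le_of_le_one_right hm (norm_unitBallProj_le _)

lemma norm_bubbleCenter (hm : 0 ≤ m) (hy : ‖y‖ = 1) (hy2 : |y 2| ≤ 1 / 2) :
    ‖bubbleCenter m y‖ = m := by
  have hhorizontal : 1 / 2 ≤ ‖horizontal y‖ := by
    have hsq := norm_horizontal_sq_add_sq y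
    rw [hy] at hsq
    have hy2_sq : y 2 ^ 2 ≤ (1 / 2) ^ 2 := sq_le_sq' (abs_le.1 hy2).1 (abs_le.1 hy2).2
    exact le_of_sq_le_sq (by linarith) (norm_nonneg _)
  rw [bubbleCenter, norm_smul, Real.norm_of_nonneg hm, norm_unitBallProj_of_le_norm, mul_one]
  rw [norm_smul, Real.norm_two]
  linarith

lemma exists_pos_bubbleCenter_eq_smul (hm : 0 < m) (y : EuclideanSpace ℝ (Fin 3)) :
    ∃ c > (0 : ℝ), bubbleCenter m y = c • horizontal y := by
  refine ⟨m * (max 1 ‖(2 : ℝ) • horizontal y‖)⁻¹ * 2, by positivity, ?_⟩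
  rw [bubbleCenter, unitBallProj, smul_smul, smul_smul]

lemma bubbleHeight_of_ge (hy2 : 1 / 2 ≤ y 2) : bubbleHeight t₀ t₁ y = t₀ := by
  rw [bubbleHeight, min_eq_left (by linarith), max_eq_right zero_le_one]
  ring

lemma bubbleHeight_of_le (hy2 : y 2 ≤ -(1 / 2)) : bubbleHeight t₀ t₁ y = t₁ := by
  rw [bubbleHeight, max_eq_left (min_le_of_right_le (by linarith)), mul_zero, add_zero]

lemma bubbleHeight_le (ht : t₁ ≤ t₀) (y : EuclideanSpace ℝ (Fin 3)) :
    bubbleHeight t₀ t₁ y ≤ t₀ := by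
  have hle : max 0 (min 1 (y 2 + 1 / 2)) ≤ 1 := max_le zero_le_one (min_le_left _ _)
  have := mul_le_of_le_one_right (sub_nonneg.2 ht) hle
  rw [bubbleHeight]
  linarith

lemma isBubbleParam_bubbleCenter {l : ℝ} (hl : 0 < l) (hm : m ∈ Set.Ioo 0 1)
    (y : EuclideanSpace ℝ (Fin 3)) : IsBubbleParam l (l * (1 - m) ^ 2) (bubbleCenter m y) where
  scale_pos := hl
  cutoff_pos := mul_pos hl (pow_pos (sub_pos.2 hm.2) 2)
  norm_center_lt_one := (norm_bubbleCenter_le hm.1.le y).trans_lt hm.2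
  cutoff_le := by
    have := norm_bubbleCenter_le hm.1.le y
    have := hm.2
    gcongr

end Parametrization

section BubbleSphere

variable {K h : ℂ → ℝ} {l m t₀ t₁ δ B D : ℝ}

lemma contDiff_bubbleSphere (hl : 0 < l) (hm : m ∈ Set.Ioo 0 1)
    (y : EuclideanSpace ℝ (Fin 3)) : ContDiff ℝ 1 (bubbleSphere l m t₀ t₁ y) :=
  (isBubbleParam_bubbleCenter hl hm y).contDiff_bubble _

lemma H1ContinuousOn_bubbleSphere (hl : 0 < l) (hm : m ∈ Set.Ioo 0 1)
    (S : Set (EuclideanSpace ℝ (Fin 3))) : H1ContinuousOn (bubbleSphere l m t₀ t₁) S :=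
  H1ContinuousOn_bubble (isBubbleParam_bubbleCenter hl hm 0).cutoff_pos l
    (continuous_bubbleCenter m) (continuous_bubbleHeight t₀ t₁)
    (fun y => (isBubbleParam_bubbleCenter hl hm y).norm_center_lt_one) S

/-- On the northern cap the energy is low by the choice of `t₀`, on the southern cap by that of
`t₁`, and near the equator by the logarithmic term, where the center has norm `m`. -/
lemma Ifun_bubbleSphere_add_log_le (hm : m ∈ Set.Ioo 0 1) (hδ : 0 ≤ δ) (ht : t₁ ≤ t₀)
    (hnorth : ∀ y, Ifun K h (bubble l (l * (1 - m) ^ 2) (bubbleCenter m y) t₀) ≤ -B)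
    (hheight : ∀ y, ∀ t ≤ t₀,
      Ifun K h (bubble l (l * (1 - m) ^ 2) (bubbleCenter m y) t) ≤ D + 8 * π * t)
    (hequator : D + 8 * π * t₀ + 4 * π * δ * Real.log (1 - m ^ 2) ≤ -B)
    (hsouth : D + 8 * π * t₁ ≤ -B) {y : EuclideanSpace ℝ (Fin 3)} (hy : ‖y‖ = 1) :
    Ifun K h (bubbleSphere l m t₀ t₁ y)
      + 4 * π * δ * Real.log (1 - ‖bubbleCenter m y‖ ^ 2) ≤ -B := by
  have hlog : 4 * π * δ * Real.log (1 - ‖bubbleCenter m y‖ ^ 2) ≤ 0 :=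
    mul_nonpos_of_nonneg_of_nonpos (by positivity)
      (log_one_sub_norm_sq_nonpos ((norm_bubbleCenter_le hm.1.le y).trans_lt hm.2))
  have hle := hheight y _ (bubbleHeight_le ht y)
  rw [bubbleSphere]
  rcases le_total (1 / 2) (y 2) with hy_north | hy_north
  · rw [bubbleHeight_of_ge hy_north]
    linarith [hnorth y]
  rcases le_total (y 2) (-(1 / 2)) with hy_south | hy_south
  · rw [bubbleHeight_of_le hy_south] at hle ⊢
    linarith
  · rw [norm_bubbleCenter hm.1.le hy (abs_le.2 ⟨hy_south, hy_north⟩)]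
    have : 8 * π * bubbleHeight t₀ t₁ y ≤ 8 * π * t₀ := by
      gcongr
      exact bubbleHeight_le ht y
    linarith

end BubbleSphere

namespace IsBubbleParam

variable {K h : ℂ → ℝ} {l q k C h₀ t t₀ : ℝ} {a : ℂ}

/-- The height `log (2 / h₀)` makes the boundary term `-16 * π / l` outweigh the Dirichlet term
`8 * π / l`. -/
lemma Ifun_bubble_log_two_div_le (p : IsBubbleParam l q a) (hK : Continuous K)
    (hh : Continuous fun θ => h (bpt θ)) (hk : 0 ≤ k) (hC : 0 ≤ C)
    (hKk : ∀ x ∈ unitDisk, -K x ≤ k + C * (1 - ‖x‖ ^ 2) ^ 2) (hpos : 0 < h₀)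
    (hh₀ : ∀ θ, h₀ ≤ h (bpt θ)) :
    Ifun K h (bubble l q a (Real.log (2 / h₀))) ≤
      8 * π * (Real.log (2 / h₀) + C / h₀ ^ 2)
        + 8 * π * (-Real.log l - (1 - k / h₀ ^ 2) / l) := by
  refine (p.Ifun_bubble_le _ hK hh hk hC hKk hh₀).trans_eq ?_
  have := p.scale_pos
  rw [Real.exp_log (by positivity)]
  field_simp
  ring

lemma Ifun_bubble_le_of_le (p : IsBubbleParam l q a) (hK : Continuous K)
    (hh : Continuous fun θ => h (bpt θ)) (hk : 0 ≤ k) (hC : 0 ≤ C)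
    (hKk : ∀ x ∈ unitDisk, -K x ≤ k + C * (1 - ‖x‖ ^ 2) ^ 2) (hpos : 0 ≤ h₀)
    (hh₀ : ∀ θ, h₀ ≤ h (bpt θ)) (ht : t ≤ t₀) :
    Ifun K h (bubble l q a t) ≤
      8 * π / l - 8 * π * Real.log l + 2 * π * Real.exp t₀ ^ 2 * (k / l + C) + 8 * π * t := by
  have := p.scale_pos
  have hdisk : 2 * π * Real.exp t ^ 2 * (k / l + C) ≤ 2 * π * Real.exp t₀ ^ 2 * (k / l + C) := by
    gcongr
  have hbdry : 0 ≤ 8 * π * Real.exp t * h₀ / l := by positivity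
  linarith [p.Ifun_bubble_le t hK hh hk hC hKk hh₀]

end IsBubbleParam

theorem exists_bubbleSphere_energy_le {K h : ℂ → ℝ} (hK : Continuous K)
    (hh : Continuous fun θ => h (bpt θ))
    (hmin : ∀ x ∈ unitCircle, ∀ y ∈ unitCircle, Real.sqrt (-K y) < h x) {δ : ℝ} (hδ : 0 < δ)
    (B : ℝ) :
    ∃ l > 0, ∃ m ∈ Set.Ioo 0 1, ∃ t₀ t₁, 1 < 2 * π * Real.exp t₀ / l ∧
      2 * π * Real.exp t₁ / l < 1 ∧ ∀ y : EuclideanSpace ℝ (Fin 3), ‖y‖ = 1 →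
        Ifun K h (bubbleSphere l m t₀ t₁ y)
          + 4 * π * δ * Real.log (1 - ‖bubbleCenter m y‖ ^ 2) ≤ -B := by
  obtain ⟨h₀, hh₀pos, k, hk, hkh, C, hC, hh₀, hKk⟩ := exists_curvature_bounds hK hh hmin
  have hgap : 0 < 1 - k / h₀ ^ 2 := sub_pos.2 ((div_lt_one (by positivity)).2 hkh)
  have h8π : 0 < 8 * π := by positivity
  set t₀ := Real.log (2 / h₀)
  obtain ⟨l, ⟨hl, hl_top⟩, hl_north⟩ :
      ∃ l ∈ Set.Ioo 0 (2 * π * Real.exp t₀),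
        8 * π * (t₀ + C / h₀ ^ 2) + 8 * π * (-Real.log l - (1 - k / h₀ ^ 2) / l) ≤ -B :=
    ((eventually_mem_set.2 (Ioo_mem_nhdsGT (by positivity))).and
      (eventually_add_mul_le_of_tendsto_atBot (tendsto_neg_log_sub_div_nhdsGT_zero hgap)
        h8π _ _)).exists
  set D := 8 * π / l - 8 * π * Real.log l + 2 * π * Real.exp t₀ ^ 2 * (k / l + C)
  obtain ⟨m, hm, hm_equator⟩ :
      ∃ m ∈ Set.Ioo (0 : ℝ) 1, D + 8 * π * t₀ + 4 * π * δ * Real.log (1 - m ^ 2) ≤ -B :=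
    ((eventually_mem_set.2 (Ioo_mem_nhdsLT zero_lt_one)).and
      (eventually_add_mul_le_of_tendsto_atBot tendsto_log_one_sub_sq_nhdsLT_one
        (by positivity) _ _)).exists
  obtain ⟨t₁, ht, ht_bot, ht_south⟩ :
      ∃ t₁ ≤ t₀, Real.exp t₁ < l / (2 * π) ∧ D + 8 * π * t₁ ≤ -B :=
    ((eventually_le_atBot t₀).and
      ((Real.tendsto_exp_atBot.eventually_lt_const (by positivity)).and
        (eventually_add_mul_le_of_tendsto_atBot tendsto_id h8π D _))).exists
  have p := isBubbleParam_bubbleCenter hl hm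
  refine ⟨l, hl, m, hm, t₀, t₁, (one_lt_div hl).2 hl_top, ?_, fun y hy =>
    Ifun_bubbleSphere_add_log_le hm hδ.le ht
      (fun y => ((p y).Ifun_bubble_log_two_div_le hK hh hk hC hKk hh₀pos hh₀).trans hl_north)
      (fun y t ht => (p y).Ifun_bubble_le_of_le hK hh hk hC hKk hh₀pos.le hh₀ ht)
      hm_equator ht_south hy⟩
  rw [div_lt_one hl, mul_comm, ← lt_div_iff₀ two_pi_pos]
  exact ht_bot

/-! ### Linking -/

/-- The boundary barycenter and the excess boundary mass of `u`; the zeros of this map are the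
elements of `M`. -/
def constraintMap (u : ℂ → ℝ) : EuclideanSpace ℝ (Fin 3) :=
  !₂[bint fun x => x.re * Real.exp (u x / 2), bint fun x => x.im * Real.exp (u x / 2),
    bint (fun x => Real.exp (u x / 2)) - 1]

lemma memM_of_constraintMap_eq_zero {u : ℂ → ℝ} (hu : ContDiff ℝ 1 u)
    (hzero : constraintMap u = 0) : MemM u := by
  have hcoord (i : Fin 3) : constraintMap u i = 0 := by rw [hzero, PiLp.zero_apply]
  exact ⟨hu, sub_eq_zero.1 (hcoord 2), hcoord 0, hcoord 1⟩

lemma continuousOn_constraintMap {E : Type*} [PseudoMetricSpace E] {S : Set E} {η : E → ℂ → ℝ}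
    (hη : H1ContinuousOn η S) (hsmooth : ∀ y ∈ S, ContDiff ℝ 1 (η y)) :
    ContinuousOn (fun y => constraintMap (η y)) S := by
  refine (PiLp.continuous_toLp 2 _).comp_continuousOn (continuousOn_pi.2 fun i => ?_)
  fin_cases i
  · exact continuousOn_bint_mul_exp_half hη hsmooth Complex.continuous_re fun θ =>
      (Complex.abs_re_le_norm _).trans (norm_bpt θ).le
  · exact continuousOn_bint_mul_exp_half hη hsmooth Complex.continuous_im fun θ =>
      (Complex.abs_im_le_norm _).trans (norm_bpt θ).le
  · have hmass := continuousOn_bint_mul_exp_half hη hsmooth (p := fun _ => 1) continuous_const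
      fun θ => abs_one.le
    simp only [one_mul] at hmass
    exact hmass.sub continuousOn_const

lemma IsBubbleParam.constraintMap_bubble {l q : ℝ} {a : ℂ} (p : IsBubbleParam l q a) (t : ℝ) :
    constraintMap (bubble l q a t) =
      !₂[2 * π * Real.exp t / l * a.re, 2 * π * Real.exp t / l * a.im,
        2 * π * Real.exp t / l - 1] := by
  rw [constraintMap, p.bint_re_mul_exp_half_bubble, p.bint_im_mul_exp_half_bubble,
    p.bint_exp_half_bubble]

lemma convex_comb_pos {s b c : ℝ} (hs : s ∈ Set.Icc 0 1) (hb : 0 < b) (hc : 0 < c) :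
    0 < (1 - s) * b + s * c :=
  (convex_Ioi (0 : ℝ)) hb hc (sub_nonneg.2 hs.2) hs.1 (by ring)

/-- A zero of the segment lies over the vertical axis, so `y` is one of the poles. -/
lemma segment_ne_zero {v y : EuclideanSpace ℝ (Fin 3)} (hy : ‖y‖ = 1) {c : ℝ} (hc : 0 < c)
    (hv0 : v 0 = c * y 0) (hv1 : v 1 = c * y 1) (hnorth : y 2 = 1 → 0 < v 2)
    (hsouth : y 2 = -1 → v 2 < 0) {s : ℝ} (hs : s ∈ Set.Icc 0 1) : (1 - s) • v + s • y ≠ 0 := by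
  intro hzero
  have hcoord (i : Fin 3) : (1 - s) * v i + s * y i = 0 := by
    simpa using congrArg (fun w : EuclideanSpace ℝ (Fin 3) => w i) hzero
  have hcomb := (convex_comb_pos hs hc one_pos).ne'
  have hy0 : y 0 = 0 := (mul_eq_zero.1 (by linear_combination hcoord 0 - (1 - s) * hv0 :
    ((1 - s) * c + s * 1) * y 0 = 0)).resolve_left hcomb
  have hy1 : y 1 = 0 := (mul_eq_zero.1 (by linear_combination hcoord 1 - (1 - s) * hv1 :
    ((1 - s) * c + s * 1) * y 1 = 0)).resolve_left hcomb
  have hy2 : y 2 ^ 2 = 1 := by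
    simpa [hy, ← re_sq_add_im_sq, horizontal, hy0, hy1] using norm_horizontal_sq_add_sq y
  have hvertical := hcoord 2
  rcases sq_eq_one_iff.1 hy2 with hy2 | hy2 <;> rw [hy2] at hvertical
  · exact (convex_comb_pos hs (hnorth hy2) one_pos).ne' hvertical
  · linarith [convex_comb_pos hs (neg_pos.2 (hsouth hy2)) one_pos]

lemma segment_constraintMap_bubbleSphere_ne_zero {l m t₀ t₁ : ℝ} (hl : 0 < l)
    (hm : m ∈ Set.Ioo 0 1) (htop : 1 < 2 * π * Real.exp t₀ / l)
    (hbot : 2 * π * Real.exp t₁ / l < 1) {y : EuclideanSpace ℝ (Fin 3)} (hy : ‖y‖ = 1) {s : ℝ}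
    (hs : s ∈ Set.Icc 0 1) : (1 - s) • constraintMap (bubbleSphere l m t₀ t₁ y) + s • y ≠ 0 := by
  obtain ⟨c, hc, hcenter⟩ := exists_pos_bubbleCenter_eq_smul hm.1 y
  rw [bubbleSphere, (isBubbleParam_bubbleCenter hl hm y).constraintMap_bubble, hcenter]
  set t := bubbleHeight t₀ t₁ y with ht
  refine segment_ne_zero hy (c := 2 * π * Real.exp t / l * c) (by positivity) ?_ ?_
    (fun hy2 => ?_) (fun hy2 => ?_) hs
  · simp [horizontal, mul_assoc]
  · simp [horizontal, mul_assoc]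
  · rw [bubbleHeight_of_ge (by rw [hy2]; norm_num)] at ht
    simpa [ht] using htop
  · rw [bubbleHeight_of_le (by rw [hy2]; norm_num)] at ht
    simpa [ht] using hbot

theorem exists_memM_of_eqOn_bubbleSphere {l m t₀ t₁ : ℝ} (hl : 0 < l) (hm : m ∈ Set.Ioo 0 1)
    (htop : 1 < 2 * π * Real.exp t₀ / l) (hbot : 2 * π * Real.exp t₁ / l < 1)
    {η : EuclideanSpace ℝ (Fin 3) → ℂ → ℝ} (hη : H1ContinuousOn η (Metric.closedBall 0 1))
    (hsmooth : ∀ y ∈ Metric.closedBall 0 1, ContDiff ℝ 1 (η y))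
    (hsphere : ∀ y ∈ Metric.sphere 0 1, η y = bubbleSphere l m t₀ t₁ y) :
    ∃ y ∈ Metric.closedBall 0 1, MemM (η y) := by
  obtain ⟨y, hy, hzero⟩ := exists_eq_zero_of_segment_ne_zero
    (continuousOn_constraintMap hη hsmooth) fun y hy s hs => by
      rw [hsphere y hy]
      exact segment_constraintMap_bubbleSphere_ne_zero hl hm htop hbot
        (mem_sphere_zero_iff_norm.1 hy) hs
  exact ⟨y, hy, memM_of_constraintMap_eq_zero (hsmooth y hy) hzero⟩

theorem linking_geometry_general {K h : ℂ → ℝ} (hK : Continuous K)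
    (hKneg : ∀ x ∈ closedUnitDisk, K x < 0) (hh : Continuous fun θ => h (bpt θ))
    (hmin : ∀ x ∈ unitCircle, ∀ y ∈ unitCircle, Real.sqrt (-K y) < h x) :
    ∃ δ₀ > (0:ℝ), ∀ δ ∈ Set.Ioo (0:ℝ) δ₀,
      ∃ (Cbar : ℝ) (Λ : EuclideanSpace ℝ (Fin 3) → ℂ → ℝ),
        (∀ y ∈ Metric.sphere (0 : EuclideanSpace ℝ (Fin 3)) 1, ContDiff ℝ 1 (Λ y)) ∧
        H1ContinuousOn Λ (Metric.sphere (0 : EuclideanSpace ℝ (Fin 3)) 1) ∧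
        ∀ ε ∈ Set.Ioo (-δ) (-δ/2),
          (∀ u : ℂ → ℝ, MemM u → Cbar ≤ Ieps K h ε u) ∧
          (∃ c c' : ℝ, c < c' ∧
            (∀ y ∈ Metric.sphere (0 : EuclideanSpace ℝ (Fin 3)) 1, Ieps K h ε (Λ y) ≤ c) ∧
            (∀ u : ℂ → ℝ, MemM u → c' ≤ Ieps K h ε u)) ∧
          (∀ η : EuclideanSpace ℝ (Fin 3) → ℂ → ℝ,
            H1ContinuousOn η (Metric.closedBall (0 : EuclideanSpace ℝ (Fin 3)) 1) →
            (∀ y ∈ Metric.closedBall (0 : EuclideanSpace ℝ (Fin 3)) 1, ContDiff ℝ 1 (η y)) →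
            (∀ y ∈ Metric.sphere (0 : EuclideanSpace ℝ (Fin 3)) 1, η y = Λ y) →
            ∃ y ∈ Metric.closedBall (0 : EuclideanSpace ℝ (Fin 3)) 1, MemM (η y)) := by
  obtain ⟨δ₀, hδ₀, hδ₀_le, B, hB, hM⟩ := exists_forall_memM_le_Ieps hK hKneg hh
  refine ⟨δ₀, hδ₀, fun δ ⟨hδ, hδδ₀⟩ => ?_⟩
  obtain ⟨l, hl, m, hm, t₀, t₁, htop, hbot, henergy⟩ :=
    exists_bubbleSphere_energy_le hK hh hmin hδ (B + 1)
  refine ⟨-B, bubbleSphere l m t₀ t₁, fun y _ => contDiff_bubbleSphere hl hm y,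
    H1ContinuousOn_bubbleSphere hl hm _, fun ε ⟨hδε, hεδ⟩ => ?_⟩
  have hMε : ∀ u, MemM u → -B ≤ Ieps K h ε u := hM ε ⟨by linarith, by linarith⟩
  have hsphere : ∀ y ∈ Metric.sphere (0 : EuclideanSpace ℝ (Fin 3)) 1,
      Ieps K h ε (bubbleSphere l m t₀ t₁ y) ≤ -(B + 1) := fun y hy =>
    (isBubbleParam_bubbleCenter hl hm y).Ieps_bubble_le hδ.le (by linarith) hεδ.le (by linarith)
      (henergy y (mem_sphere_zero_iff_norm.1 hy))
  exact ⟨hMε, ⟨-(B + 1), -B, by linarith, hsphere, hMε⟩, fun η hη hsmooth hηΛ =>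
    exists_memM_of_eqOn_bubbleSphere hl hm htop hbot hη hsmooth hηΛ⟩

/-- Proposition: three-dimensional linking geometry of I_ε for ε ∈ (−δ, −δ/2). -/
theorem linking_geometry
    (K h : ℂ → ℝ)
    (hK : ContDiff ℝ 2 K)
    (hKneg : ∀ x ∈ closedUnitDisk, K x < 0)
    (hh : ContDiff ℝ 2 (fun θ => h (bpt θ)))
    (hmin : ∀ x ∈ unitCircle, ∀ y ∈ unitCircle, Real.sqrt (-K y) < h x) :
    ∃ δ₀ > (0:ℝ), ∀ δ ∈ Set.Ioo (0:ℝ) δ₀,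
      ∃ (Cbar : ℝ) (Λ : EuclideanSpace ℝ (Fin 3) → ℂ → ℝ),
        (∀ y ∈ Metric.sphere (0 : EuclideanSpace ℝ (Fin 3)) 1, ContDiff ℝ 1 (Λ y)) ∧
        H1ContinuousOn Λ (Metric.sphere (0 : EuclideanSpace ℝ (Fin 3)) 1) ∧
        ∀ ε ∈ Set.Ioo (-δ) (-δ/2),
          -- (i) I_ε ≥ C̄ on M
          (∀ u : ℂ → ℝ, MemM u → Cbar ≤ Ieps K h ε u) ∧
          -- (ii) sup_{𝕊²} I_ε ∘ Λ < inf_M I_ε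
          (∃ c c' : ℝ, c < c' ∧
            (∀ y ∈ Metric.sphere (0 : EuclideanSpace ℝ (Fin 3)) 1, Ieps K h ε (Λ y) ≤ c) ∧
            (∀ u : ℂ → ℝ, MemM u → c' ≤ Ieps K h ε u)) ∧
          -- (iii) every admissible extension of Λ to the closed ball meets M
          (∀ η : EuclideanSpace ℝ (Fin 3) → ℂ → ℝ,
            H1ContinuousOn η (Metric.closedBall (0 : EuclideanSpace ℝ (Fin 3)) 1) →
            (∀ y ∈ Metric.closedBall (0 : EuclideanSpace ℝ (Fin 3)) 1, ContDiff ℝ 1 (η y)) →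
            (∀ y ∈ Metric.sphere (0 : EuclideanSpace ℝ (Fin 3)) 1, η y = Λ y) →
            ∃ y ∈ Metric.closedBall (0 : EuclideanSpace ℝ (Fin 3)) 1, MemM (η y)) :=
  linking_geometry_general hK.continuous hKneg hh.continuous hmin

end
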